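/- arXiv:math/0702516 — 4 statements merged into one kernel-verified Lean document; each statement's English description precedes it below -/
import Mathlib

section
/- Let q = 2p with p ≥ 2, λ = 2cos(π/q), and 1/2 < α < 1/λ. Define H_{2n} = sin(nπ/(2p))/sin((n+1)π/(2p)) for n = 1, …, p−1, H_{2n−1} = (cos(nπ/(2p)) − cos((n−1)π/(2p)))/(cos((n+1)π/(2p)) − cos(nπ/(2p))) for n = 1, …, p, and let Ω_α = ⋃_{n=1}^{2p−1} J_n × [0, H_n] with J_{2n−1} = [ℓ_{n−1}, r_n), J_{2n} = [r_n, ℓ_n) for n = 1, …, p−1, and J_{2p−1} = [ℓ_{p−1}, r_0). Then the map 𝒯_α(x,y) = (T_α(x), 1/(d(x)λ + ε(x)y)) maps Ω_α to Ω_α and is bijective off of a set of two-dimensional Lebesgue measure zero; that is, there exist Lebesgue-null sets N, N′ ⊆ Ω_α such that 𝒯_α restricts to a bijection from Ω_α \ N onto Ω_α \ N′. -/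
open Set MeasureTheory

/-- The digit function `d(x) = ⌊|1/(xλ)| + 1 - α⌋` of the α-Rosen continued fraction. -/
noncomputable def dfun (lam α x : ℝ) : ℤ := ⌊|1 / (x * lam)| + 1 - α⌋

/-- The α-Rosen continued fraction map `T_α`. -/
noncomputable def Tmap (lam α x : ℝ) : ℝ :=
  if x = 0 then 0 else |1 / x| - lam * (dfun lam α x : ℝ)

/-- The two-dimensional natural extension map `𝒯_α(x, y) = (T_α(x), 1/(d(x)λ + ε(x)y))`. -/
noncomputable def Tnat (lam α : ℝ) (z : ℝ × ℝ) : ℝ × ℝ :=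
  (Tmap lam α z.1, 1 / ((dfun lam α z.1 : ℝ) * lam + Real.sign z.1 * z.2))

lemma int_eq_aux (lam a b : ℝ) (k m : ℤ) (ha : 0 < a) (ha' : a < lam) (hb : 0 < b) (hb' : b < lam)
    (h : k * lam + a = m * lam + b) : k = m := by
  have hl : 0 < lam := ha.trans ha'
  have h1 : ((k - m : ℤ) : ℝ) * lam < 1 * lam := by push_cast; linarith
  have h2 : ((-1 : ℤ) : ℝ) * lam < ((k - m : ℤ) : ℝ) * lam := by push_cast; linarith
  have h3 := lt_of_mul_lt_mul_right h1 hl.le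
  have h4 := lt_of_mul_lt_mul_right h2 hl.le
  have h5 : k - m < 1 := by exact_mod_cast h3
  have h6 : -1 < k - m := by exact_mod_cast h4
  omega

lemma dig_aux (lam α x : ℝ) (hl : 0 < lam) (k : ℤ)
    (h1 : (α - 1) * lam ≤ |1 / x| - lam * k) (h2 : |1 / x| - lam * k < α * lam) :
    dfun lam α x = k := by
  unfold dfun
  rw [Int.floor_eq_iff]
  have e : |1 / (x * lam)| * lam = |1 / x| := by
    rw [one_div, mul_inv, abs_mul, abs_of_pos (inv_pos.2 hl), one_div]
    field_simp
  constructor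
  · apply le_of_mul_le_mul_right _ hl
    nlinarith
  · apply lt_of_mul_lt_mul_right _ hl.le
    nlinarith

lemma Tmap_aux (lam α x : ℝ) (hx : x ≠ 0) (hl : 0 < lam) (k : ℤ)
    (h1 : (α - 1) * lam ≤ |1 / x| - lam * k) (h2 : |1 / x| - lam * k < α * lam) :
    Tmap lam α x = |1 / x| - lam * k := by
  rw [Tmap, if_neg hx, dig_aux lam α x hl k h1 h2]

lemma decomp_aux (lam α x : ℝ) (hl : 1 < lam) (hα : 1 / 2 < α) (hα2 : α * lam < 1)
    (hx : x ∈ Ico ((α - 1) * lam) (α * lam)) (hx0 : x ≠ 0) :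
    1 ≤ dfun lam α x ∧ Tmap lam α x ∈ Ico ((α - 1) * lam) (α * lam) ∧
      |1 / x| = Tmap lam α x + dfun lam α x * lam := by
  have hl0 : 0 < lam := by linarith
  have e : |1 / (x * lam)| * lam = |1 / x| := by
    rw [one_div, mul_inv, abs_mul, abs_of_pos (inv_pos.2 hl0), one_div]
    field_simp
  have hT : Tmap lam α x = |1 / x| - lam * dfun lam α x := by rw [Tmap, if_neg hx0]
  have f1 : (dfun lam α x : ℝ) ≤ |1 / (x * lam)| + 1 - α := Int.floor_le _
  have f2 : |1 / (x * lam)| + 1 - α < dfun lam α x + 1 := Int.lt_floor_add_one _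
  have g1 := mul_le_mul_of_nonneg_right f1 hl0.le
  have g2 := mul_lt_mul_of_pos_right f2 hl0
  have hI : Tmap lam α x ∈ Ico ((α - 1) * lam) (α * lam) := by
    constructor <;> rw [hT] <;> nlinarith
  refine ⟨?_, hI, by rw [hT]; ring⟩
  have hxa : |x| < 1 := by
    rw [abs_lt]; constructor
    · nlinarith [hx.1]
    · linarith [hx.2]
  have : 1 < |1 / x| := by
    rw [abs_div, abs_one]
    rw [lt_div_iff₀ (abs_pos.2 hx0)]; linarith
  have h3 : 0 < (dfun lam α x : ℝ) * lam := by
    have := hI.2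
    rw [hT] at this; linarith
  have h4 : (0:ℝ) < dfun lam α x := pos_of_mul_pos_left h3 hl0.le
  have : 0 < dfun lam α x := by exact_mod_cast h4
  omega

lemma null_fst (C : Set ℝ) (hC : C.Countable) : volume {z : ℝ × ℝ | z.1 ∈ C} = 0 := by
  have : {z : ℝ × ℝ | z.1 ∈ C} = C ×ˢ univ := by ext; simp
  rw [this, Measure.volume_eq_prod, Measure.prod_prod, hC.measure_zero]; simp

lemma null_snd (C : Set ℝ) (hC : C.Countable) : volume {z : ℝ × ℝ | z.2 ∈ C} = 0 := by
  have : {z : ℝ × ℝ | z.2 ∈ C} = univ ×ˢ C := by ext; simp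
  rw [this, Measure.volume_eq_prod, Measure.prod_prod, hC.measure_zero]; simp

lemma core_aux (lam α : ℝ) (hl : 1 < lam) (hα : 1 / 2 < α) (hα2 : α * lam < 1) (hα1 : α < 1)
    (hl2 : 2 ≤ lam ^ 2)
    (h : ℝ → ℝ) (b1 b2 e : ℝ) (he : 0 < e)
    (hb1 : b1 = 1 / (α * lam) - lam) (hb2 : b2 = 1 / ((1 - α) * lam) - lam)
    (hrange : (range h).Countable)
    (hpos : ∀ x ∈ Ico ((α - 1) * lam) (α * lam), 0 < h x ∧ h x < lam)
    (hi : ∀ x ∈ Ico ((α - 1) * lam) (α * lam), ∀ k : ℤ, 1 ≤ k → (k = 1 → b1 < x) →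
      x + k * lam ≠ e → h (1 / (x + k * lam)) + h (-1 / (x + (k + 1) * lam)) = lam)
    (hii : ∀ x ∈ Ico ((α - 1) * lam) (α * lam), b2 ≤ x → h x = 1 / (lam - h (-1 / (x + lam))))
    (hiii : ∀ x ∈ Ico ((α - 1) * lam) (α * lam), b1 ≤ x → x < b2 → h x = 1 / lam)
    (hiv : ∀ x ∈ Ico ((α - 1) * lam) (α * lam), x < b1 →
      h x = 1 / (2 * lam - h (-1 / (x + 2 * lam))))
    (Ω : Set (ℝ × ℝ))
    (hΩ : ∀ z, z ∈ Ω ↔ z.1 ∈ Ico ((α - 1) * lam) (α * lam) ∧ 0 ≤ z.2 ∧ z.2 ≤ h z.1) :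
    ∃ N N' : Set (ℝ × ℝ), N ⊆ Ω ∧ N' ⊆ Ω ∧ volume N = 0 ∧ volume N' = 0 ∧
      Set.BijOn (Tnat lam α) (Ω \ N) (Ω \ N') := by
  have hl0 : 0 < lam := by linarith
  have hα0 : 0 < α := by linarith
  have hαl : 0 < α * lam := by positivity
  have hαl' : 0 < (1 - α) * lam := mul_pos (by linarith) hl0
  have hIlow : ∀ x ∈ Ico ((α - 1) * lam) (α * lam), -1 < x ∧ x < 1 := fun x hx =>
    ⟨by nlinarith [hx.1], by linarith [hx.2]⟩
  have hb12 : b1 < b2 := by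
    rw [hb1, hb2]
    have : 1 / (α * lam) < 1 / ((1 - α) * lam) := one_div_lt_one_div_of_lt hαl' (by nlinarith)
    linarith
  have hD : ∀ x ∈ Ico ((α - 1) * lam) (α * lam), ∀ k : ℤ, 1 ≤ k →
      0 < x + k * lam ∧ (2 ≤ k → 1 / ((1 - α) * lam) ≤ x + k * lam) := by
    intro x hx k hk
    have hk' : (1:ℝ) ≤ k := by exact_mod_cast hk
    refine ⟨by nlinarith [hx.1], fun hk2 => ?_⟩
    have hk2' : (2:ℝ) ≤ k := by exact_mod_cast hk2
    have : 1 / ((1 - α) * lam) ≤ (1 + α) * lam := by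
      rw [div_le_iff₀ hαl']
      nlinarith
    nlinarith [hx.1]
  have negI : ∀ x ∈ Ico ((α - 1) * lam) (α * lam), ∀ k : ℤ, 1 ≤ k → (k = 1 → b2 ≤ x) →
      -1 / (x + k * lam) ∈ Ico ((α - 1) * lam) (α * lam) := by
    intro x hx k hk hv
    obtain ⟨h1, h2⟩ := hD x hx k hk
    have h3 : 1 / ((1 - α) * lam) ≤ x + k * lam := by
      rcases hk.lt_or_eq with h | h
      · exact h2 (by omega)
      · have := hv h.symm
        rw [← h]; push_cast; linarith
    constructor
    · rw [neg_div, ← neg_sub, neg_mul, neg_le_neg_iff]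
      exact (one_div_le hαl' h1).1 h3
    · have : 0 < 1 / (x + k * lam) := by positivity
      rw [neg_div]; linarith
  have posI : ∀ x ∈ Ico ((α - 1) * lam) (α * lam), ∀ k : ℤ, 1 ≤ k → (k = 1 → b1 < x) →
      1 / (x + k * lam) ∈ Ico ((α - 1) * lam) (α * lam) := by
    intro x hx k hk hv
    obtain ⟨h1, h2⟩ := hD x hx k hk
    have h3 : 1 / (α * lam) < x + k * lam := by
      rcases hk.lt_or_eq with h | h
      · exact lt_of_lt_of_le (one_div_lt_one_div_of_lt hαl' (by nlinarith)) (h2 (by omega))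
      · have := hv h.symm
        rw [← h]; push_cast; linarith
    constructor
    · have : 0 < 1 / (x + k * lam) := by positivity
      nlinarith
    · exact (one_div_lt hαl h1).1 h3
  have fwd : ∀ x ∈ Ico ((α - 1) * lam) (α * lam), x ≠ 0 →
      ∃ k : ℤ, 1 ≤ k ∧ dfun lam α x = k ∧ Tmap lam α x ∈ Ico ((α - 1) * lam) (α * lam) ∧
      ((Real.sign x = 1 ∧ x = 1 / (Tmap lam α x + k * lam) ∧ (k = 1 → b1 < Tmap lam α x)) ∨
       (Real.sign x = -1 ∧ x = -1 / (Tmap lam α x + k * lam) ∧ (k = 1 → b2 ≤ Tmap lam α x))) := by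
    intro x hx hx0
    obtain ⟨d1, d2, d3⟩ := decomp_aux lam α x hl hα hα2 hx hx0
    refine ⟨_, d1, rfl, d2, ?_⟩
    rcases lt_or_gt_of_ne hx0 with hneg | hpos
    · right
      have e1 : |1 / x| = -(1 / x) := abs_of_neg (one_div_neg.2 hneg)
      refine ⟨Real.sign_of_neg hneg, ?_, ?_⟩
      · rw [← d3, e1]; field_simp
      · intro hk
        rw [hk] at d3
        have : 1 / ((1 - α) * lam) ≤ 1 / (-x) := one_div_le_one_div_of_le (by linarith) (by linarith [hx.1])
        rw [one_div_neg_eq_neg_one_div, ← e1, d3] at this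
        push_cast at this; linarith
    · left
      have e1 : |1 / x| = (1 / x) := abs_of_pos (one_div_pos.2 hpos)
      refine ⟨Real.sign_of_pos hpos, ?_, ?_⟩
      · rw [← d3, e1]; field_simp
      · intro hk
        rw [hk] at d3
        have : 1 / (α * lam) < 1 / x := one_div_lt_one_div_of_lt hpos hx.2
        rw [← e1, d3] at this
        push_cast at this; linarith
  have bwd : ∀ x ∈ Ico ((α - 1) * lam) (α * lam), ∀ k : ℤ, 1 ≤ k → ∀ y u : ℝ,
      (u = k * lam + y → Tnat lam α (1 / (x + k * lam), y) = (x, 1 / u)) ∧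
      (u = k * lam - y → Tnat lam α (-1 / (x + k * lam), y) = (x, 1 / u)) := by
    intro x hx k hk y u
    have h1 := (hD x hx k hk).1
    have hp : 0 < 1 / (x + k * lam) := one_div_pos.2 h1
    have hn : -1 / (x + k * lam) < 0 := by rw [neg_div]; linarith
    have ep : |1 / (1 / (x + k * lam))| - lam * k = x := by
      rw [one_div_one_div, abs_of_pos h1]; ring
    have en : |1 / (-1 / (x + k * lam))| - lam * k = x := by
      rw [neg_div, one_div_neg_eq_neg_one_div, one_div_one_div, abs_neg, abs_of_pos h1]; ring
    constructor
    · rintro rfl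
      simp only [Tnat]
      rw [Tmap_aux lam α _ hp.ne' hl0 k (by rw [ep]; exact hx.1) (by rw [ep]; exact hx.2),
        dig_aux lam α _ hl0 k (by rw [ep]; exact hx.1) (by rw [ep]; exact hx.2), ep,
        Real.sign_of_pos hp, one_mul]
    · rintro rfl
      simp only [Tnat]
      rw [Tmap_aux lam α _ hn.ne hl0 k (by rw [en]; exact hx.1) (by rw [en]; exact hx.2),
        dig_aux lam α _ hl0 k (by rw [en]; exact hx.1) (by rw [en]; exact hx.2), en,
        Real.sign_of_neg hn, neg_one_mul, ← sub_eq_add_neg]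
  let N : Set (ℝ × ℝ) := {z | z ∈ Ω ∧ (z.1 = 0 ∨ z.1 = 1 / e ∨ z.2 = 0 ∨ z.2 = h z.1)}
  have hgood : ∀ z, z ∈ Ω \ N ↔ z.1 ∈ Ico ((α - 1) * lam) (α * lam) ∧ z.1 ≠ 0 ∧ z.1 ≠ 1 / e ∧
      0 < z.2 ∧ z.2 < h z.1 := by
    intro z
    simp only [N, mem_sdiff, mem_ofPred_eq, hΩ]
    constructor
    · rintro ⟨⟨a, b, c⟩, d⟩
      rw [not_and] at d
      have d' := d ⟨a, b, c⟩
      push Not at d'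
      exact ⟨a, d'.1, d'.2.1, lt_of_le_of_ne b (Ne.symm d'.2.2.1), lt_of_le_of_ne c d'.2.2.2⟩
    · rintro ⟨a, b, c, d, f⟩
      refine ⟨⟨a, d.le, f.le⟩, ?_⟩
      rintro ⟨-, g | g | g | g⟩
      · exact b g
      · exact c g
      · exact d.ne' g
      · exact f.ne g
  refine ⟨N, Ω \ (Tnat lam α '' (Ω \ N)), fun z hz => hz.1, sdiff_subset, ?_, ?_, ?_⟩
  · refine measure_mono_null (t := {z : ℝ × ℝ | z.1 ∈ ({0, 1 / e} : Set ℝ)} ∪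
      {z : ℝ × ℝ | z.2 ∈ ({0} ∪ range h : Set ℝ)}) ?_ ?_
    · rintro z ⟨-, g | g | g | g⟩ <;> simp [g]
    · refine measure_union_null (null_fst _ (Set.to_countable _)) (null_snd _ ?_)
      exact (Set.to_countable _).union hrange
  · refine measure_mono_null (t := {z : ℝ × ℝ | z.1 ∈ ({b1} ∪ range (fun k : ℤ => e - k * lam) : Set ℝ)} ∪
      {z : ℝ × ℝ | z.2 ∈ ({0} ∪ range h ∪ range (fun k : ℤ => 1 / (k * lam)) ∪
        image2 (fun (k : ℤ) (v : ℝ) => 1 / (k * lam + v)) univ (range h) : Set ℝ)}) ?_ ?_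
    swap
    · refine measure_union_null (null_fst _ ?_) (null_snd _ ?_)
      · exact (Set.to_countable _).union (countable_range _)
      · exact (((Set.to_countable _).union hrange).union (countable_range _)).union
          ((Set.to_countable _).image2 hrange _)
    rintro ⟨x, y⟩ ⟨hz, hz'⟩
    by_contra hbad
    apply hz'
    simp only [mem_union, mem_ofPred_eq, mem_singleton_iff, mem_range, mem_image2, mem_univ, true_and,
      not_or, not_exists, not_and] at hbad
    obtain ⟨⟨hx1, hx2⟩, ⟨⟨hy0, hyh⟩, hyk⟩, hykv⟩ := hbad
    obtain ⟨hx, hy, hyle⟩ := (hΩ _).1 hz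
    simp only at hx hy hyle
    have hy' : 0 < y := lt_of_le_of_ne hy (Ne.symm hy0)
    have hyle' : y < h x := lt_of_le_of_ne hyle (fun t => hyh x t.symm)
    have hhx := hpos x hx
    set u := 1 / y with hu
    have hyu : y = 1 / u := by rw [hu, one_div_one_div]
    have hu0 : 0 < u := by positivity
    have huh : 1 / h x < u := one_div_lt_one_div_of_lt hy' hyle'
    have huk : ∀ k : ℤ, u ≠ k * lam := fun k t => hyk k (by rw [← t, hyu])
    have hukv : ∀ (k : ℤ) t, u ≠ k * lam + h t := fun k t t' => by
      have := hykv k (h t)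
      simp only [exists_apply_eq_apply, forall_const] at this
      apply this
      first | exact (⟨t, rfl⟩) | (rw [← t', hyu])
    obtain ⟨j, hj1, hj2⟩ : ∃ j : ℤ, j * lam < u ∧ u < (j + 1) * lam := by
      refine ⟨⌊u / lam⌋, lt_of_le_of_ne ?_ (Ne.symm (huk _)), ?_⟩
      · rw [← le_div_iff₀ hl0]; exact Int.floor_le _
      · rw [← div_lt_iff₀ hl0]; exact Int.lt_floor_add_one _
    have hj0 : 0 ≤ j := by
      have : (0:ℝ) < (j + 1) := pos_of_mul_pos_left (hu0.trans hj2) hl0.le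
      have : 0 < j + 1 := by exact_mod_cast this
      omega
    have hxe : ∀ k : ℤ, x + k * lam ≠ e := fun k t => hx2 k (by rw [← t]; ring)
    have usepos : ∀ k : ℤ, 1 ≤ k → (k = 1 → b1 < x) → ∀ t, u = k * lam + t → 0 < t →
        t < h (1 / (x + k * lam)) → (x, y) ∈ Tnat lam α '' (Ω \ N) := by
      intro k hk hv t hut ht ht'
      refine ⟨(1 / (x + k * lam), t), (hgood _).2 ⟨posI x hx k hk hv, ?_, ?_, ht, ht'⟩, ?_⟩
      · exact (one_div_pos.2 (hD x hx k hk).1).ne'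
      · intro t
        simp only [one_div, inv_inj] at t
        exact hxe k t
      · rw [(bwd x hx k hk t u).1 hut, ← hyu]
    have useneg : ∀ k : ℤ, 1 ≤ k → (k = 1 → b2 ≤ x) → ∀ t, u = k * lam - t → 0 < t →
        t < h (-1 / (x + k * lam)) → (x, y) ∈ Tnat lam α '' (Ω \ N) := by
      intro k hk hv t hut ht ht'
      refine ⟨(-1 / (x + k * lam), t), (hgood _).2 ⟨negI x hx k hk hv, ?_, ?_, ht, ht'⟩, ?_⟩
      · have := one_div_pos.2 (hD x hx k hk).1
        simp only [neg_div]
        linarith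
      · intro t
        have t' : x + k * lam = - e := by
          simp only [neg_div, one_div] at t
          rw [← inv_neg, inv_inj] at t
          linarith
        have := (hD x hx k hk).1
        linarith
      · rw [(bwd x hx k hk t u).2 hut, ← hyu]
    have main : 1 ≤ j → (j = 1 → b1 < x) → (x, y) ∈ Tnat lam α '' (Ω \ N) := by
      intro hj hv
      have hsum := hi x hx j hj hv (hxe j)
      rcases lt_or_gt_of_ne (hukv j (1 / (x + j * lam))) with c | c
      · exact usepos j hj hv (u - j * lam) (by ring) (by linarith) (by linarith)
      · refine useneg (j + 1) (by omega) (by omega) ((j + 1) * lam - u) (by push_cast; ring)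
          (by linarith) ?_
        push_cast
        linarith
    rcases le_or_gt b2 x with c | c
    · rcases hj0.lt_or_eq with hj | hj
      · exact main hj (fun _ => by linarith)
      · rw [hii x hx c, one_div_one_div] at huh
        rw [← hj] at hj1 hj2
        push_cast at hj1 hj2
        refine useneg 1 le_rfl (fun _ => c) (lam - u) (by push_cast; ring) (by linarith) ?_
        push_cast
        rw [one_mul]; linarith
    · rcases lt_or_ge x b1 with c1 | c1
      · have hpm := hpos _ (negI x hx 2 (by norm_num) (fun h => by norm_num at h))
        push_cast at hpm
        rw [hiv x hx c1, one_div_one_div] at huh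
        have hj : (1:ℝ) < j + 1 := by
          apply lt_of_mul_lt_mul_right _ hl0.le
          linarith
        have hj : 1 < j + 1 := by exact_mod_cast hj
        rcases (show 1 ≤ j by omega).lt_or_eq with hj | hj
        · exact main (by omega) (fun _ => by omega)
        · rw [← hj] at hj1 hj2
          push_cast at hj1 hj2
          refine useneg 2 (by norm_num) (fun h => by norm_num at h) (2 * lam - u) (by push_cast; ring)
            (by linarith) ?_
          push_cast
          linarith
      · rw [hiii x hx c1 c, one_div_one_div] at huh
        have hj : (1:ℝ) < j + 1 := by
          apply lt_of_mul_lt_mul_right _ hl0.le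
          linarith
        have hj : 1 < j + 1 := by exact_mod_cast hj
        exact main (by omega) (fun _ => lt_of_le_of_ne c1 (Ne.symm hx1))
  · have himg : Ω \ (Ω \ (Tnat lam α '' (Ω \ N))) = Tnat lam α '' (Ω \ N) := by
      rw [sdiff_sdiff_right_self, inter_eq_right]
      rintro _ ⟨⟨x, y⟩, hz, rfl⟩
      obtain ⟨hx, hx0, hxe, hy0, hyh⟩ := (hgood _).1 hz
      simp only at hx hx0 hxe hy0 hyh
      obtain ⟨k, hk, hd, hT, hs⟩ := fwd x hx hx0
      have hyl := hyh.trans (hpos x hx).2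
      have hk' : (1:ℝ) ≤ k := by exact_mod_cast hk
      rw [hΩ]
      simp only [Tnat, hd]
      set x' := Tmap lam α x with hx'
      have hh := hpos x' hT
      have key : 0 < (k * lam + Real.sign x * y) → 1 / h x' ≤ k * lam + Real.sign x * y →
          x' ∈ Ico ((α - 1) * lam) (α * lam) ∧ 0 ≤ 1 / (k * lam + Real.sign x * y) ∧
            1 / (k * lam + Real.sign x * y) ≤ h x' := by
        intro h1 h2
        exact ⟨hT, by positivity, (one_div_le h1 hh.1).2 h2⟩
      apply key
      · rcases hs with ⟨s, -⟩ | ⟨s, -⟩ <;> rw [s] <;> nlinarith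
      · rcases le_or_gt b2 x' with c | c
        · have hpm := hpos _ (negI x' hT 1 le_rfl (fun _ => c))
          rw [hii x' hT c, one_div_one_div]
          push_cast at hpm; rw [one_mul] at hpm
          rcases hs with ⟨s, sx, sv⟩ | ⟨s, sx, sv⟩ <;> rw [s]
          · nlinarith
          · rcases hk.lt_or_eq with hk2 | hk2
            · have hk2' : (2:ℝ) ≤ k := by exact_mod_cast hk2
              nlinarith
            · rw [← hk2] at sx ⊢
              push_cast at sx ⊢; rw [one_mul] at sx
              rw [← sx]; linarith
        · rcases le_or_gt b1 x' with c1 | c1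
          · rw [hiii x' hT c1 c, one_div_one_div]
            rcases hs with ⟨s, sx, sv⟩ | ⟨s, sx, sv⟩ <;> rw [s]
            · nlinarith
            · rcases hk.lt_or_eq with hk2 | hk2
              · have hk2' : (2:ℝ) ≤ k := by exact_mod_cast hk2
                nlinarith
              · linarith [sv hk2.symm]
          · have hpm := hpos _ (negI x' hT 2 (by norm_num) (fun h => by norm_num at h))
            rw [hiv x' hT c1, one_div_one_div]
            push_cast at hpm
            have hk2 : 2 ≤ k := by
              rcases hk.lt_or_eq with hk2 | hk2
              · exact hk2
              · rcases hs with ⟨s, sx, sv⟩ | ⟨s, sx, sv⟩ <;> linarith [sv hk2.symm]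
            have hk2' : (2:ℝ) ≤ k := by exact_mod_cast hk2
            rcases hs with ⟨s, sx, sv⟩ | ⟨s, sx, sv⟩ <;> rw [s]
            · nlinarith
            · rcases hk2.lt_or_eq with hk3 | hk3
              · have hk3' : (3:ℝ) ≤ k := by exact_mod_cast hk3
                nlinarith
              · rw [← hk3] at sx ⊢
                push_cast at sx ⊢
                rw [← sx]; linarith
    rw [himg]
    refine InjOn.bijOn_image ?_
    have opp : ∀ x1 y1 x2 y2 x' : ℝ, ∀ k m : ℤ, x' ∈ Ico ((α - 1) * lam) (α * lam) → 1 ≤ k →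
        x1 = 1 / (x' + k * lam) → (k = 1 → b1 < x') → x2 = -1 / (x' + m * lam) →
        x1 ≠ 1 / e → 0 < y1 → y1 < h x1 → y1 < lam → 0 < y2 → y2 < h x2 → y2 < lam →
        k * lam + y1 = m * lam - y2 → False := by
      intro x1 y1 x2 y2 x' k m hx' hk e1 v e2 ne p1 q1 r1 p2 q2 r2 heq
      have : k = m - 1 := int_eq_aux lam y1 (lam - y2) k (m - 1) p1 r1 (by linarith) (by linarith)
        (by push_cast; linarith)
      obtain rfl : m = k + 1 := by omega
      have := hi x' hx' k hk v (fun t => ne (by rw [e1, t]))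
      push_cast at e2 heq
      rw [← e1, ← e2] at this
      linarith
    rintro ⟨x1, y1⟩ hz ⟨x2, y2⟩ hw heq
    obtain ⟨hx1, hx10, hx1e, hy10, hy1h⟩ := (hgood _).1 hz
    obtain ⟨hx2, hx20, hx2e, hy20, hy2h⟩ := (hgood _).1 hw
    simp only at hx1 hx10 hx1e hy10 hy1h hx2 hx20 hx2e hy20 hy2h
    obtain ⟨k, hk, hd, hT, hs⟩ := fwd x1 hx1 hx10
    obtain ⟨m, hm, hd2, hT2, hs2⟩ := fwd x2 hx2 hx20
    have hy1l := hy1h.trans (hpos x1 hx1).2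
    have hy2l := hy2h.trans (hpos x2 hx2).2
    simp only [Tnat, hd, hd2, Prod.mk.injEq, one_div, inv_inj] at heq
    obtain ⟨hTT, hu⟩ := heq
    rw [← hTT] at hs2 hT2
    rcases hs with ⟨s, sx, sv⟩ | ⟨s, sx, sv⟩ <;> rcases hs2 with ⟨s2, sx2, sv2⟩ | ⟨s2, sx2, sv2⟩ <;>
      rw [s, s2] at hu
    · have : k = m := int_eq_aux lam y1 y2 k m hy10 hy1l hy20 hy2l (by linarith)
      subst this
      rw [sx2, ← sx]; congr 1; linarith
    · exact (opp x1 y1 x2 y2 _ k m hT hk sx sv sx2 hx1e hy10 hy1h hy1l hy20 hy2h hy2l (by linarith)).elim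
    · exact (opp x2 y2 x1 y1 _ m k hT hm sx2 sv2 sx hx2e hy20 hy2h hy2l hy10 hy1h hy1l (by linarith)).elim
    · have : k - 1 = m - 1 := int_eq_aux lam (lam - y1) (lam - y2) (k - 1) (m - 1) (by linarith)
        (by linarith) (by linarith) (by linarith) (by push_cast; linarith)
      obtain rfl : k = m := by omega
      rw [sx2, ← sx]; congr 1; linarith

lemma exists_piece (b : ℕ → ℝ) (x : ℝ) (K : ℕ) (h0 : b 0 ≤ x) (h1 : x < b K) :
    ∃ i < K, b i ≤ x ∧ x < b (i + 1) := by
  induction K with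
  | zero => exact absurd h1 (not_lt.2 h0)
  | succ K ih =>
    rcases lt_or_ge x (b K) with c | c
    · obtain ⟨i, hi, h⟩ := ih c
      exact ⟨i, by omega, h⟩
    · exact ⟨K, by omega, c, h1⟩

lemma neg_inv_le (c D : ℝ) (hc : c < 0) (hD : 0 < D) : c ≤ -1 / D ↔ -1 / c ≤ D := by
  rw [le_div_iff₀ hD, div_le_iff_of_neg hc, mul_comm]

lemma neg_inv_lt (c D : ℝ) (hc : c < 0) (hD : 0 < D) : -1 / D < c ↔ D < -1 / c := by
  rw [div_lt_iff₀ hD, lt_div_iff_of_neg hc, mul_comm]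

lemma mid_aux (lam α : ℝ) (hl : 1 < lam) (hα : 1 / 2 < α) (hα2 : α * lam < 1) (hα1 : α < 1)
    (hl2 : 2 ≤ lam ^ 2) (M : ℕ) (b G : ℕ → ℝ)
    (hmono : ∀ i < M + 3, b i < b (i + 1))
    (hb0 : b 0 = (α - 1) * lam) (hb1 : b 1 = 1 / (α * lam) - lam) (hbK : b (M + 3) = α * lam)
    (hrec : ∀ i ≤ M, b (i + 2) = -1 / b i - lam)
    (hneg : b (M + 1) < 0) (hposb : 0 < b (M + 2))
    (hkey : -1 / b (M + 1) = 1 / b (M + 2) + lam)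
    (hG : ∀ i ≤ M + 2, 0 < G i ∧ G i < lam)
    (hGrec : ∀ i ≤ M, G (i + 2) = 1 / (lam - G i))
    (hG0 : G 0 = 1 / (2 * lam - G M)) (hG1 : G 1 = 1 / lam) (hGM : G (M + 1) = lam / 2)
    (hGs : G (M + 2) + G M = lam)
    (Ω : Set (ℝ × ℝ))
    (hΩ : ∀ z, z ∈ Ω ↔ ∃ i < M + 3, (b i ≤ z.1 ∧ z.1 < b (i + 1)) ∧ 0 ≤ z.2 ∧ z.2 ≤ G i) :
    ∃ N N' : Set (ℝ × ℝ), N ⊆ Ω ∧ N' ⊆ Ω ∧ volume N = 0 ∧ volume N' = 0 ∧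
      Set.BijOn (Tnat lam α) (Ω \ N) (Ω \ N') := by
  classical
  have hl0 : 0 < lam := by linarith
  have hαl : 0 < α * lam := by nlinarith
  have hmle : ∀ j ≤ M + 3, ∀ i ≤ j, b i ≤ b j := by
    intro j
    induction j with
    | zero => intro _ i hi; rw [Nat.le_zero.1 hi]
    | succ j ih =>
      intro hj i hi
      rcases hi.lt_or_eq with c | c
      · exact (ih (by omega) i (by omega)).trans (hmono j (by omega)).le
      · rw [c]
  have hex : ∀ x ∈ Ico ((α - 1) * lam) (α * lam), ∃ i < M + 3, b i ≤ x ∧ x < b (i + 1) :=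
    fun x hx => exists_piece b x (M + 3) (by rw [hb0]; exact hx.1) (by rw [hbK]; exact hx.2)
  have huniq : ∀ x, ∀ i < M + 3, ∀ j < M + 3, b i ≤ x → x < b (i + 1) → b j ≤ x → x < b (j + 1) →
      i = j := by
    intro x i hi j hj h1 h2 h3 h4
    rcases lt_trichotomy i j with c | c | c
    · have := hmle j hj.le (i + 1) c; linarith
    · exact c
    · have := hmle i hi.le (j + 1) c; linarith
  let h : ℝ → ℝ := fun x => if hx : ∃ i < M + 3, b i ≤ x ∧ x < b (i + 1) then G hx.choose else 0
  have hh : ∀ x, ∀ i < M + 3, b i ≤ x → x < b (i + 1) → h x = G i := by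
    intro x i hi h1 h2
    have hx : ∃ i < M + 3, b i ≤ x ∧ x < b (i + 1) := ⟨i, hi, h1, h2⟩
    simp only [h, dif_pos hx]
    obtain ⟨s1, s2, s3⟩ := hx.choose_spec
    rw [huniq x _ s1 i hi s2 s3 h1 h2]
  have hIb : ∀ x, ∀ i < M + 3, b i ≤ x → x < b (i + 1) → x ∈ Ico ((α - 1) * lam) (α * lam) := by
    intro x i hi h1 h2
    have a1 := hmle i hi.le 0 (by omega)
    have a2 := hmle (M + 3) le_rfl (i + 1) hi
    rw [hb0] at a1; rw [hbK] at a2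
    exact ⟨a1.trans h1, h2.trans_le a2⟩
  have hb2 : b 2 = 1 / ((1 - α) * lam) - lam := by
    rw [hrec 0 (by omega), hb0]
    have : (α - 1) * lam = -((1 - α) * lam) := by ring
    rw [this, neg_div_neg_eq]
  have hbneg : ∀ i ≤ M + 1, b i < 0 := fun i hi => (hmle (M + 1) (by omega) i hi).trans_lt hneg
  have hlast : b (M + 2) < α * lam := by rw [← hbK]; exact hmono _ (by omega)
  have he1 : 1 / (α * lam) < 1 / b (M + 2) := one_div_lt_one_div_of_lt hposb hlast
  have he2 : 1 < 1 / (α * lam) := by rw [lt_div_iff₀ hαl]; linarith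
  refine core_aux lam α hl hα hα2 hα1 hl2 h (b 1) (b 2) (1 / b (M + 2)) (by positivity) hb1 hb2
    ?_ ?_ ?_ ?_ ?_ ?_ Ω ?_
  · refine Set.Countable.mono ?_ ((countable_range G).union (countable_singleton 0))
    rintro _ ⟨x, rfl⟩
    by_cases hx : ∃ i < M + 3, b i ≤ x ∧ x < b (i + 1)
    · left; simp only [h, dif_pos hx]; exact mem_range_self _
    · right; simp only [h, dif_neg hx]; rfl
  · intro x hx
    obtain ⟨i, hi, h1, h2⟩ := hex x hx
    rw [hh x i hi h1 h2]; exact hG i (by omega)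
  · intro x hx k hk hv hne
    have hk' : (1:ℝ) ≤ k := by exact_mod_cast hk
    have hX : α * lam ≤ x + k * lam := by nlinarith [hx.1]
    have hX' : 1 / (α * lam) < x + k * lam := by
      rcases hk.lt_or_eq with c | c
      · have hk2 : (2:ℝ) ≤ k := by exact_mod_cast c
        have : (1 + α) * lam ≤ x + k * lam := by nlinarith [hx.1]
        refine lt_of_lt_of_le ?_ this
        rw [div_lt_iff₀ hαl]
        nlinarith
      · have := hv c.symm
        rw [← c]; push_cast; linarith
    have e1 : x + (k + 1) * lam = x + k * lam + lam := by ring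
    rw [e1]
    set X := x + k * lam with hXd
    have hX0 : 0 < X := by linarith
    have hXl : 0 < X + lam := by linarith
    have hneg' : -1 / (X + lam) < 0 := by
      rw [neg_div]; have := one_div_pos.2 hXl; linarith
    have hpos' := one_div_pos.2 hX0
    rcases lt_or_gt_of_ne hne with c | c
    · rw [hh (1 / X) (M + 2) (by omega) ((le_one_div hposb hX0).2 c.le)
        (by rw [hbK]; exact (one_div_lt hX0 hαl).2 hX'), hh (-1 / (X + lam)) M (by omega) ?_ ?_]
      · exact hGs
      · rw [neg_inv_le _ _ (hbneg M (by omega)) hXl]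
        have := hrec M le_rfl
        linarith
      · rw [neg_inv_lt _ _ hneg hXl, hkey]; linarith
    · rw [hh (1 / X) (M + 1) (by omega) (by linarith) ((one_div_lt hX0 hposb).2 c),
        hh (-1 / (X + lam)) (M + 1) (by omega) ?_ (hneg'.trans hposb)]
      · rw [hGM]; ring
      · rw [neg_inv_le _ _ hneg hXl, hkey]; linarith
  · intro x hx hbx
    obtain ⟨i, hi, h1, h2⟩ := hex x hx
    have hi2 : 2 ≤ i := by
      by_contra hc
      have := hmle 2 (by omega) (i + 1) (by omega)
      linarith
    obtain ⟨j, rfl⟩ := Nat.exists_eq_add_of_le' hi2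
    have hxl : 0 < x + lam := by nlinarith [hx.1]
    rw [hh x (j + 2) hi h1 h2, hh (-1 / (x + lam)) j (by omega) ?_ ?_, hGrec j (by omega)]
    · rw [neg_inv_le _ _ (hbneg j (by omega)) hxl]
      have := hrec j (by omega)
      linarith
    · rw [neg_inv_lt _ _ (hbneg (j + 1) (by omega)) hxl]
      rcases (show j ≤ M by omega).lt_or_eq with c | c
      · have := hrec (j + 1) (by omega)
        rw [show j + 2 + 1 = j + 1 + 2 by ring] at h2
        linarith
      · rw [c, hkey]
        have := hx.2
        linarith
  · intro x hx h1 h2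
    rw [hh x 1 (by omega) h1 h2, hG1]
  · intro x hx hx1
    have hxl : 0 < x + 2 * lam := by nlinarith [hx.1]
    rw [hh x 0 (by omega) (by rw [hb0]; exact hx.1) hx1,
      hh (-1 / (x + 2 * lam)) M (by omega) ?_ ?_, hG0]
    · rw [neg_inv_le _ _ (hbneg M (by omega)) hxl]
      have := hrec M le_rfl
      nlinarith [hx.1]
    · rw [neg_inv_lt _ _ hneg hxl, hkey]
      linarith
  · intro z
    rw [hΩ]
    constructor
    · rintro ⟨i, hi, ⟨h1, h2⟩, h3⟩
      rw [hh z.1 i hi h1 h2]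
      exact ⟨hIb _ i hi h1 h2, h3⟩
    · rintro ⟨hz, h3⟩
      obtain ⟨i, hi, h1, h2⟩ := hex _ hz
      rw [hh z.1 i hi h1 h2] at h3
      exact ⟨i, hi, ⟨h1, h2⟩, h3⟩

lemma trig_b (P : ℕ) (lam α θ : ℝ) (hθ : (P + 2) * θ = Real.pi / 2)
    (hlam : lam = 2 * Real.cos θ) (hα1 : 1 / 2 < α) (hα2 : α * lam < 1) :
    ∃ b : ℕ → ℝ, (∀ i < 2 * P + 3, b i < b (i + 1)) ∧ b 0 = (α - 1) * lam ∧
      b 1 = 1 / (α * lam) - lam ∧ b (2 * P + 3) = α * lam ∧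
      (∀ i ≤ 2 * P, b (i + 2) = -1 / b i - lam) ∧ b (2 * P + 1) < 0 ∧ 0 < b (2 * P + 2) ∧
      -1 / b (2 * P + 1) = 1 / b (2 * P + 2) + lam := by
  have hpi := Real.pi_pos
  have hP : (0:ℝ) ≤ P := Nat.cast_nonneg P
  have hθ0 : 0 < θ := by
    by_contra hc
    have : (P + 2) * θ ≤ 0 := mul_nonpos_of_nonneg_of_nonpos (by linarith) (by linarith)
    linarith
  have hθ4 : 2 * θ ≤ Real.pi / 2 := by nlinarith
  have hsθ : 0 < Real.sin θ := Real.sin_pos_of_pos_of_lt_pi hθ0 (by linarith)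
  have hcθ : 0 < Real.cos θ := Real.cos_pos_of_mem_Ioo ⟨by linarith, by linarith⟩
  obtain ⟨φ, hφ1, hφ2, hφ3⟩ : ∃ φ : ℝ, 0 < φ ∧ φ < Real.pi / 2 ∧
      Real.sin φ * Real.sin θ = (2 * α - 1) * Real.cos θ * Real.cos φ := by
    refine ⟨Real.arctan ((2 * α - 1) * Real.cos θ / Real.sin θ), ?_, Real.arctan_lt_pi_div_two _, ?_⟩
    · rw [Real.arctan_pos]
      have : 0 < 2 * α - 1 := by linarith
      positivity
    · have h := Real.tan_arctan ((2 * α - 1) * Real.cos θ / Real.sin θ)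
      have hc := Real.cos_arctan_pos ((2 * α - 1) * Real.cos θ / Real.sin θ)
      rw [Real.tan_eq_sin_div_cos, div_eq_div_iff hc.ne' hsθ.ne'] at h
      exact h
  have hcφ : 0 < Real.cos φ := Real.cos_pos_of_mem_Ioo ⟨by linarith, by linarith⟩
  have hsφ : 0 < Real.sin φ := Real.sin_pos_of_pos_of_lt_pi hφ1 (by linarith)
  have hr0 : α * lam = Real.cos (θ - φ) / Real.cos φ := by
    rw [eq_div_iff hcφ.ne', Real.cos_sub, hlam]; linarith
  have hl0 : (α - 1) * lam = -Real.cos (φ + θ) / Real.cos φ := by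
    rw [eq_div_iff hcφ.ne', Real.cos_add, hlam]; linarith
  have hφθ : 2 * φ < θ := by
    by_contra hc
    have h1 : |θ - φ| ≤ φ := abs_le.2 ⟨by linarith, by linarith⟩
    have h2 := Real.cos_le_cos_of_nonneg_of_le_pi (abs_nonneg _) (by linarith : φ ≤ Real.pi) h1
    rw [Real.cos_abs] at h2
    rw [hr0, div_lt_one hcφ] at hα2
    linarith
  let g : ℝ → ℝ := fun t => -Real.cos (t + θ) / Real.cos t
  have hg1 : ∀ t, Real.cos t ≠ 0 → Real.cos (t + θ) ≠ 0 → g (t + θ) = -1 / g t - lam := by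
    intro t h1 h2
    simp only [g]
    rw [hlam]
    field_simp
    rw [Real.cos_add (t + θ), Real.cos_add t, Real.sin_add t]
    have := Real.sin_sq_add_cos_sq θ
    linear_combination (Real.cos t) * this
  have hg2 : ∀ s t, -(Real.pi / 2) < s → s < t → t < Real.pi / 2 → g s < g t := by
    intro s t h1 h2 h3
    have c1 : 0 < Real.cos s := Real.cos_pos_of_mem_Ioo ⟨by linarith, by linarith⟩
    have c2 : 0 < Real.cos t := Real.cos_pos_of_mem_Ioo ⟨by linarith, by linarith⟩
    have c3 : 0 < Real.sin (t - s) := Real.sin_pos_of_pos_of_lt_pi (by linarith) (by linarith)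
    have c4 := mul_pos hsθ c3
    simp only [g]
    rw [div_lt_div_iff₀ c1 c2, Real.cos_add, Real.cos_add]
    rw [Real.sin_sub] at c4
    linarith
  let t : ℕ → ℝ := fun i => (2 * i + 1) * θ / 4 + (-1) ^ i * (φ - θ / 4)
  have ht2 : ∀ i, t (i + 2) = t i + θ := by
    intro i; simp only [t]; push_cast; ring
  have ht1 : ∀ i, t i < t (i + 1) := by
    intro i
    simp only [t]; push_cast
    rcases neg_one_pow_eq_or ℝ i with h | h <;> rw [pow_succ, h] <;> linarith
  have htm : StrictMono t := strictMono_nat_of_lt_succ ht1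
  have ht0 : t 0 = φ := by simp only [t]; push_cast; ring
  have htM : t (2 * P + 2) = Real.pi / 2 - θ + φ := by
    simp only [t]; push_cast
    rw [pow_add, pow_mul]; norm_num; linarith
  have htM1 : t (2 * P + 1) = Real.pi / 2 - θ - φ := by
    simp only [t]; push_cast
    rw [pow_add, pow_mul]; norm_num; linarith
  have htlow : ∀ i, φ ≤ t i := fun i => by rw [← ht0]; exact htm.monotone (Nat.zero_le i)
  have hthigh : ∀ i ≤ 2 * P + 2, t i ≤ Real.pi / 2 - θ + φ := fun i hi => by
    rw [← htM]; exact htm.monotone hi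
  have hcos : ∀ i ≤ 2 * P + 2, 0 < Real.cos (t i) := fun i hi =>
    Real.cos_pos_of_mem_Ioo ⟨by linarith [htlow i], by linarith [hthigh i hi]⟩
  have gM : g (t (2 * P + 2)) = Real.sin φ / Real.sin (θ - φ) := by
    simp only [g]
    rw [htM, show Real.pi / 2 - θ + φ + θ = φ + Real.pi / 2 by ring,
      show Real.pi / 2 - θ + φ = Real.pi / 2 - (θ - φ) by ring, Real.cos_add_pi_div_two,
      Real.cos_pi_div_two_sub, neg_neg]
  have gM1 : g (t (2 * P + 1)) = -(Real.sin φ / Real.sin (θ + φ)) := by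
    simp only [g]
    rw [htM1, show Real.pi / 2 - θ - φ + θ = Real.pi / 2 - φ by ring,
      show Real.pi / 2 - θ - φ = Real.pi / 2 - (θ + φ) by ring, Real.cos_pi_div_two_sub,
      Real.cos_pi_div_two_sub, neg_div]
  have hs1 : 0 < Real.sin (θ - φ) := Real.sin_pos_of_pos_of_lt_pi (by linarith) (by linarith)
  have hs2 : 0 < Real.sin (θ + φ) := Real.sin_pos_of_pos_of_lt_pi (by linarith) (by linarith)
  let b : ℕ → ℝ := fun i => if i < 2 * P + 3 then g (t i) else α * lam
  have hb : ∀ i < 2 * P + 3, b i = g (t i) := fun i hi => if_pos hi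
  have hbl : b (2 * P + 3) = α * lam := if_neg (lt_irrefl _)
  refine ⟨b, ?_, ?_, ?_, hbl, ?_, ?_, ?_, ?_⟩
  · intro i hi
    rw [hb i hi]
    rcases (show i + 1 ≤ 2 * P + 3 from hi).lt_or_eq with c | c
    · rw [hb _ c]
      exact hg2 _ _ (by linarith [htlow i]) (ht1 i) (by linarith [hthigh (i + 1) (by omega)])
    · rw [c, hbl]
      obtain rfl : i = 2 * P + 2 := by omega
      rw [gM, hr0, div_lt_div_iff₀ hs1 hcφ]
      have : Real.sin (2 * φ) < Real.sin (2 * (θ - φ)) :=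
        Real.sin_lt_sin_of_lt_of_le_pi_div_two (by linarith) (by linarith) (by linarith)
      rw [Real.sin_two_mul, Real.sin_two_mul] at this
      linarith
  · rw [hb 0 (by omega), ht0, hl0]
  · rw [hb 1 (by omega)]
    have h1 : t 1 = -φ + θ := by simp only [t]; push_cast; ring
    rw [h1, hg1 _ (by rw [Real.cos_neg]; exact hcφ.ne'), hr0]
    · simp only [g]
      rw [Real.cos_neg, show -φ + θ = θ - φ by ring,
        show -Real.cos (θ - φ) / Real.cos φ = -(Real.cos (θ - φ) / Real.cos φ) from neg_div _ _,
        neg_div_neg_eq]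
    · exact (Real.cos_pos_of_mem_Ioo ⟨by linarith, by linarith⟩).ne'
  · intro i hi
    rw [hb _ (by omega), hb _ (by omega), ht2]
    refine hg1 _ (hcos i (by omega)).ne' ?_
    rw [← ht2]; exact (hcos _ (by omega)).ne'
  · rw [hb _ (by omega), gM1]
    have : 0 < Real.sin φ / Real.sin (θ + φ) := by positivity
    linarith
  · rw [hb _ (by omega), gM]
    positivity
  · rw [hb _ (by omega), hb _ (by omega), gM, gM1, hlam, neg_div_neg_eq]
    field_simp
    rw [Real.sin_add, Real.sin_sub]; ring

lemma trig_G (P : ℕ) (lam δ : ℝ) (hδ : (P + 2) * (2 * δ) = Real.pi / 2)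
    (hlam : lam = 2 * Real.cos (2 * δ)) (G : ℕ → ℝ)
    (hG : ∀ i : ℕ, G i = Real.sin ((i + 1) * δ) / Real.sin ((i + 3) * δ)) :
    (∀ i ≤ 2 * P + 2, 0 < G i ∧ G i < lam) ∧
    (∀ i ≤ 2 * P, G (i + 2) = 1 / (lam - G i)) ∧
    G 0 = 1 / (2 * lam - G (2 * P)) ∧ G 1 = 1 / lam ∧ G (2 * P + 1) = lam / 2 ∧
    G (2 * P + 2) + G (2 * P) = lam := by
  have hpi := Real.pi_pos
  have hP : (0:ℝ) ≤ P := Nat.cast_nonneg P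
  have hδ0 : 0 < δ := by
    by_contra hc
    have : (P + 2) * (2 * δ) ≤ 0 := mul_nonpos_of_nonneg_of_nonpos (by linarith) (by linarith)
    linarith
  have hs : ∀ i : ℕ, 1 ≤ i → i ≤ 2 * P + 7 → 0 < Real.sin (i * δ) := by
    intro i h1 h2
    have h1' : (1:ℝ) ≤ i := by exact_mod_cast h1
    have h2' : (i:ℝ) ≤ 2 * P + 7 := by exact_mod_cast h2
    apply Real.sin_pos_of_pos_of_lt_pi (by positivity)
    nlinarith
  have hadd : ∀ x : ℝ, Real.sin ((x + 4) * δ) + Real.sin (x * δ) = lam * Real.sin ((x + 2) * δ) := by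
    intro x
    rw [hlam, show (x + 4) * δ = (x + 2) * δ + 2 * δ by ring,
      show x * δ = (x + 2) * δ - 2 * δ by ring, Real.sin_add, Real.sin_sub]
    ring
  have hrec : ∀ i ≤ 2 * P, G (i + 2) = 1 / (lam - G i) := by
    intro i hi
    have h1 := hs (i + 3) (by omega) (by omega)
    have h2 := hs (i + 5) (by omega) (by omega)
    push_cast at h1 h2
    have h3 := hadd (i + 1)
    rw [show (i:ℝ) + 1 + 4 = i + 5 by ring, show (i:ℝ) + 1 + 2 = i + 3 by ring] at h3
    have h4 : lam - G i = Real.sin ((i + 5) * δ) / Real.sin ((i + 3) * δ) := by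
      rw [hG, eq_div_iff h1.ne', sub_mul, div_mul_cancel₀ _ h1.ne']
      linarith
    rw [h4, one_div_div, hG]
    push_cast
    congr 2 <;> congr 1 <;> ring
  have hpos : ∀ i ≤ 2 * P + 2, 0 < G i ∧ G i < lam := by
    intro i hi
    have h0 := hs (i + 1) (by omega) (by omega)
    have h1 := hs (i + 3) (by omega) (by omega)
    have h2 := hs (i + 5) (by omega) (by omega)
    push_cast at h0 h1 h2
    have h3 := hadd (i + 1)
    rw [show (i:ℝ) + 1 + 4 = i + 5 by ring, show (i:ℝ) + 1 + 2 = i + 3 by ring] at h3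
    rw [hG]
    refine ⟨by positivity, ?_⟩
    rw [div_lt_iff₀ h1]; linarith
  have hlast : G (2 * P + 2) = 1 := by
    rw [hG]; push_cast
    have : ((2:ℝ) * P + 2 + 3) * δ = Real.pi - (2 * P + 2 + 1) * δ := by linarith
    rw [this, Real.sin_pi_sub, div_self]
    have := hs (2 * P + 3) (by omega) (by omega)
    push_cast at this
    rw [show (2:ℝ) * P + 2 + 1 = 2 * P + 3 by ring]
    exact this.ne'
  have hsum : G (2 * P + 2) + G (2 * P) = lam := by
    have h1 := hrec (2 * P) le_rfl
    have h2 := (hpos (2 * P) (by omega)).2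
    rw [hlast, eq_div_iff (by linarith)] at h1
    rw [hlast]; linarith
  have hl0 : 0 < lam := (hpos 0 (by omega)).1.trans (hpos 0 (by omega)).2
  have hsδ := hs 1 (by omega) (by omega)
  have hs3 := hs 3 (by omega) (by omega)
  push_cast at hsδ hs3
  refine ⟨hpos, hrec, ?_, ?_, ?_, hsum⟩
  · have : 2 * lam - G (2 * P) = lam + 1 := by linarith
    rw [this, hG, div_eq_div_iff (by push_cast; rw [zero_add]; exact hs3.ne') (by linarith)]
    push_cast
    have := hadd (-1)
    rw [show (-1:ℝ) + 4 = 3 by norm_num, show (-1:ℝ) + 2 = 1 by norm_num, neg_mul, Real.sin_neg] at this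
    rw [zero_add, zero_add]
    linarith
  · rw [hG]; push_cast
    have := hadd 0
    have h2 := hs 4 (by omega) (by omega)
    push_cast at h2
    rw [zero_mul, Real.sin_zero, zero_add, zero_add] at this
    rw [show (1:ℝ) + 1 = 2 by norm_num, show (1:ℝ) + 3 = 4 by norm_num,
      div_eq_div_iff h2.ne' hl0.ne']
    linarith
  · rw [hG]; push_cast
    rw [show (2 * (P:ℝ) + 1 + 3) * δ = Real.pi / 2 by linarith,
      show (2 * (P:ℝ) + 1 + 1) * δ = Real.pi / 2 - 2 * δ by linarith, Real.sin_pi_div_two,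
      Real.sin_pi_div_two_sub, hlam]
    ring

/-- Theorem 2.3: for even `q = 2p` and `1/2 < α < 1/λ`, the natural extension map `𝒯_α`
is a bijection of `Ω_α` off of a set of two-dimensional Lebesgue measure zero. -/
theorem stmt5 (p q : ℕ) (hp : 2 ≤ p) (hq : q = 2 * p) (lam α : ℝ)
    (hlam : lam = 2 * Real.cos (Real.pi / q))
    (hα1 : 1 / 2 < α) (hα2 : α < 1 / lam)
    (ℓ r : ℕ → ℝ)
    (hℓ : ∀ n, ℓ n = (Tmap lam α)^[n] ((α - 1) * lam))
    (hr : ∀ n, r n = (Tmap lam α)^[n] (α * lam))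
    (Hodd Heven : ℕ → ℝ)
    (hHodd : ∀ n : ℕ, Hodd n =
      (Real.cos (n * Real.pi / (2 * (p : ℝ))) - Real.cos (((n : ℝ) - 1) * Real.pi / (2 * (p : ℝ))))
        / (Real.cos (((n : ℝ) + 1) * Real.pi / (2 * (p : ℝ)))
          - Real.cos (n * Real.pi / (2 * (p : ℝ)))))
    (hHeven : ∀ n : ℕ, Heven n =
      Real.sin (n * Real.pi / (2 * (p : ℝ))) / Real.sin (((n : ℝ) + 1) * Real.pi / (2 * (p : ℝ))))
    (Ω : Set (ℝ × ℝ))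
    (hΩ : Ω = (⋃ n ∈ Finset.Icc 1 (p - 1), Ico (ℓ (n - 1)) (r n) ×ˢ Icc (0 : ℝ) (Hodd n))
      ∪ (⋃ n ∈ Finset.Icc 1 (p - 1), Ico (r n) (ℓ n) ×ˢ Icc (0 : ℝ) (Heven n))
      ∪ Ico (ℓ (p - 1)) (r 0) ×ˢ Icc (0 : ℝ) (Hodd p)) :
    ∃ N N' : Set (ℝ × ℝ), N ⊆ Ω ∧ N' ⊆ Ω ∧ volume N = 0 ∧ volume N' = 0 ∧
      Set.BijOn (Tnat lam α) (Ω \ N) (Ω \ N') := by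
  obtain ⟨P, rfl⟩ := Nat.exists_eq_add_of_le' hp
  subst hq
  have hP : (0:ℝ) ≤ P := Nat.cast_nonneg P
  have hpi := Real.pi_pos
  push_cast at hlam hHodd hHeven
  set δ : ℝ := Real.pi / (4 * (P + 2)) with hδd
  have hP2 : (0:ℝ) < P + 2 := by linarith
  have hδ : ((P:ℝ) + 2) * (2 * δ) = Real.pi / 2 := by rw [hδd]; field_simp; norm_num
  have hθ : Real.pi / (2 * ((P:ℝ) + 2)) = 2 * δ := by rw [hδd]; field_simp; norm_num
  rw [hθ] at hlam
  have hδ0 : 0 < δ := by positivity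
  have hδ8 : 2 * δ ≤ Real.pi / 4 := by nlinarith
  have hl2 : 2 ≤ lam ^ 2 := by
    have h1 : Real.cos (Real.pi / 4) ≤ Real.cos (2 * δ) :=
      Real.cos_le_cos_of_nonneg_of_le_pi (by linarith) (by linarith) hδ8
    rw [Real.cos_pi_div_four] at h1
    have h2 : √2 ≤ lam := by linarith
    have h3 : √2 ^ 2 = (2:ℝ) := Real.sq_sqrt (by norm_num)
    rw [← h3]
    exact pow_le_pow_left₀ (Real.sqrt_nonneg _) h2 2
  have hcpos : 0 < Real.cos (2 * δ) := Real.cos_pos_of_mem_Ioo ⟨by linarith, by linarith⟩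
  have hl0 : 0 < lam := by linarith
  have hl1 : 1 < lam := by nlinarith
  have hαl : α * lam < 1 := by rwa [lt_div_iff₀ hl0] at hα2
  have hα1' : α < 1 := by nlinarith
  obtain ⟨b, hmono, hb0, hb1, hbK, hrec, hneg, hposb, hkey⟩ :=
    trig_b P lam α (2 * δ) hδ hlam hα1 hαl
  obtain ⟨hG, hGrec, hG0, hG1, hGM, hGs⟩ := trig_G P lam δ hδ hlam
    (fun i : ℕ => Real.sin ((i + 1) * δ) / Real.sin ((i + 3) * δ)) (fun i => rfl)
  have hmle : ∀ j ≤ 2 * P + 3, ∀ i ≤ j, b i ≤ b j := by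
    intro j
    induction j with
    | zero => intro _ i hi; rw [Nat.le_zero.1 hi]
    | succ j ih =>
      intro hj i hi
      rcases hi.lt_or_eq with c | c
      · exact (ih (by omega) i (by omega)).trans (hmono j (by omega)).le
      · rw [c]
  have hlow : ∀ i ≤ 2 * P + 2, (α - 1) * lam ≤ b i := fun i hi => by
    rw [← hb0]; exact hmle i (by omega) 0 (by omega)
  have hhigh : ∀ i ≤ 2 * P + 2, b i < α * lam := fun i hi => by
    rw [← hbK]
    exact (hmle _ (by omega) i hi).trans_lt (hmono (2 * P + 2) (by omega))
  have hstep : ∀ i ≤ 2 * P, Tmap lam α (b i) = b (i + 2) := by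
    intro i hi
    have hbi : b i < 0 := (hmle (2 * P + 1) (by omega) i (by omega)).trans_lt hneg
    have e : |1 / b i| - lam * ((1 : ℤ) : ℝ) = b (i + 2) := by
      rw [abs_of_neg (one_div_neg.2 hbi), hrec i hi, neg_div]; push_cast; ring
    rw [Tmap_aux lam α (b i) hbi.ne hl0 1 (by rw [e]; exact hlow _ (by omega))
      (by rw [e]; exact hhigh _ (by omega)), e]
  have hαpos : 0 < α * lam := by nlinarith
  have hstep0 : Tmap lam α (α * lam) = b 1 := by
    have e : |1 / (α * lam)| - lam * ((1 : ℤ) : ℝ) = b 1 := by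
      rw [abs_of_pos (one_div_pos.2 hαpos), hb1]; push_cast; ring
    rw [Tmap_aux lam α _ hαpos.ne' hl0 1 (by rw [e]; exact hlow _ (by omega))
      (by rw [e]; exact hhigh _ (by omega)), e]
  have hℓb : ∀ n ≤ P + 1, ℓ n = b (2 * n) := by
    intro n
    induction n with
    | zero => intro _; rw [hℓ, mul_zero, hb0]; rfl
    | succ n ih =>
      intro hn
      have := ih (by omega)
      rw [hℓ] at this
      rw [hℓ, Function.iterate_succ_apply', this, hstep _ (by omega)]
      rfl
  have hrb : ∀ n ≤ P, r (n + 1) = b (2 * n + 1) := by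
    intro n
    induction n with
    | zero => intro _; rw [hr, mul_zero]; exact hstep0
    | succ n ih =>
      intro hn
      have := ih (by omega)
      rw [hr] at this
      rw [hr, Function.iterate_succ_apply', this, hstep _ (by omega)]
      rfl
  have hr0 : r 0 = b (2 * P + 3) := by rw [hr, hbK]; rfl
  have hsp : ∀ i : ℕ, 1 ≤ i → i ≤ 2 * P + 5 → 0 < Real.sin (i * δ) := by
    intro i h1 h2
    have h1' : (1:ℝ) ≤ i := by exact_mod_cast h1
    have h2' : (i:ℝ) ≤ 2 * P + 5 := by exact_mod_cast h2
    apply Real.sin_pos_of_pos_of_lt_pi (by positivity)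
    nlinarith
  have hang : ∀ x : ℝ, x * Real.pi / (2 * ((P:ℝ) + 2)) = 2 * x * δ := by
    intro x; rw [mul_div_assoc, hθ]; ring
  have hHe : ∀ n : ℕ, Heven (n + 1) =
      Real.sin (((2 * n + 1 : ℕ) + 1) * δ) / Real.sin (((2 * n + 1 : ℕ) + 3) * δ) := by
    intro n
    rw [hHeven, hang, hang]
    push_cast
    congr 2 <;> ring
  have hHo : ∀ n : ℕ, n ≤ P + 1 → Hodd (n + 1) =
      Real.sin (((2 * n : ℕ) + 1) * δ) / Real.sin (((2 * n : ℕ) + 3) * δ) := by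
    intro n hn
    rw [hHodd, hang, hang, hang]
    push_cast
    have hd : ∀ x : ℝ, Real.cos ((x + 1) * δ) - Real.cos ((x - 1) * δ) =
        -2 * Real.sin δ * Real.sin (x * δ) := by
      intro x
      rw [show (x + 1) * δ = x * δ + δ by ring, show (x - 1) * δ = x * δ - δ by ring,
        Real.cos_add, Real.cos_sub]
      ring
    have d1 := hd (2 * n + 1)
    have d2 := hd (2 * n + 3)
    rw [show (2 * (n:ℝ) + 1 + 1) = 2 * (n + 1) by ring,
      show (2 * (n:ℝ) + 1 - 1) = 2 * (n + 1 - 1) by ring] at d1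
    rw [show (2 * (n:ℝ) + 3 + 1) = 2 * (n + 1 + 1) by ring,
      show (2 * (n:ℝ) + 3 - 1) = 2 * (n + 1) by ring] at d2
    rw [d1, d2]
    have s1 := hsp 1 (by omega) (by omega)
    push_cast at s1; rw [one_mul] at s1
    exact mul_div_mul_left _ _ (by linarith)
  refine mid_aux lam α hl1 hα1 hαl hα1' hl2 (2 * P) b
    (fun i : ℕ => Real.sin ((i + 1) * δ) / Real.sin ((i + 3) * δ))
    hmono hb0 hb1 hbK hrec hneg hposb hkey hG hGrec hG0 hG1 hGM hGs Ω ?_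
  rintro ⟨x, y⟩
  rw [hΩ]
  simp only [mem_union, mem_iUnion, Finset.mem_Icc, mem_prod, mem_Ico, mem_Icc, exists_prop]
  constructor
  · rintro ((⟨n, ⟨h1, h2⟩, h3, h4⟩ | ⟨n, ⟨h1, h2⟩, h3, h4⟩) | ⟨h3, h4⟩)
    · obtain ⟨m, rfl⟩ := Nat.exists_eq_add_of_le' h1
      rw [Nat.add_sub_cancel, hℓb m (by omega), hrb m (by omega)] at h3
      rw [hHo m (by omega)] at h4
      exact ⟨2 * m, by omega, h3, h4⟩
    · obtain ⟨m, rfl⟩ := Nat.exists_eq_add_of_le' h1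
      rw [hℓb (m + 1) (by omega), hrb m (by omega)] at h3
      rw [hHe m] at h4
      exact ⟨2 * m + 1, by omega, h3, h4⟩
    · rw [show P + 2 - 1 = P + 1 by omega, hℓb (P + 1) le_rfl, hr0] at h3
      rw [hHo (P + 1) le_rfl] at h4
      exact ⟨2 * (P + 1), by omega, h3, h4⟩
  · rintro ⟨i, hi, h3, h4⟩
    rcases Nat.even_or_odd' i with ⟨m, rfl | rfl⟩
    · rcases (show m ≤ P + 1 by omega).lt_or_eq with c | c
      · left; left
        refine ⟨m + 1, ⟨by omega, by omega⟩, ?_, ?_⟩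
        · rw [Nat.add_sub_cancel, hℓb m (by omega), hrb m (by omega)]; exact h3
        · rw [hHo m (by omega)]; exact h4
      · right
        subst c
        rw [show P + 2 - 1 = P + 1 by omega, hℓb (P + 1) le_rfl, hr0]
        refine ⟨h3, ?_⟩
        rw [hHo (P + 1) le_rfl]; exact h4
    · left; right
      refine ⟨m + 1, ⟨by omega, by omega⟩, ?_, ?_⟩
      · rw [hℓb (m + 1) (by omega), hrb m (by omega)]; exact h3
      · rw [hHe m]; exact h4
end

section
/- Let q = 2p with p ≥ 2, λ = 2cos(π/q), α = 1/λ, and B_n = sin(nπ/q)/sin(π/q). Let Ω_{1/λ} = ⋃_{n=1}^{p−1} [(B_n − B_{n+1})/(B_n − B_{n−1}), (B_{n+1} − B_{n+2})/(B_{n+1} − B_n)) × [0, B_n/B_{n+1}]. Then the map 𝒯_{1/λ}(x,y) = (T_{1/λ}(x), 1/(d(x)λ + ε(x)y)) maps Ω_{1/λ} to Ω_{1/λ} and is bijective off of a set of two-dimensional Lebesgue measure zero. -/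
open Set MeasureTheory

/-- Basic properties of digit and map. -/
lemma aux_spec {lam x : ℝ} (hl : 1 < lam) (hx : x ≠ 0) :
    |1 / x| = Tmap lam (1 / lam) x + lam * (dfun lam (1 / lam) x : ℝ) ∧
      1 - lam ≤ Tmap lam (1 / lam) x ∧ Tmap lam (1 / lam) x < 1 := by
  have hl0 : 0 < lam := by linarith
  have h1 := Int.floor_le (|1 / (x * lam)| + 1 - 1 / lam)
  have h2 := Int.lt_floor_add_one (|1 / (x * lam)| + 1 - 1 / lam)
  have e : |1 / (x * lam)| = |1 / x| / lam := by
    rw [one_div, mul_inv, abs_mul, abs_of_pos (inv_pos.2 hl0), one_div, div_eq_mul_inv]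
  rw [e] at h1 h2
  have hT : Tmap lam (1 / lam) x = |1 / x| - lam * (dfun lam (1 / lam) x : ℝ) := by
    simp [Tmap, hx]
  have hd : dfun lam (1 / lam) x = ⌊|1 / x| / lam + 1 - 1 / lam⌋ := by
    rw [dfun, e]
  rw [← hd] at h1 h2
  have e2 : lam * (|1 / x| / lam + 1 - 1 / lam) = |1 / x| + lam - 1 := by
    field_simp
  have h3 := mul_le_mul_of_nonneg_left h1 hl0.le
  have h4 := mul_lt_mul_of_pos_left h2 hl0
  rw [e2] at h3 h4
  refine ⟨by linarith, by linarith, by linarith⟩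

lemma aux_uniq {lam x s : ℝ} {k : ℤ} (hl : 1 < lam) (hx : x ≠ 0)
    (h : |1 / x| = s + lam * k) (h1 : 1 - lam ≤ s) (h2 : s < 1) :
    Tmap lam (1 / lam) x = s ∧ dfun lam (1 / lam) x = k := by
  obtain ⟨a, b, c⟩ := aux_spec hl hx
  have hd : dfun lam (1 / lam) x = k := by
    have h3 : lam * ((dfun lam (1 / lam) x : ℝ) - k) < lam * 1 := by linarith
    have h4 : lam * (-1) < lam * ((dfun lam (1 / lam) x : ℝ) - k) := by linarith
    have h5 := lt_of_mul_lt_mul_left h3 (by linarith)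
    have h6 := lt_of_mul_lt_mul_left h4 (by linarith)
    have h7 : dfun lam (1 / lam) x - k < 1 := by exact_mod_cast h5
    have h8 : -1 < dfun lam (1 / lam) x - k := by exact_mod_cast h6
    omega
  refine ⟨?_, hd⟩
  rw [hd] at a
  linarith

/-- no half-integer multiple of lam strictly between consecutive ones -/
lemma aux_half {lam w : ℝ} (hl : 1 < lam) {a j : ℤ} (h1 : a * (lam / 2) < w)
    (h2 : w < (a + 1) * (lam / 2)) (h : w = j * (lam / 2)) : False := by
  subst h
  have h3 := lt_of_mul_lt_mul_right h1 (by linarith)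
  have h4 := lt_of_mul_lt_mul_right h2 (by linarith)
  have h5 : a < j := by exact_mod_cast h3
  have h6 : j < a + 1 := by exact_mod_cast h4
  omega

lemma aux_null_left (c : ℝ) : volume (({c} : Set ℝ) ×ˢ (univ : Set ℝ)) = 0 := by
  rw [Measure.volume_eq_prod, Measure.prod_prod]; simp

lemma aux_null_right {S : Set ℝ} (hS : S.Countable) :
    volume ((univ : Set ℝ) ×ˢ S) = 0 := by
  rw [Measure.volume_eq_prod, Measure.prod_prod, hS.measure_zero]; simp

set_option maxHeartbeats 2000000 in
lemma aux_main (p : ℕ) (hp : 2 ≤ p) (lam : ℝ) (hl : 1 < lam) (hl2 : lam < 2)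
    (L H : ℕ → ℝ) (hL1 : L 1 = 1 - lam) (hLp : L p = 1)
    (hLn : ∀ n, 1 ≤ n → n < p → L n < 0)
    (hLs : ∀ n, 1 ≤ n → n < p → -1 / L n - lam = L (n + 1))
    (hH1 : H 1 = 1 / lam) (hHs : ∀ n, 1 ≤ n → n < p - 1 → H (n + 1) = 1 / (lam - H n))
    (hHp : H (p - 1) = lam / 2)
    (hH0 : ∀ n, 1 ≤ n → n ≤ p - 1 → 0 < H n)
    (hH2 : ∀ n, 1 ≤ n → n ≤ p - 1 → H n ≤ lam / 2)
    (Ω : Set (ℝ × ℝ))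
    (hΩ : ∀ z, z ∈ Ω ↔ ∃ n, (1 ≤ n ∧ n ≤ p - 1) ∧ (L n ≤ z.1 ∧ z.1 < L (n + 1)) ∧
      0 ≤ z.2 ∧ z.2 ≤ H n) :
    ∃ N N' : Set (ℝ × ℝ), N ⊆ Ω ∧ N' ⊆ Ω ∧ volume N = 0 ∧ volume N' = 0 ∧
      Set.BijOn (Tnat lam (1 / lam)) (Ω \ N) (Ω \ N') := by
  have hl0 : 0 < lam := by linarith
  -- monotonicity of L
  have hmono : ∀ n, 1 ≤ n → n < p → L n < L (n + 1) := by
    intro n hn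
    induction n, hn using Nat.le_induction with
    | base =>
      intro h
      rw [← hLs 1 le_rfl h, hL1]
      have : -1 / (1 - lam) = 1 / (lam - 1) := by
        rw [← neg_sub lam 1, neg_div_neg_eq]
      rw [this]
      have : 1 < 1 / (lam - 1) := by
        rw [lt_div_iff₀ (by linarith)]; linarith
      linarith
    | succ n hn ih =>
      intro h
      have h1 := ih (by omega)
      have a := hLn n hn (by omega)
      have b := hLn (n + 1) (by omega) h
      have s1 := hLs n hn (by omega)
      have s2 := hLs (n + 1) (by omega) h
      have : 1 / L (n + 1) < 1 / L n := one_div_lt_one_div_of_neg_of_lt b h1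
      have e1 : -1 / L n = -(1 / L n) := by ring
      have e2 : -1 / L (n + 1) = -(1 / L (n + 1)) := by ring
      linarith
  have hlow : ∀ n, 1 ≤ n → n ≤ p → 1 - lam ≤ L n := by
    intro n hn
    induction n, hn using Nat.le_induction with
    | base => intro _; exact hL1.ge
    | succ n hn ih =>
      intro h
      have := ih (by omega); have := hmono n hn (by omega); linarith
  have hhigh : ∀ n, 1 ≤ n → n ≤ p → L n ≤ 1 := by
    intro n hn h
    rcases h.eq_or_lt with rfl | h
    · exact hLp.le
    · have := hLn n hn h; linarith
  have hLp1 : L (p - 1) = -(1 / (1 + lam)) := by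
    have h := hLs (p - 1) (by omega) (by omega)
    have hn := hLn (p - 1) (by omega) (by omega)
    rw [Nat.sub_add_cancel (by omega), hLp] at h
    have h2 : -1 / L (p - 1) = 1 + lam := by linarith
    have h3 : L (p - 1) ≠ 0 := hn.ne
    have h4 : (1 + lam) ≠ 0 := by positivity
    field_simp at h2 ⊢
    linarith
  have hHlow : ∀ n, 1 ≤ n → n ≤ p - 1 → 1 / lam ≤ H n := by
    intro n hn h
    rcases hn.eq_or_lt with rfl | h1
    · exact hH1.ge
    · obtain ⟨m, rfl⟩ : ∃ m, n = m + 1 := ⟨n - 1, by omega⟩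
      rw [hHs m (by omega) (by omega)]
      have a := hH0 m (by omega) (by omega)
      have b := hH2 m (by omega) (by omega)
      exact one_div_le_one_div_of_le (by linarith) (by linarith)
  have hcover : ∀ m, 1 ≤ m → m ≤ p → ∀ x, 1 - lam ≤ x → x < L m →
      ∃ n, (1 ≤ n ∧ n ≤ p - 1) ∧ L n ≤ x ∧ x < L (n + 1) := by
    intro m hm
    induction m, hm using Nat.le_induction with
    | base => intro _ x h1 h2; rw [hL1] at h2; linarith
    | succ m hm ih =>
      intro h x h1 h2
      by_cases hx : x < L m
      · exact ih (by omega) x h1 hx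
      · exact ⟨m, ⟨hm, by omega⟩, not_lt.1 hx, h2⟩
  have hbase : ∀ x y : ℝ, 1 - lam ≤ x → x < 1 → 0 ≤ y → y ≤ 1 / lam → (x, y) ∈ Ω := by
    intro x y h1 h2 h3 h4
    obtain ⟨n, hn, hx⟩ := hcover p (by omega) le_rfl x h1 (by rw [hLp]; exact h2)
    exact (hΩ _).2 ⟨n, hn, hx, h3, h4.trans (hHlow n hn.1 hn.2)⟩
  have htop : ∀ x y : ℝ, -(1 / (1 + lam)) ≤ x → x < 1 → 0 ≤ y → y ≤ lam / 2 → (x, y) ∈ Ω := by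
    intro x y h1 h2 h3 h4
    refine (hΩ _).2 ⟨p - 1, ⟨by omega, le_rfl⟩, ⟨by rw [hLp1]; exact h1, ?_⟩, h3, by rw [hHp]; exact h4⟩
    rw [Nat.sub_add_cancel (by omega), hLp]; exact h2
  have hbound : ∀ z ∈ Ω, 1 - lam ≤ z.1 ∧ z.1 < 1 ∧ 0 ≤ z.2 ∧ z.2 ≤ lam / 2 := by
    intro z hz
    obtain ⟨n, hn, hx, hy⟩ := (hΩ z).1 hz
    have a := hlow n hn.1 (by omega)
    have b := hhigh (n + 1) (by omega) (by omega)
    have c := hH2 n hn.1 hn.2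
    exact ⟨by linarith, by linarith, hy.1, by linarith⟩
  set N : Set (ℝ × ℝ) := {z | z ∈ Ω ∧ (z.1 = 0 ∨ z.2 = 0 ∨ z.2 = lam / 2)} with hN
  set N' : Set (ℝ × ℝ) := {z | z ∈ Ω ∧ ((∃ j : ℤ, z.2 = 1 / (j * (lam / 2))) ∨
    (z.1 = 1 - lam ∧ 1 / (3 * lam / 2) < z.2))} with hN'
  -- good points
  have hgood : ∀ z ∈ Ω \ N, z ∈ Ω ∧ z.1 ≠ 0 ∧ 0 < z.2 ∧ z.2 < lam / 2 ∧ 1 - lam ≤ z.1 ∧ z.1 < 1 := by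
    rintro z ⟨hz, hzN⟩
    obtain ⟨a, b, c, d⟩ := hbound z hz
    have h1 : z.1 ≠ 0 := fun h => hzN ⟨hz, Or.inl h⟩
    have h2 : z.2 ≠ 0 := fun h => hzN ⟨hz, Or.inr (Or.inl h)⟩
    have h3 : z.2 ≠ lam / 2 := fun h => hzN ⟨hz, Or.inr (Or.inr h)⟩
    exact ⟨hz, h1, lt_of_le_of_ne c h2.symm, lt_of_le_of_ne d h3, a, b⟩
  have habs : ∀ x : ℝ, x ≠ 0 → 1 - lam ≤ x → x < 1 → 1 < |1 / x| := by
    intro x h0 h1 h2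
    rw [abs_div, abs_one, lt_div_iff₀ (abs_pos.2 h0), one_mul, abs_lt]
    constructor <;> linarith
  have hdpos : ∀ x : ℝ, x ≠ 0 → 1 - lam ≤ x → x < 1 → 1 ≤ dfun lam (1 / lam) x := by
    intro x h0 h1 h2
    obtain ⟨a, b, c⟩ := aux_spec hl h0
    have := habs x h0 h1 h2
    have h3 : lam * 0 < lam * (dfun lam (1 / lam) x : ℝ) := by linarith
    have h4 := lt_of_mul_lt_mul_left h3 hl0.le
    have h5 : 0 < dfun lam (1 / lam) x := by exact_mod_cast h4
    omega
  refine ⟨N, N', fun z h => h.1, fun z h => h.1, ?_, ?_, ?_, ?_, ?_⟩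
  · refine measure_mono_null (t := ({0} : Set ℝ) ×ˢ univ ∪ univ ×ˢ ({0, lam / 2} : Set ℝ)) ?_ ?_
    · rintro z ⟨_, h | h | h⟩ <;> simp [h]
    · exact measure_union_null (aux_null_left 0) (aux_null_right (Set.to_countable _))
  · refine measure_mono_null (t := ({1 - lam} : Set ℝ) ×ˢ univ ∪
      univ ×ˢ (Set.range fun j : ℤ => 1 / (j * (lam / 2)))) ?_ ?_
    · rintro z ⟨_, ⟨j, h⟩ | h⟩
      · right; exact ⟨mem_univ _, j, h.symm⟩
      · left; exact ⟨h.1, mem_univ _⟩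
    · exact measure_union_null (aux_null_left _) (aux_null_right (Set.countable_range _))
  · -- MapsTo
    rintro ⟨x, y⟩ hz
    obtain ⟨hzΩ, hx0, hy0, hy2, hxl, hx1⟩ := hgood _ hz
    simp only at hx0 hy0 hy2 hxl hx1
    obtain ⟨a, b, c⟩ := aux_spec hl hx0
    have hd := hdpos x hx0 hxl hx1
    have hab := habs x hx0 hxl hx1
    simp only [Tnat]
    set t := Tmap lam (1 / lam) x with ht
    set d := dfun lam (1 / lam) x with hdd
    have hdR : (1 : ℝ) ≤ d := by exact_mod_cast hd
    have hdl : lam ≤ d * lam := by nlinarith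
    -- not in N'
    have hnot : ∀ w : ℝ, 0 < w → (∃ a : ℤ, a * (lam / 2) < w ∧ w < (a + 1) * (lam / 2)) →
        (w < 3 * lam / 2 → d = 1) → (t, 1 / w) ∉ N' := by
      rintro w hw ⟨a', ha1, ha2⟩ hw1 ⟨_, ⟨j, hj⟩ | ⟨h1, h2⟩⟩
      · simp only [one_div, inv_inj] at hj
        exact aux_half hl ha1 ha2 hj
      · simp only at h1 h2
        have hw2 := lt_of_one_div_lt_one_div (by linarith : (0:ℝ) < 3 * lam / 2) h2
        rw [hw1 hw2, h1] at a
        push_cast at a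
        linarith
    rcases lt_or_gt_of_ne hx0 with hx | hx
    · rw [Real.sign_of_neg hx]
      have hn' : (t, 1 / (d * lam + -1 * y)) ∉ N' := by
        refine hnot _ (by linarith) ⟨2 * d - 1, ?_, ?_⟩ ?_
        · push_cast; linarith
        · push_cast; linarith
        · intro h
          have h3 : lam * (d : ℝ) < lam * 2 := by linarith
          have h4 := lt_of_mul_lt_mul_left h3 hl0.le
          have h5 : d < 2 := by exact_mod_cast h4
          omega
      refine ⟨?_, hn'⟩
      by_cases hd2 : 2 ≤ d
      · have hdR2 : (2 : ℝ) ≤ d := by exact_mod_cast hd2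
        have hdl2 : 2 * lam ≤ d * lam := by nlinarith
        apply hbase _ _ b c
        · apply one_div_nonneg.2; linarith
        · exact one_div_le_one_div_of_le hl0 (by linarith)
      · have hd1 : d = 1 := by omega
        rw [hd1] at a ⊢
        push_cast at a ⊢
        have hax : |1 / x| = -1 / x := by
          rw [abs_of_neg (one_div_neg.2 hx)]; ring
        rw [hax] at a
        obtain ⟨n, hn, hxn, hyn⟩ := (hΩ _).1 hzΩ
        simp only at hxn hyn
        have hnp : n < p - 1 := by
          rcases hn.2.eq_or_lt with h | h
          · exfalso
            rw [h, hLp1] at hxn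
            have h1 : -1 / x < 1 + lam := by linarith
            have h2 : -x ≤ 1 / (1 + lam) := by linarith [hxn.1]
            have h3 : 1 / (1 / (1 + lam)) ≤ 1 / (-x) :=
              one_div_le_one_div_of_le (by linarith) h2
            rw [one_div_one_div] at h3
            have h4 : 1 / (-x) = -1 / x := by rw [one_div, inv_neg]; ring
            linarith
          · exact h
        have ln1 := hLn (n + 1) (by omega) (by omega)
        have e0 : -1 / x = -(1 / x) := by ring
        have e1 : -1 / L n = -(1 / L n) := by ring
        have e2 : -1 / L (n + 1) = -(1 / L (n + 1)) := by ring
        have s1 := hLs n hn.1 (by omega)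
        have s2 := hLs (n + 1) (by omega) (by omega)
        have q1 : 1 / x ≤ 1 / L n := one_div_le_one_div_of_neg_of_le hx hxn.1
        have q2 : 1 / L (n + 1) < 1 / x := one_div_lt_one_div_of_neg_of_lt ln1 hxn.2
        refine (hΩ _).2 ⟨n + 1, ⟨by omega, by omega⟩, ⟨?_, ?_⟩, ?_, ?_⟩
        · simp only; linarith
        · simp only; linarith
        · simp only; apply one_div_nonneg.2; linarith
        · simp only; rw [hHs n hn.1 hnp]
          have := hH2 n hn.1 hn.2
          exact one_div_le_one_div_of_le (by linarith) (by linarith)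
    · rw [Real.sign_of_pos hx]
      refine ⟨?_, ?_⟩
      · apply hbase _ _ b c
        · apply one_div_nonneg.2; linarith
        · exact one_div_le_one_div_of_le hl0 (by linarith)
      · refine hnot _ (by linarith) ⟨2 * d, ?_, ?_⟩ ?_
        · push_cast; linarith
        · push_cast; linarith
        · intro h
          have h3 : lam * (d : ℝ) < lam * 2 := by linarith
          have h4 := lt_of_mul_lt_mul_left h3 hl0.le
          have h5 : d < 2 := by exact_mod_cast h4
          omega
  · -- injectivity
    rintro ⟨x1, y1⟩ hz1 ⟨x2, y2⟩ hz2 heq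
    obtain ⟨-, hx10, hy10, hy12, -, -⟩ := hgood _ hz1
    obtain ⟨-, hx20, hy20, hy22, -, -⟩ := hgood _ hz2
    simp only at hx10 hy10 hy12 hx20 hy20 hy22
    simp only [Tnat, Prod.mk.injEq, one_div, inv_inj] at heq
    simp only [← one_div] at heq
    obtain ⟨ht, hd⟩ := heq
    obtain ⟨a1, -, -⟩ := aux_spec hl hx10
    obtain ⟨a2, -, -⟩ := aux_spec hl hx20
    set d1 := dfun lam (1 / lam) x1
    set d2 := dfun lam (1 / lam) x2
    have key : ∀ x y : ℝ, x ≠ 0 → 0 < y → y < lam / 2 →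
        -(lam / 2) < Real.sign x * y ∧ Real.sign x * y < lam / 2 := by
      intro x y h0 h1 h2
      rcases lt_or_gt_of_ne h0 with h | h
      · rw [Real.sign_of_neg h]; constructor <;> linarith
      · rw [Real.sign_of_pos h]; constructor <;> linarith
    have k1 := key x1 y1 hx10 hy10 hy12
    have k2 := key x2 y2 hx20 hy20 hy22
    have hdd : d1 = d2 := by
      have h3 : lam * ((d1 : ℝ) - d2) < lam * 1 := by linarith
      have h4 : lam * (-1) < lam * ((d1 : ℝ) - d2) := by linarith
      have h5 := lt_of_mul_lt_mul_left h3 hl0.le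
      have h6 := lt_of_mul_lt_mul_left h4 hl0.le
      have h7 : d1 - d2 < 1 := by exact_mod_cast h5
      have h8 : -1 < d1 - d2 := by exact_mod_cast h6
      omega
    rw [hdd] at hd a1
    have hs : Real.sign x1 * y1 = Real.sign x2 * y2 := by linarith
    have hxx : |1 / x1| = |1 / x2| := by rw [a1, a2, ht]
    rw [abs_div, abs_div, abs_one, one_div, one_div, inv_inj] at hxx
    rcases lt_or_gt_of_ne hx10 with h | h <;> rcases lt_or_gt_of_ne hx20 with h' | h'
    · rw [Real.sign_of_neg h, Real.sign_of_neg h'] at hs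
      rw [abs_of_neg h, abs_of_neg h'] at hxx
      exact Prod.ext (by simp only; linarith) (by simp only; linarith)
    · rw [Real.sign_of_neg h, Real.sign_of_pos h'] at hs; linarith
    · rw [Real.sign_of_pos h, Real.sign_of_neg h'] at hs; linarith
    · rw [Real.sign_of_pos h, Real.sign_of_pos h'] at hs
      rw [abs_of_pos h, abs_of_pos h'] at hxx
      exact Prod.ext (by simp only; linarith) (by simp only; linarith)
  · -- surjectivity
    rintro ⟨s, t⟩ ⟨hzΩ, hzN⟩
    obtain ⟨hs1, hs2, ht1, ht2⟩ := hbound _ hzΩ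
    simp only at hs1 hs2 ht1 ht2
    have hj : ∀ j : ℤ, t ≠ 1 / (j * (lam / 2)) := fun j h => hzN ⟨hzΩ, Or.inl ⟨j, h⟩⟩
    have ht0 : 0 < t := by
      refine lt_of_le_of_ne ht1 ?_
      have := hj 0
      simp at this
      exact fun h => this h.symm
    obtain ⟨w, hw⟩ : ∃ w, w = 1 / t := ⟨_, rfl⟩
    have hwt : t = 1 / w := by rw [hw, one_div_one_div]
    have hw0 : 0 < w := by rw [hw]; positivity
    have hjw : ∀ j : ℤ, w ≠ j * (lam / 2) := fun j h => hj j (by rw [hwt, h])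
    have hw1 : lam / 2 < w := by
      rw [hw, lt_div_iff₀ ht0]; nlinarith
    obtain ⟨k, hk⟩ : ∃ k : ℤ, k = round (w / lam) := ⟨_, rfl⟩
    have hr := abs_sub_round (w / lam)
    rw [← hk, abs_le] at hr
    obtain ⟨u, hu⟩ : ∃ u, u = w - k * lam := ⟨_, rfl⟩
    have hul : u = lam * (w / lam - k) := by rw [hu]; field_simp
    have hu1 : -(lam / 2) < u := by
      refine lt_of_le_of_ne ?_ ?_
      · rw [hul]; nlinarith [hr.1]
      · intro h; apply hjw (2 * k - 1); push_cast; linarith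
    have hu2 : u < lam / 2 := by
      refine lt_of_le_of_ne ?_ ?_
      · rw [hul]; nlinarith [hr.2]
      · intro h; apply hjw (2 * k + 1); push_cast; linarith
    have hu0 : u ≠ 0 := by
      intro h; apply hjw (2 * k); push_cast; linarith
    have hk1 : 1 ≤ k := by
      have h3 : lam * 0 < lam * (k : ℝ) := by linarith
      have h4 := lt_of_mul_lt_mul_left h3 hl0.le
      have h5 : 0 < k := by exact_mod_cast h4
      omega
    have hkR : (1 : ℝ) ≤ k := by exact_mod_cast hk1
    have hkl : lam ≤ k * lam := by nlinarith
    have hsk : 0 < s + k * lam := by linarith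
    rcases lt_or_gt_of_ne hu0 with h | h
    · have hxneg : -(1 / (s + k * lam)) < 0 := by
        have := one_div_pos.2 hsk; linarith
      have hab : |1 / (-(1 / (s + k * lam)))| = s + lam * k := by
        rw [abs_div, abs_neg, abs_one, abs_of_pos (one_div_pos.2 hsk), one_div_one_div]; ring
      obtain ⟨e1, e2⟩ := aux_uniq hl hxneg.ne hab hs1 hs2
      refine ⟨(-(1 / (s + k * lam)), -u), ⟨?_, ?_⟩, ?_⟩
      · by_cases hk2 : 2 ≤ k
        · have hkR2 : (2 : ℝ) ≤ k := by exact_mod_cast hk2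
          have hkl2 : 2 * lam ≤ k * lam := by nlinarith
          apply htop
          · have := one_div_le_one_div_of_le (by linarith : 0 < 1 + lam)
              (by linarith : 1 + lam ≤ s + k * lam)
            linarith
          · linarith
          · linarith
          · linarith
        · have hke : k = 1 := by omega
          obtain ⟨m, hm, hsm, htm⟩ := (hΩ _).1 hzΩ
          simp only at hsm htm
          rw [hke] at hu hsk hxneg ⊢
          push_cast at hu hsk hxneg ⊢
          have htl : 1 / lam < t := by
            rw [hwt]; exact one_div_lt_one_div_of_lt hw0 (by linarith)
          have hm1 : m ≠ 1 := by
            rintro rfl; rw [hH1] at htm; linarith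
          obtain ⟨n, rfl⟩ : ∃ n, m = n + 1 := ⟨m - 1, by omega⟩
          have hn1 : 1 ≤ n := by omega
          have ln0 := hLn n hn1 (by omega)
          have ln1 := hLn (n + 1) (by omega) (by omega)
          have s1 := hLs n hn1 (by omega)
          have s2 := hLs (n + 1) (by omega) (by omega)
          have f1 : L n = -(1 / (L (n + 1) + lam)) := by
            rw [← s1, sub_add_cancel, one_div_div]; ring
          have f2 : L (n + 1) = -(1 / (L (n + 1 + 1) + lam)) := by
            rw [← s2, sub_add_cancel, one_div_div]; ring
          have hlo := hlow (n + 1) (by omega) (by omega)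
          refine (hΩ _).2 ⟨n, ⟨hn1, by omega⟩, ⟨?_, ?_⟩, ?_, ?_⟩
          · simp only; rw [f1]
            have := one_div_le_one_div_of_le (by linarith : 0 < L (n + 1) + lam)
              (by linarith : L (n + 1) + lam ≤ s + 1 * lam)
            linarith
          · simp only; rw [f2]
            have := one_div_lt_one_div_of_lt hsk
              (by linarith : s + 1 * lam < L (n + 1 + 1) + lam)
            linarith
          · simp only; linarith
          · simp only
            have hh := htm.2
            rw [hHs n hn1 (by omega), hwt] at hh
            have hb := hH2 n hn1 (by omega)
            have := le_of_one_div_le_one_div hw0 hh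
            linarith
      · rintro ⟨_, h1 | h1 | h1⟩ <;> simp only at h1 <;> linarith
      · simp only [Tnat]
        rw [e1, e2, Real.sign_of_neg hxneg, hwt]
        congr 2
        linarith
    · have hxpos : 0 < 1 / (s + k * lam) := one_div_pos.2 hsk
      have hab : |1 / (1 / (s + k * lam))| = s + lam * k := by
        rw [one_div_one_div, abs_of_pos hsk]; ring
      obtain ⟨e1, e2⟩ := aux_uniq hl hxpos.ne' hab hs1 hs2
      refine ⟨(1 / (s + k * lam), u), ⟨?_, ?_⟩, ?_⟩
      · apply htop
        · have : 0 < 1 / (1 + lam) := by positivity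
          linarith
        · rw [div_lt_one hsk]
          by_contra hcon
          have h1 : s = 1 - lam := by linarith
          apply hzN
          refine ⟨hzΩ, Or.inr ⟨h1, ?_⟩⟩
          simp only
          rw [hwt]
          exact one_div_lt_one_div_of_lt hw0 (by linarith)
        · linarith
        · linarith
      · rintro ⟨_, h1 | h1 | h1⟩ <;> simp only at h1 <;> linarith
      · simp only [Tnat]
        rw [e1, e2, Real.sign_of_pos hxpos, hwt]
        congr 2
        linarith

/-- Theorem 2.4: for even `q = 2p` and `α = 1/λ`, the natural extension map `𝒯_{1/λ}`
is a bijection of `Ω_{1/λ}` off of a set of Lebesgue measure zero. -/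
theorem stmt6 (p q : ℕ) (hp : 2 ≤ p) (hq : q = 2 * p) (lam : ℝ)
    (hlam : lam = 2 * Real.cos (Real.pi / q))
    (B : ℕ → ℝ)
    (hB : ∀ n : ℕ, B n = Real.sin (n * Real.pi / q) / Real.sin (Real.pi / q))
    (Ω : Set (ℝ × ℝ))
    (hΩ : Ω = ⋃ n ∈ Finset.Icc 1 (p - 1),
      Ico ((B n - B (n + 1)) / (B n - B (n - 1))) ((B (n + 1) - B (n + 2)) / (B (n + 1) - B n))
        ×ˢ Icc (0 : ℝ) (B n / B (n + 1))) :
    ∃ N N' : Set (ℝ × ℝ), N ⊆ Ω ∧ N' ⊆ Ω ∧ volume N = 0 ∧ volume N' = 0 ∧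
      Set.BijOn (Tnat lam (1 / lam)) (Ω \ N) (Ω \ N') := by
  have hpR : (2 : ℝ) ≤ p := by exact_mod_cast hp
  have hqR : (q : ℝ) = 2 * p := by rw [hq]; push_cast; ring
  obtain ⟨θ, hθ⟩ : ∃ θ, θ = Real.pi / q := ⟨_, rfl⟩
  have hpi := Real.pi_pos
  have hpθ : p * θ = Real.pi / 2 := by
    rw [hθ, hqR]; field_simp
  have hθ0 : 0 < θ := by rw [hθ, hqR]; positivity
  have hθ4 : θ ≤ Real.pi / 4 := by nlinarith
  have hB' : ∀ n : ℕ, B n = Real.sin (n * θ) / Real.sin θ := by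
    intro n; rw [hB, hθ, mul_div_assoc]
  have hsin : 0 < Real.sin θ := Real.sin_pos_of_pos_of_lt_pi hθ0 (by linarith)
  rw [← hθ] at hlam
  have hl : 1 < lam := by
    have : Real.cos (Real.pi / 3) < Real.cos θ :=
      Real.cos_lt_cos_of_nonneg_of_le_pi hθ0.le (by linarith) (by linarith)
    rw [Real.cos_pi_div_three] at this
    linarith
  have hl2 : lam < 2 := by
    have : Real.cos θ < Real.cos 0 :=
      Real.cos_lt_cos_of_nonneg_of_le_pi le_rfl (by linarith) hθ0
    rw [Real.cos_zero] at this
    linarith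
  have hB0 : B 0 = 0 := by rw [hB']; simp
  have hB1 : B 1 = 1 := by rw [hB']; simp [hsin.ne']
  have hrec : ∀ n : ℕ, B (n + 2) = lam * B (n + 1) - B n := by
    intro n
    rw [hB', hB', hB', hlam]
    have e1 : ((n + 2 : ℕ) : ℝ) * θ = ((n + 1 : ℕ) : ℝ) * θ + θ := by push_cast; ring
    have e2 : (n : ℝ) * θ = ((n + 1 : ℕ) : ℝ) * θ - θ := by push_cast; ring
    rw [e1, e2, Real.sin_add, Real.sin_sub]
    ring
  have hB2 : B 2 = lam := by rw [hrec 0, hB0, hB1]; ring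
  have hinc : ∀ n : ℕ, n < p → B n < B (n + 1) := by
    intro n hn
    rw [hB', hB']
    apply div_lt_div_of_pos_right _ hsin
    have h1 : ((n + 1 : ℕ) : ℝ) ≤ p := by exact_mod_cast hn
    have h2 : ((n + 1 : ℕ) : ℝ) * θ ≤ p * θ := by gcongr
    have h3 : (0 : ℝ) ≤ n * θ := by positivity
    apply Real.sin_lt_sin_of_lt_of_le_pi_div_two
    · linarith
    · linarith
    · push_cast; nlinarith
  have hpos : ∀ n : ℕ, 1 ≤ n → n ≤ p → 0 < B n := by
    intro n hn
    induction n, hn using Nat.le_induction with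
    | base => intro _; rw [hB1]; norm_num
    | succ n hn ih => intro h; exact (ih (by omega)).trans (hinc n (by omega))
  obtain ⟨r, rfl⟩ : ∃ r, p = r + 1 := ⟨p - 1, by omega⟩
  have hsym : B (r + 2) = B r := by
    rw [hB', hB']
    congr 1
    have e1 : ((r + 2 : ℕ) : ℝ) * θ = Real.pi - r * θ := by
      push_cast at hpθ ⊢; linarith
    rw [e1, Real.sin_pi_sub]
  have hlamB : lam * B (r + 1) = 2 * B r := by
    have := hrec r; linarith
  apply aux_main (r + 1) hp lam hl hl2
    (fun n => (B n - B (n + 1)) / (B n - B (n - 1))) (fun n => B n / B (n + 1))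
  · simp [hB0, hB1, hB2]
  · simp only [Nat.add_sub_cancel]
    rw [show r + 1 + 1 = r + 2 from rfl, hsym]
    have := hinc r (by omega)
    exact div_self (by linarith)
  · intro n hn h
    obtain ⟨m, rfl⟩ : ∃ m, n = m + 1 := ⟨n - 1, by omega⟩
    have a := hinc m (by omega)
    have b := hinc (m + 1) h
    simp only [Nat.add_sub_cancel]
    exact div_neg_of_neg_of_pos (by linarith) (by linarith)
  · intro n hn h
    obtain ⟨m, rfl⟩ : ∃ m, n = m + 1 := ⟨n - 1, by omega⟩
    have a := hinc m (by omega)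
    have b := hinc (m + 1) h
    have c := hrec m
    have d := hrec (m + 1)
    simp only [Nat.add_sub_cancel]
    rw [show m + 1 + 1 + 1 = m + 1 + 2 from rfl, d]
    rw [show m + 1 + 1 = m + 2 from rfl] at *
    have a' : B (m + 1) - B m ≠ 0 := by linarith
    have b' : B (m + 1) - B (m + 2) ≠ 0 := by linarith
    have b'' : B (m + 2) - B (m + 1) ≠ 0 := by linarith
    rw [div_div_eq_mul_div, div_sub' b', div_eq_div_iff b' b'']
    rw [c]; ring
  · simp [hB1, hB2]
  · intro n hn h
    have a := hpos (n + 1) (by omega) (by omega)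
    have b := hpos (n + 2) (by omega) (by omega)
    rw [show n + 1 + 1 = n + 2 from rfl, sub_div' a.ne', ← hrec n, one_div_div]
  · simp only [Nat.add_sub_cancel]
    have a := hpos (r + 1) (by omega) (by omega)
    rw [div_eq_div_iff a.ne' two_ne_zero]; linarith
  · intro n hn h
    exact div_pos (hpos n hn (by omega)) (hpos (n + 1) (by omega) (by omega))
  · intro n hn h
    simp only [Nat.add_sub_cancel] at h
    have a := hpos (n + 1) (by omega) (by omega)
    rw [div_le_div_iff₀ a two_pos]
    have c := hrec n
    rcases h.eq_or_lt with rfl | h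
    · linarith
    · have d := hinc n (by omega)
      have e := hinc (n + 1) (by omega)
      rw [show n + 1 + 1 = n + 2 from rfl] at e
      linarith
  · intro z
    rw [hΩ]
    simp only [mem_iUnion, Finset.mem_Icc, mem_prod, mem_Ico, mem_Icc, exists_prop,
      Nat.add_sub_cancel]
end

section
/- Let q = 2p with p ≥ 2, λ = 2cos(π/q), 1/2 < α < 1/λ, and let Ω_α be the region of the even-index natural extension (the union ⋃_{n=1}^{2p−1} J_n × [0,H_n] described below). Then the map 𝒯_α(x,y) = (T_α(x), 1/(d(x)λ + ε(x)y)) preserves the measure on Ω_α with density (1+xy)^{−2} with respect to two-dimensional Lebesgue measure: for every Borel set A ⊆ Ω_α, ∫_{𝒯_α^{−1}(A) ∩ Ω_α} (1+xy)^{−2} dx dy = ∫_A (1+xy)^{−2} dx dy. -/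
open Set MeasureTheory

structure Dat (lam α : ℝ) (m : ℕ) (e η : ℕ → ℝ) : Prop where
  lam1 : 1 < lam
  α1 : 1 / 2 < α
  α2 : α * lam < 1
  mono : ∀ i, i < m + 3 → e i < e (i + 1)
  e0 : e 0 = (α - 1) * lam
  eN : e (m + 3) = α * lam
  eneg : e (m + 1) < 0
  epos : 0 < e (m + 2)
  g : ∀ k, k ≤ m → -1 / e k - lam = e (k + 2)
  e1 : 1 / (α * lam) - lam = e 1
  key : 1 / e (m + 2) = -1 / e (m + 1) - lam
  hrec : ∀ k, k ≤ m → η (k + 2) = 1 / (lam - η k)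
  h0 : η 0 = 1 / (lam + 1)
  h1 : η 1 = 1 / lam
  hm : η m = lam - 1
  hm1 : η (m + 1) = lam / 2
  hm2 : η (m + 2) = 1
  hle : ∀ k, k ≤ m + 2 → η k ≤ 1

def Om (m : ℕ) (e η : ℕ → ℝ) : Set (ℝ × ℝ) :=
  {z | ∃ k, k ≤ m + 2 ∧ (e k ≤ z.1 ∧ z.1 < e (k + 1)) ∧ 0 ≤ z.2 ∧ z.2 ≤ η k}

theorem dfun_eq {lam α x : ℝ} (d : ℤ) (hl : 0 < lam)
    (h1 : (α - 1) * lam ≤ |1 / x| - lam * d) (h2 : |1 / x| - lam * d < α * lam) :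
    dfun lam α x = d := by
  unfold dfun
  rw [Int.floor_eq_iff]
  have : |1 / (x * lam)| = |1 / x| / lam := by
    rw [← div_div, abs_div (1 / x), abs_of_pos hl]
  rw [this]
  constructor
  · have : (d + α - 1 : ℝ) ≤ |1 / x| / lam := by
      rw [le_div_iff₀ hl]; linarith
    linarith
  · have : |1 / x| / lam < d + α := by
      rw [div_lt_iff₀ hl]; linarith
    linarith

namespace Dat

variable {lam α : ℝ} {m : ℕ} {e η : ℕ → ℝ}

theorem lt (D : Dat lam α m e η) {i j : ℕ} (hij : i < j) (hj : j ≤ m + 3) : e i < e j := by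
  induction j with
  | zero => omega
  | succ j ih =>
    rcases Nat.lt_succ_iff_lt_or_eq.1 hij with h | h
    · exact (ih h (by omega)).trans (D.mono j (by omega))
    · subst h; exact D.mono i (by omega)

theorem le (D : Dat lam α m e η) {i j : ℕ} (hij : i ≤ j) (hj : j ≤ m + 3) : e i ≤ e j := by
  rcases hij.lt_or_eq with h | h
  · exact (D.lt h hj).le
  · rw [h]

theorem uniq (D : Dat lam α m e η) {x : ℝ} {i j : ℕ} (hi : i ≤ m + 2) (hj : j ≤ m + 2)
    (h1 : e i ≤ x) (h2 : x < e (i + 1)) (h3 : e j ≤ x) (h4 : x < e (j + 1)) : i = j := by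
  rcases lt_trichotomy i j with h | h | h
  · have := D.le (show i + 1 ≤ j from h) (by omega); linarith
  · exact h
  · have := D.le (show j + 1 ≤ i from h) (by omega); linarith

theorem hgt (D : Dat lam α m e η) {z : ℝ × ℝ} (hz : z ∈ Om m e η) {i : ℕ} (hi : i ≤ m + 2)
    (h1 : e i ≤ z.1) (h2 : z.1 < e (i + 1)) : z.2 ≤ η i := by
  obtain ⟨k, hk, ⟨h3, h4⟩, _, h5⟩ := hz
  rw [D.uniq hi hk h1 h2 h3 h4]; exact h5

theorem rng (D : Dat lam α m e η) {z : ℝ × ℝ} (hz : z ∈ Om m e η) :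
    (α - 1) * lam ≤ z.1 ∧ z.1 < α * lam ∧ 0 ≤ z.2 ∧ z.2 ≤ 1 := by
  obtain ⟨k, hk, ⟨h3, h4⟩, h0, h5⟩ := hz
  refine ⟨?_, ?_, h0, h5.trans (D.hle k hk)⟩
  · rw [← D.e0]; exact (D.le (Nat.zero_le k) (by omega)).trans h3
  · rw [← D.eN]; exact h4.trans_le (D.le (by omega) le_rfl)

theorem ex (_D : Dat lam α m e η) {x : ℝ} (h1 : e 0 ≤ x) (h2 : x < e (m + 3)) :
    ∃ k, k ≤ m + 2 ∧ e k ≤ x ∧ x < e (k + 1) := by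
  by_contra hc
  push Not at hc
  have : ∀ k, k ≤ m + 3 → e k ≤ x := by
    intro k
    induction k with
    | zero => intro _; exact h1
    | succ k ih => intro hk; exact hc k (by omega) (ih (by omega))
  exact absurd (this _ le_rfl) (not_le.2 h2)

/-- digit is at least one -/
theorem dig (D : Dat lam α m e η) {z : ℝ × ℝ} (hz : z ∈ Om m e η) (hx : z.1 ≠ 0) :
    1 ≤ dfun lam α z.1 := by
  obtain ⟨h1, h2, -, -⟩ := D.rng hz
  have hl := D.lam1
  have ha := D.α1
  have ha2 := D.α2
  unfold dfun
  rw [Int.le_floor]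
  have hx' : 0 < |z.1| := abs_pos.2 hx
  have h3 : |z.1| ≤ α * lam := by
    rw [abs_le]; constructor <;> nlinarith
  have : α ≤ |1 / (z.1 * lam)| := by
    rw [abs_div, abs_one, abs_mul, abs_of_pos (by linarith : 0 < lam), le_div_iff₀ (by positivity)]
    have : α * (|z.1| * lam) ≤ (α * lam) * (α * lam) := by nlinarith
    nlinarith
  push_cast; linarith

theorem low (D : Dat lam α m e η) {x : ℝ} (hx : x < 0) (h : (α + 1) * lam ≤ -1 / x) :
    e m < x := by
  have h1 := D.g m le_rfl
  have h2 := D.mono (m + 2) (by omega)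
  rw [show m + 2 + 1 = m + 3 from rfl, D.eN] at h2
  have h3 : e m < 0 := (D.mono m (by omega)).trans D.eneg
  have h4 : -1 / e m < -1 / x := by nlinarith
  rw [neg_div, neg_div, neg_lt_neg_iff, one_div_lt_one_div_of_neg hx h3] at h4
  exact h4

theorem inj (D : Dat lam α m e η) {z₁ z₂ : ℝ × ℝ} (hz₁ : z₁ ∈ Om m e η) (hz₂ : z₂ ∈ Om m e η)
    (hx₁ : z₁.1 ≠ 0) (hx₂ : z₂.1 ≠ 0) (hx₃ : z₁.1 ≠ e (m + 1)) (hx₄ : z₂.1 ≠ e (m + 1))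
    (hy₁ : z₁.2 ≠ 0) (hy₃ : z₁.2 ≠ 1) (hy₅ : z₁.2 ≠ lam / 2) 
    (hy₂ : z₂.2 ≠ 0) (hy₄ : z₂.2 ≠ 1) (hy₆ : z₂.2 ≠ lam / 2) 
    (h : Tnat lam α z₁ = Tnat lam α z₂) : z₁ = z₂ := by
  wlog hs : z₂.1 < 0 ∨ 0 < z₁.1 generalizing z₁ z₂
  · push Not at hs
    have a1 := lt_of_le_of_ne hs.1 hx₂.symm
    exact (this hz₂ hz₁ hx₂ hx₁ hx₄ hx₃ hy₂ hy₄ hy₆ hy₁ hy₃ hy₅ h.symm (Or.inr a1)).symm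
  have hl := D.lam1
  have hd₁ := D.dig hz₁ hx₁
  have hd₂ := D.dig hz₂ hx₂
  obtain ⟨-, -, y10, y11⟩ := D.rng hz₁
  obtain ⟨-, -, y20, y21⟩ := D.rng hz₂
  have y10 := lt_of_le_of_ne y10 hy₁.symm
  have y20 := lt_of_le_of_ne y20 hy₂.symm
  have hfl : dfun lam α z₂.1 ≤ |1 / (z₂.1 * lam)| + 1 - α := Int.floor_le _
  obtain ⟨x₁, y₁⟩ := z₁
  obtain ⟨x₂, y₂⟩ := z₂
  simp only [Tnat, Tmap, Prod.mk.injEq, one_div, inv_inj] at *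
  rw [if_neg hx₁, if_neg hx₂] at h
  generalize dfun lam α x₁ = d₁ at *
  generalize dfun lam α x₂ = d₂ at *
  obtain ⟨hT, hY⟩ := h
  have cast : ∀ {a b : ℤ}, (a : ℝ) * lam < (b + 1) * lam → a ≤ b := by
    intro a b hab
    have : (a : ℝ) < b + 1 := lt_of_mul_lt_mul_right hab (by linarith)
    have : a < b + 1 := by exact_mod_cast this
    omega
  rcases hx₁.lt_or_gt with s1 | s1 <;> rcases hx₂.lt_or_gt with s2 | s2
  · rw [Real.sign_of_neg s1, Real.sign_of_neg s2] at hY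
    have : d₁ = d₂ := le_antisymm (cast (by linarith)) (cast (by linarith))
    subst this
    rw [abs_of_neg (inv_lt_zero.2 s1), abs_of_neg (inv_lt_zero.2 s2)] at hT
    have : x₁ = x₂ := inv_injective (by linarith)
    exact ⟨this, by linarith⟩
  · rcases hs with h | h <;> linarith
  · rw [Real.sign_of_pos s1, Real.sign_of_neg s2] at hY
    rw [abs_of_pos (inv_pos.2 s1), abs_of_neg (inv_lt_zero.2 s2)] at hT
    exfalso
    have a1 : d₁ ≤ d₂ := cast (by linarith)
    have a2 : d₂ ≤ d₁ + 1 := cast (by push_cast; linarith)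
    have a3 : d₁ ≠ d₂ := by rintro rfl; linarith
    have a4 : d₂ = d₁ + 1 := by omega
    subst a4
    push_cast at hY hT hfl
    have hd1 : (1 : ℝ) ≤ d₁ := by exact_mod_cast hd₁
    have hinv : |(x₂ * lam)⁻¹| = (-x₂⁻¹) / lam := by
      rw [abs_inv, abs_mul, abs_of_neg s2, abs_of_pos (by linarith : 0 < lam), mul_inv, inv_neg]
      rfl
    have low := D.low s2 (by
      rw [hinv] at hfl
      have : α + 1 ≤ -x₂⁻¹ / lam := by linarith
      rw [le_div_iff₀ (by linarith)] at this
      rw [neg_div, one_div]; exact this)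
    have hk := D.key
    rw [neg_div, one_div, one_div] at hk
    have hee := D.mono (m + 1) (by omega)
    rcases lt_or_ge x₁ (e (m + 2)) with c | c
    · have b1 := D.hgt hz₁ (i := m + 1) (by omega) (D.eneg.trans s1).le c
      have : (e (m+2))⁻¹ < x₁⁻¹ := inv_strictAnti₀ s1 c
      have : x₂⁻¹ < (e (m+1))⁻¹ := by linarith
      have : e (m + 1) < x₂ := (inv_lt_inv_of_neg s2 D.eneg).1 this
      have b2 := D.hgt hz₂ (i := m + 1) (by omega) this.le (s2.trans D.epos)
      rw [D.hm1] at b1 b2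
      exact hy₅ (by simp only at b1 b2; linarith)
    · have b1 := D.hgt hz₁ (i := m + 2) (by omega) c (by rw [D.eN]; exact (D.rng hz₁).2.1)
      have : x₁⁻¹ ≤ (e (m+2))⁻¹ := inv_anti₀ D.epos c
      have : (e (m+1))⁻¹ ≤ x₂⁻¹ := by linarith
      have : x₂ ≤ e (m + 1) := (inv_le_inv_of_neg D.eneg s2).1 this
      have := lt_of_le_of_ne this hx₄
      have b2 := D.hgt hz₂ (i := m) (by omega) low.le this
      rw [D.hm2] at b1
      rw [D.hm] at b2
      exact hy₃ (by simp only at b1 b2; linarith)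
  · rw [Real.sign_of_pos s1, Real.sign_of_pos s2] at hY
    have : d₁ = d₂ := le_antisymm (cast (by linarith)) (cast (by linarith))
    subst this
    rw [abs_of_pos (inv_pos.2 s1), abs_of_pos (inv_pos.2 s2)] at hT
    have : x₁ = x₂ := inv_injective (by linarith)
    exact ⟨this, by linarith⟩

theorem pre_pos (D : Dat lam α m e η) {w : ℝ × ℝ} (hw : w ∈ Om m e η) (d : ℤ) (y : ℝ)
    (hp : 0 < w.1 + d * lam) (hy : 1 / w.2 = d * lam + y)
    (hO : (1 / (w.1 + d * lam), y) ∈ Om m e η) : ∃ z ∈ Om m e η, Tnat lam α z = w := by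
  refine ⟨_, hO, ?_⟩
  obtain ⟨h1, h2, -, -⟩ := D.rng hw
  have hl := D.lam1
  have hx : 0 < 1 / (w.1 + d * lam) := by positivity
  have h3 : |1 / (1 / (w.1 + d * lam))| = w.1 + d * lam := by rw [one_div_one_div, abs_of_pos hp]
  have hd : dfun lam α (1 / (w.1 + d * lam)) = d :=
    dfun_eq d (by linarith) (by rw [h3]; linarith) (by rw [h3]; linarith)
  obtain ⟨x', y'⟩ := w
  simp only [Tnat, Tmap, Prod.mk.injEq, hd, if_neg hx.ne', h3, Real.sign_of_pos hx] at *
  refine ⟨by ring, ?_⟩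
  rw [one_mul, ← hy, one_div_one_div]

theorem pre_neg (D : Dat lam α m e η) {w : ℝ × ℝ} (hw : w ∈ Om m e η) (d : ℤ) (y : ℝ)
    (hp : 0 < w.1 + d * lam) (hy : 1 / w.2 = d * lam - y)
    (hO : (-1 / (w.1 + d * lam), y) ∈ Om m e η) : ∃ z ∈ Om m e η, Tnat lam α z = w := by
  refine ⟨_, hO, ?_⟩
  obtain ⟨h1, h2, -, -⟩ := D.rng hw
  have hl := D.lam1
  have hx : -1 / (w.1 + d * lam) < 0 := by
    rw [neg_div]; have : 0 < 1 / (w.1 + d * lam) := by positivity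
    linarith
  have h3 : |1 / (-1 / (w.1 + d * lam))| = w.1 + d * lam := by
    rw [neg_div, one_div_neg_eq_neg_one_div, one_div_one_div, abs_neg, abs_of_pos hp]
  have hd : dfun lam α (-1 / (w.1 + d * lam)) = d :=
    dfun_eq d (by linarith) (by rw [h3]; linarith) (by rw [h3]; linarith)
  obtain ⟨x', y'⟩ := w
  simp only [Tnat, Tmap, Prod.mk.injEq, hd, if_neg hx.ne, h3, Real.sign_of_neg hx] at *
  refine ⟨by ring, ?_⟩
  rw [neg_one_mul, ← sub_eq_add_neg, ← hy, one_div_one_div]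

theorem surj (D : Dat lam α m e η) {w : ℝ × ℝ} (hw : w ∈ Om m e η)
    (hy0 : w.2 ≠ 0) (hx1 : w.1 ≠ e 1)
    (hxk : ∀ d : ℤ, w.1 + d * lam ≠ 1 / e (m + 2)) :
    ∃ z ∈ Om m e η, Tnat lam α z = w := by
  have hl := D.lam1
  have hl0 : 0 < lam := by linarith
  have ha := D.α1
  obtain ⟨r1, r2, r3, -⟩ := D.rng hw
  have r3 : 0 < w.2 := lt_of_le_of_ne r3 hy0.symm
  have hal : 0 < α * lam := by positivity
  have hp : ∀ d : ℤ, 1 ≤ d → 0 < w.1 + d * lam := by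
    intro d hd
    have : (1 : ℝ) ≤ d := by exact_mod_cast hd
    nlinarith
  have hk := D.key
  have em1 := D.eneg
  have em2 := D.epos
  have emm := D.mono (m + 1) (by omega)
  have emN := D.mono (m + 2) (by omega)
  rw [show m + 2 + 1 = m + 3 from rfl, D.eN] at emN
  rcases lt_or_ge (1 / lam) w.2 with c | c
  · have hw' := hw
    obtain ⟨k, hk', ⟨h3, h4⟩, -, h5⟩ := hw'
    have hk0 : k ≠ 0 := by
      rintro rfl
      rw [D.h0] at h5
      have : 1 / (lam + 1) ≤ 1 / lam := one_div_le_one_div_of_le hl0 (by linarith)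
      linarith
    have hk1 : k ≠ 1 := by
      rintro rfl
      rw [D.h1] at h5
      linarith
    obtain ⟨j, rfl⟩ : ∃ j, k = j + 2 := ⟨k - 2, by omega⟩
    have hjm : j ≤ m := by omega
    have hpp := hp 1 le_rfl
    have ej : e j < 0 := (D.lt (by omega : j < m + 1) (by omega)).trans em1
    have ej1 : e (j + 1) < 0 := (D.le (by omega : j + 1 ≤ m + 1) (by omega)).trans_lt em1
    refine D.pre_neg hw 1 (lam - 1 / w.2) hpp (by push_cast; ring) ⟨j, by omega, ⟨?_, ?_⟩, ?_, ?_⟩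
    · rw [← D.g j hjm] at h3
      have : -1 / e j ≤ w.1 + (1 : ℤ) * lam := by push_cast; linarith
      rw [div_le_iff_of_neg ej] at this
      show e j ≤ -1 / _
      rw [le_div_iff₀ hpp]; linarith
    · have : w.1 + (1 : ℤ) * lam < -1 / e (j + 1) := by
        push_cast
        rcases hjm.lt_or_eq with h | h
        · have := D.g (j + 1) h
          rw [show j + 1 + 2 = j + 2 + 1 from rfl] at this
          linarith
        · subst h
          have : 1 < 1 / e (j + 2) := by
            rw [lt_div_iff₀ em2]; linarith [D.α2]
          linarith [D.α2]
      rw [lt_div_iff_of_neg ej1] at this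
      show -1 / _ < e (j + 1)
      rw [div_lt_iff₀ hpp]; linarith
    · show 0 ≤ lam - 1 / w.2
      have : 1 / w.2 ≤ lam := by
        rw [div_le_iff₀ r3]; rw [div_lt_iff₀ hl0] at c; linarith
      linarith
    · show lam - 1 / w.2 ≤ η j
      rw [D.hrec j hjm] at h5
      have h6 := D.hle j (by omega)
      have h7 : 0 < lam - η j := by linarith
      rw [le_div_iff₀ h7] at h5
      have : lam - η j ≤ 1 / w.2 := by rw [le_div_iff₀ r3]; linarith
      linarith
  · set W := 1 / w.2 with hW
    have hWl : lam ≤ W := by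
      rw [hW, le_div_iff₀ r3]; rw [le_div_iff₀ hl0] at c; linarith
    obtain ⟨d, hd⟩ : ∃ d : ℤ, d = ⌊W / lam⌋ := ⟨_, rfl⟩
    have hd1 : 1 ≤ d := by
      rw [hd, Int.le_floor, le_div_iff₀ hl0]; push_cast; linarith
    have hdl : d * lam ≤ W := by
      rw [← le_div_iff₀ hl0, hd]; exact Int.floor_le _
    have hdu : W < (d + 1) * lam := by
      rw [← div_lt_iff₀ hl0, hd]; exact Int.lt_floor_add_one _
    have hdr : (1 : ℝ) ≤ d := by exact_mod_cast hd1
    have pd := hp d hd1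
    have pd1 := hp (d + 1) (by omega)
    push_cast at pd1
    -- facts on the points
    have hneglow : e m < -1 / (w.1 + (d + 1) * lam) := by
      apply D.low
      · rw [neg_div]; have : 0 < 1 / (w.1 + (d + 1) * lam) := by positivity
        linarith
      · rw [div_div_eq_mul_div]; nlinarith
    have hxpos : 0 < 1 / (w.1 + d * lam) := by positivity
    have hxneg : -1 / (w.1 + (d + 1) * lam) < 0 := by
      rw [neg_div]; have : 0 < 1 / (w.1 + (d + 1) * lam) := by positivity
      linarith
    have hposlt : e 1 < w.1 ∨ 1 < d → 1 / (w.1 + d * lam) < α * lam := by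
      intro h
      rw [div_lt_iff₀ pd]
      rw [← D.e1] at h
      rcases h with h | h
      · have : 1 / (α * lam) < w.1 + d * lam := by nlinarith
        rw [div_lt_iff₀ hal] at this
        linarith
      · have : (2 : ℝ) ≤ d := by exact_mod_cast h
        have h2 := D.e1
        have h3 := D.lt (show 1 < m + 3 by omega) le_rfl
        rw [D.eN, ← D.e1] at h3
        have : 1 / (α * lam) < w.1 + d * lam := by nlinarith
        rw [div_lt_iff₀ hal] at this
        linarith
    rcases lt_or_gt_of_ne (hxk d) with t | t
    · -- heights 1 and lam - 1
      have n1 : -1 / (w.1 + (d + 1) * lam) < e (m + 1) := by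
        have : w.1 + (d + 1) * lam < -1 / e (m + 1) := by linarith
        rw [lt_div_iff_of_neg em1] at this
        rw [div_lt_iff₀ pd1]; linarith
      have p1 : e (m + 2) ≤ 1 / (w.1 + d * lam) := by
        rw [lt_div_iff₀ em2] at t
        rw [le_div_iff₀ pd]; linarith
      have useneg : lam + 1 ≤ W - (d - 1) * lam → ∃ z ∈ Om m e η, Tnat lam α z = w := by
        intro h
        refine D.pre_neg hw (d + 1) ((d + 1) * lam - W) (by push_cast; exact pd1)
          (by push_cast; ring) ⟨m, by omega, ⟨?_, ?_⟩, ?_, ?_⟩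
        · push_cast; exact hneglow.le
        · push_cast; exact n1
        · show 0 ≤ (d + 1) * lam - W
          linarith
        · show (d + 1) * lam - W ≤ η m
          rw [D.hm]; linarith
      by_cases hpc : e 1 < w.1 ∨ 1 < d
      · by_cases hc : W - d * lam ≤ 1
        · refine D.pre_pos hw d (W - d * lam) pd (by ring) ⟨m + 2, by omega, ⟨p1, ?_⟩, ?_, ?_⟩
          · rw [D.eN]; exact hposlt hpc
          · show 0 ≤ W - d * lam
            linarith
          · show W - d * lam ≤ η (m + 2)
            rw [D.hm2]; exact hc
        · apply useneg; linarith
      · push Not at hpc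
        have hd' : d = 1 := by omega
        have hx := lt_of_le_of_ne hpc.1 hx1
        have h5 := D.hgt hw (i := 0) (by omega) (by rw [D.e0]; exact r1) hx
        rw [D.h0, le_div_iff₀ (by linarith)] at h5
        apply useneg
        rw [hd', hW]; push_cast
        have : lam + 1 ≤ 1 / w.2 := by rw [le_div_iff₀ r3]; linarith
        linarith
    · have n1 : e (m + 1) ≤ -1 / (w.1 + (d + 1) * lam) := by
        have : -1 / e (m + 1) < w.1 + (d + 1) * lam := by linarith
        rw [div_lt_iff_of_neg em1] at this
        rw [le_div_iff₀ pd1]; linarith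
      have p1 : 1 / (w.1 + d * lam) < e (m + 2) := by
        rw [div_lt_iff₀ em2] at t
        rw [div_lt_iff₀ pd]; linarith
      by_cases hc : W - d * lam ≤ lam / 2
      · refine D.pre_pos hw d (W - d * lam) pd (by ring)
          ⟨m + 1, by omega, ⟨(em1.trans hxpos).le, p1⟩, ?_, ?_⟩
        · show 0 ≤ W - d * lam
          linarith
        · show W - d * lam ≤ η (m + 1)
          rw [D.hm1]; exact hc
      · refine D.pre_neg hw (d + 1) ((d + 1) * lam - W) (by push_cast; exact pd1)
          (by push_cast; ring) ⟨m + 1, by omega, ⟨?_, ?_⟩, ?_, ?_⟩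
        · push_cast; exact n1
        · push_cast; exact hxneg.trans em2
        · show 0 ≤ (d + 1) * lam - W
          linarith
        · show (d + 1) * lam - W ≤ η (m + 1)
          rw [D.hm1]; linarith

end Dat

theorem det_aux (a b : ℝ) :
    ((ContinuousLinearMap.toSpanSingleton ℝ a).prodMap
      (ContinuousLinearMap.toSpanSingleton ℝ b) : ℝ × ℝ →L[ℝ] ℝ × ℝ).det = a * b := by
  have h : ∀ c : ℝ, LinearMap.det
      ((ContinuousLinearMap.toSpanSingleton ℝ c : ℝ →L[ℝ] ℝ) : ℝ →ₗ[ℝ] ℝ) = c := by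
    intro c
    have : ((ContinuousLinearMap.toSpanSingleton ℝ c : ℝ →L[ℝ] ℝ) : ℝ →ₗ[ℝ] ℝ)
        = c • LinearMap.id := by
      ext; simp
    rw [this, LinearMap.det_smul]; simp
  rw [ContinuousLinearMap.det]
  have : (((ContinuousLinearMap.toSpanSingleton ℝ a).prodMap
      (ContinuousLinearMap.toSpanSingleton ℝ b) : ℝ × ℝ →L[ℝ] ℝ × ℝ) : ℝ × ℝ →ₗ[ℝ] ℝ × ℝ)
      = LinearMap.prodMap ((ContinuousLinearMap.toSpanSingleton ℝ a : ℝ →L[ℝ] ℝ) : ℝ →ₗ[ℝ] ℝ)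
        ((ContinuousLinearMap.toSpanSingleton ℝ b : ℝ →L[ℝ] ℝ) : ℝ →ₗ[ℝ] ℝ) := rfl
  rw [this, LinearMap.det_prodMap, h, h]

noncomputable def dA (z : ℝ × ℝ) : ℝ := -Real.sign z.1 / z.1 ^ 2

noncomputable def dB (lam α : ℝ) (z : ℝ × ℝ) : ℝ :=
  -Real.sign z.1 / ((dfun lam α z.1 : ℝ) * lam + Real.sign z.1 * z.2) ^ 2

theorem Tnat_deriv {lam α : ℝ} (hl : 0 < lam) {z : ℝ × ℝ} (hx : z.1 ≠ 0)
    (hn : ∀ k : ℤ, |1 / (z.1 * lam)| + 1 - α ≠ k)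
    (hD : (dfun lam α z.1 : ℝ) * lam + Real.sign z.1 * z.2 ≠ 0) :
    HasFDerivAt (Tnat lam α) ((ContinuousLinearMap.toSpanSingleton ℝ (dA z)).prodMap
      (ContinuousLinearMap.toSpanSingleton ℝ (dB lam α z))) z := by
  have e1 : ∀ᶠ x in nhds z.1, dfun lam α x = dfun lam α z.1 := by
    have hc : ContinuousAt (fun x : ℝ => |1 / (x * lam)| + 1 - α) z.1 := by
      have : z.1 * lam ≠ 0 := mul_ne_zero hx hl.ne'
      fun_prop (disch := assumption)
    have l1 : (dfun lam α z.1 : ℝ) < |1 / (z.1 * lam)| + 1 - α :=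
      lt_of_le_of_ne (Int.floor_le _) (hn _).symm
    have l2 : |1 / (z.1 * lam)| + 1 - α < (dfun lam α z.1 : ℝ) + 1 := Int.lt_floor_add_one _
    filter_upwards [hc.eventually_const_lt l1, hc.eventually_lt_const l2] with x h1 h2
    exact Int.floor_eq_iff.2 ⟨h1.le, h2⟩
  have e2 : ∀ᶠ x in nhds z.1, x ≠ 0 ∧ Real.sign x = Real.sign z.1
      ∧ |1 / x| = Real.sign z.1 / x := by
    rcases hx.lt_or_gt with h | h
    · filter_upwards [eventually_lt_nhds h] with x hx
      refine ⟨hx.ne, by rw [Real.sign_of_neg hx, Real.sign_of_neg h], ?_⟩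
      rw [Real.sign_of_neg h, abs_of_neg (one_div_neg.2 hx), neg_div]
    · filter_upwards [eventually_gt_nhds h] with x hx
      refine ⟨hx.ne', by rw [Real.sign_of_pos hx, Real.sign_of_pos h], ?_⟩
      rw [Real.sign_of_pos h, abs_of_pos (one_div_pos.2 hx)]
  have e3 : Tnat lam α =ᶠ[nhds z] Prod.map
      (fun x => Real.sign z.1 / x - lam * (dfun lam α z.1 : ℝ))
      (fun y => 1 / ((dfun lam α z.1 : ℝ) * lam + Real.sign z.1 * y)) := by
    have hc : Filter.Tendsto Prod.fst (nhds z) (nhds z.1) := continuous_fst.continuousAt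
    filter_upwards [hc.eventually e1, hc.eventually e2] with w h1 h2
    simp only [Tnat, Tmap, if_neg h2.1, h1, h2.2.1, h2.2.2, Prod.map]
  refine HasFDerivAt.congr_of_eventuallyEq ?_ e3
  apply HasFDerivAt.prodMap
  · have : HasDerivAt (fun x => Real.sign z.1 / x - lam * (dfun lam α z.1 : ℝ)) (dA z) z.1 := by
      have := ((hasDerivAt_inv hx).const_mul (Real.sign z.1)).sub_const
        (lam * (dfun lam α z.1 : ℝ))
      have h2 : Real.sign z.1 * -(z.1 ^ 2)⁻¹ = dA z := by unfold dA; ring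
      rw [h2] at this
      exact this
    exact this.hasFDerivAt
  · have : HasDerivAt (fun y => 1 / ((dfun lam α z.1 : ℝ) * lam + Real.sign z.1 * y))
        (dB lam α z) z.2 := by
      have := (((hasDerivAt_id z.2).const_mul (Real.sign z.1)).const_add
        ((dfun lam α z.1 : ℝ) * lam)).inv hD
      simp only [one_div]
      have h2 : -(Real.sign z.1 * 1) / ((dfun lam α z.1 : ℝ) * lam + Real.sign z.1 * id z.2) ^ 2
          = dB lam α z := by unfold dB; simp
      rw [h2] at this
      exact this
    exact this.hasFDerivAt

theorem dens_eq {lam α : ℝ} {z : ℝ × ℝ} (hx : z.1 ≠ 0)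
    (hD : (dfun lam α z.1 : ℝ) * lam + Real.sign z.1 * z.2 ≠ 0) :
    |dA z * dB lam α z| • (1 / (1 + (Tnat lam α z).1 * (Tnat lam α z).2) ^ 2)
      = 1 / (1 + z.1 * z.2) ^ 2 := by
  obtain ⟨x, y⟩ := z
  simp only [dA, dB, Tnat, Tmap, if_neg hx] at *
  generalize (dfun lam α x : ℝ) = d at *
  have key : ∀ s : ℝ, s * s = 1 → d * lam + s * y ≠ 0 →
      |-s / x ^ 2 * (-s / (d * lam + s * y) ^ 2)| •
      (1 / (1 + (s / x - lam * d) * (1 / (d * lam + s * y))) ^ 2) = 1 / (1 + x * y) ^ 2 := by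
    intro s hs hD
    have h1 : -s / x ^ 2 * (-s / (d * lam + s * y) ^ 2) = 1 / (x * (d * lam + s * y)) ^ 2 := by
      rw [div_mul_div_comm, neg_mul_neg, hs, mul_pow]
    have h2 : 1 + (s / x - lam * d) * (1 / (d * lam + s * y))
        = s * (1 + x * y) / (x * (d * lam + s * y)) := by
      generalize hW : d * lam + s * y = W at *
      have : lam * d = W - s * y := by linarith
      rw [this]; field_simp; ring
    rw [h1, h2, abs_of_nonneg (by positivity), smul_eq_mul, div_pow, mul_pow s, pow_two s, hs,
      one_mul, one_div_div, one_div_mul_eq_div, div_div_cancel_left' (by positivity), one_div]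
  rcases hx.lt_or_gt with h | h
  · rw [Real.sign_of_neg h, abs_of_neg (one_div_neg.2 h)] at *
    rw [← neg_div]
    exact key (-1) (by norm_num) hD
  · rw [Real.sign_of_pos h, abs_of_pos (one_div_pos.2 h)] at *
    exact key 1 (by norm_num) hD

theorem meas_sign : Measurable Real.sign := by
  unfold Real.sign
  exact Measurable.ite measurableSet_Iio measurable_const
    (Measurable.ite measurableSet_Ioi measurable_const measurable_const)

theorem meas_dfun (lam α : ℝ) : Measurable (fun x => (dfun lam α x : ℝ)) := by
  unfold dfun
  have : Measurable fun x : ℝ => |1 / (x * lam)| + 1 - α := by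
    have : Measurable fun x : ℝ => |1 / (x * lam)| :=
      measurable_abs.comp (by fun_prop)
    fun_prop
  exact (measurable_from_top (f := fun k : ℤ => (k : ℝ))).comp this.floor

theorem meas_Tnat (lam α : ℝ) : Measurable (Tnat lam α) := by
  have h1 := meas_dfun lam α
  have h2 := meas_sign
  have h3 : Measurable (Tmap lam α) := by
    unfold Tmap
    refine Measurable.ite (measurableSet_singleton 0) measurable_const ?_
    have : Measurable fun x : ℝ => |1 / x| := measurable_abs.comp (by fun_prop)
    fun_prop
  unfold Tnat
  refine (h3.comp measurable_fst).prodMk ?_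
  have h4 : Measurable fun z : ℝ × ℝ => (dfun lam α z.1 : ℝ) := h1.comp measurable_fst
  have h5 : Measurable fun z : ℝ × ℝ => Real.sign z.1 := h2.comp measurable_fst
  have h6 : Measurable fun z : ℝ × ℝ =>
      ((dfun lam α z.1 : ℝ) * lam + Real.sign z.1 * z.2) :=
    (h4.mul_const lam).add (h5.mul measurable_snd)
  simp only [one_div]
  exact h6.inv

theorem null_cross {C D : Set ℝ} (hC : C.Countable) (hD : D.Countable) :
    volume {z : ℝ × ℝ | z.1 ∈ C ∨ z.2 ∈ D} = 0 := by
  have : {z : ℝ × ℝ | z.1 ∈ C ∨ z.2 ∈ D} = (C ×ˢ univ) ∪ (univ ×ˢ D) := by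
    ext z; simp
  rw [this]
  refine measure_union_null ?_ ?_
  · rw [Measure.volume_eq_prod, Measure.prod_prod, hC.measure_zero, zero_mul]
  · rw [Measure.volume_eq_prod, Measure.prod_prod, hD.measure_zero, mul_zero]

theorem bad_countable (lam α : ℝ) (hl : 0 < lam) :
    {x : ℝ | ∃ k : ℤ, |1 / (x * lam)| + 1 - α = k}.Countable := by
  have : {x : ℝ | ∃ k : ℤ, |1 / (x * lam)| + 1 - α = k} ⊆
      (⋃ k : ℤ, {1 / ((k - 1 + α) * lam)}) ∪ (⋃ k : ℤ, {-(1 / ((k - 1 + α) * lam))}) := by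
    rintro x ⟨k, hk⟩
    have h : |1 / (x * lam)| = k - 1 + α := by linarith
    have h2 : |x| = 1 / ((k - 1 + α) * lam) := by
      rw [← h, abs_div, abs_one, abs_mul, abs_of_pos hl, one_div_mul_eq_div, one_div_div]
      field_simp
    rcases abs_choice x with h3 | h3
    · left; exact mem_iUnion.2 ⟨k, by rw [mem_singleton_iff, ← h2, h3]⟩
    · right; exact mem_iUnion.2 ⟨k, by rw [mem_singleton_iff, ← h2, h3, neg_neg]⟩
  refine Countable.mono this (Countable.union ?_ ?_) <;>
  exact countable_iUnion fun k => countable_singleton _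

theorem meas_Om (m : ℕ) (e η : ℕ → ℝ) : MeasurableSet (Om m e η) := by
  have : Om m e η = ⋃ k ∈ Finset.range (m + 3), Ico (e k) (e (k + 1)) ×ˢ Icc 0 (η k) := by
    ext z
    simp only [Om, mem_ofPred_eq, mem_iUnion, Finset.mem_range, mem_prod, mem_Ico, mem_Icc,
      exists_prop, Nat.lt_succ_iff]
  rw [this]
  exact Finset.measurableSet_biUnion _ fun k _ => measurableSet_Ico.prod measurableSet_Icc

theorem Dat.main {lam α : ℝ} {m : ℕ} {e η : ℕ → ℝ} (D : Dat lam α m e η)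
    (A : Set (ℝ × ℝ)) (hA : MeasurableSet A) (hAO : A ⊆ Om m e η) :
    ∫ z in (Tnat lam α) ⁻¹' A ∩ Om m e η, 1 / (1 + z.1 * z.2) ^ 2
        = ∫ z in A, 1 / (1 + z.1 * z.2) ^ 2 := by
  have hl := D.lam1
  have hl0 : 0 < lam := by linarith
  set C : Set ℝ := {x : ℝ | ∃ k : ℤ, |1 / (x * lam)| + 1 - α = k} ∪ {0, e (m + 1)} with hC
  set E : Set ℝ := {0, 1, lam / 2} with hE
  have cC : C.Countable := (bad_countable lam α hl0).union (Set.toFinite _).countable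
  have cE : E.Countable := (Set.toFinite _).countable
  set N : Set (ℝ × ℝ) := {z | z.1 ∈ C ∨ z.2 ∈ E} with hN
  have nN : volume N = 0 := null_cross cC cE
  have mN : MeasurableSet N :=
    (measurable_fst cC.measurableSet).union (measurable_snd cE.measurableSet)
  set s : Set (ℝ × ℝ) := ((Tnat lam α) ⁻¹' A ∩ Om m e η) \ N with hs
  have ms : MeasurableSet s := (((meas_Tnat lam α) hA).inter (meas_Om m e η)).diff mN
  have hx : ∀ z ∈ s, z.1 ≠ 0 := fun z hz h => hz.2 (Or.inl (Or.inr (by simp [h])))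
  have hD : ∀ z ∈ s, (dfun lam α z.1 : ℝ) * lam + Real.sign z.1 * z.2 ≠ 0 := by
    intro z hz
    have h1 : (1 : ℝ) ≤ dfun lam α z.1 := by exact_mod_cast D.dig hz.1.2 (hx z hz)
    obtain ⟨-, -, h2, h3⟩ := D.rng hz.1.2
    rcases (hx z hz).lt_or_gt with h | h
    · rw [Real.sign_of_neg h]; nlinarith
    · rw [Real.sign_of_pos h]; nlinarith
  have hinj : InjOn (Tnat lam α) s := by
    intro z hz w hw h
    have a1 : ∀ z ∈ s, z.1 ≠ e (m + 1) := fun z hz h => hz.2 (Or.inl (Or.inr (by simp [h])))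
    have a2 : ∀ z ∈ s, z.2 ≠ 0 := fun z hz h => hz.2 (Or.inr (by simp [hE, h]))
    have a3 : ∀ z ∈ s, z.2 ≠ 1 := fun z hz h => hz.2 (Or.inr (by simp [hE, h]))
    have a4 : ∀ z ∈ s, z.2 ≠ lam / 2 := fun z hz h => hz.2 (Or.inr (by simp [hE, h]))
    exact D.inj hz.1.2 hw.1.2 (hx z hz) (hx w hw) (a1 z hz) (a1 w hw) (a2 z hz) (a3 z hz)
      (a4 z hz) (a2 w hw) (a3 w hw) (a4 w hw) h
  have hcv := integral_image_eq_integral_abs_det_fderiv_smul volume ms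
    (f := Tnat lam α) (f' := fun z => (ContinuousLinearMap.toSpanSingleton ℝ (dA z)).prodMap
      (ContinuousLinearMap.toSpanSingleton ℝ (dB lam α z)))
    (fun z hz => (Tnat_deriv hl0 (hx z hz) (fun k hk => hz.2 (Or.inl (Or.inl ⟨k, hk⟩)))
      (hD z hz)).hasFDerivWithinAt) hinj (fun z => 1 / (1 + z.1 * z.2) ^ 2)
  have h1 : ∫ z in (Tnat lam α) ⁻¹' A ∩ Om m e η, 1 / (1 + z.1 * z.2) ^ 2
      = ∫ z in s, 1 / (1 + z.1 * z.2) ^ 2 :=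
    setIntegral_congr_set (sdiff_null_ae_eq_self nN).symm
  have h2 : ∫ z in s, 1 / (1 + z.1 * z.2) ^ 2
      = ∫ z in Tnat lam α '' s, 1 / (1 + z.1 * z.2) ^ 2 := by
    rw [hcv]
    refine setIntegral_congr_fun ms fun z hz => ?_
    simp only [det_aux]
    exact (dens_eq (hx z hz) (hD z hz)).symm
  rw [h1, h2]
  -- image is almost all of A
  set C' : Set ℝ := (Tmap lam α '' C) ∪ ({e 1} ∪ ⋃ d : ℤ, {1 / e (m + 2) - d * lam}) with hC'
  set E' : Set ℝ := {0} ∪ ⋃ d : ℤ, ⋃ t ∈ ({-1, 0, 1} : Set ℝ),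
    (fun y => 1 / ((d : ℝ) * lam + t * y)) '' E with hE'
  have cC' : C'.Countable := (cC.image _).union
    ((countable_singleton _).union (countable_iUnion fun d => countable_singleton _))
  have cE' : E'.Countable := (countable_singleton _).union
    (countable_iUnion fun d => (Set.toFinite _).countable.biUnion fun t _ => cE.image _)
  have nN' := null_cross cC' cE'
  refine setIntegral_congr_set ?_
  have sub : Tnat lam α '' s ⊆ A := by
    rintro _ ⟨z, hz, rfl⟩; exact hz.1.1
  refine Filter.EventuallyLE.antisymm sub.eventuallyLE ?_
  rw [ae_le_set]
  refine measure_mono_null ?_ nN'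
  rintro w ⟨hwA, hw⟩
  by_contra hc
  simp only [mem_ofPred_eq, not_or] at hc
  obtain ⟨hc1, hc2⟩ := hc
  obtain ⟨z, hz, rfl⟩ := D.surj (hAO hwA)
    (fun h => hc2 (Or.inl h)) (fun h => hc1 (Or.inr (Or.inl h)))
    (fun d h => hc1 (Or.inr (Or.inr (mem_iUnion.2 ⟨d, by
      rw [mem_singleton_iff, ← h]; ring⟩))))
  refine hw ⟨z, ⟨⟨hwA, hz⟩, ?_⟩, rfl⟩
  rintro (h | h)
  · exact hc1 (Or.inl ⟨z.1, h, rfl⟩)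
  · refine hc2 (Or.inr (mem_iUnion.2 ⟨dfun lam α z.1, mem_iUnion₂.2 ⟨Real.sign z.1, ?_, z.2, h, rfl⟩⟩))
    rcases Real.sign_apply_eq z.1 with h | h | h <;> simp [h]

/-- `sin (n θ)` with `θ = 2 φ` -/
noncomputable def sg (φ : ℝ) (n : ℕ) : ℝ := Real.sin (n * (2 * φ))

noncomputable def Uu (φ r : ℝ) (n : ℕ) : ℝ := sg φ (n + 1) - r * sg φ n

noncomputable def Vv (φ r : ℝ) (n : ℕ) : ℝ := r * sg φ (n + 1) - sg φ n

noncomputable def eseq (φ r : ℝ) (m k : ℕ) : ℝ :=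
  if k = m + 3 then r
  else if k % 2 = 0 then -Uu φ r (k / 2 + 1) / Uu φ r (k / 2)
  else -Vv φ r (k / 2 + 1) / Vv φ r (k / 2)

noncomputable def hseq (φ : ℝ) (k : ℕ) : ℝ := Real.sin ((k + 1) * φ) / Real.sin ((k + 3) * φ)

theorem sg_rec (φ : ℝ) (n : ℕ) :
    sg φ (n + 2) = 2 * Real.cos (2 * φ) * sg φ (n + 1) - sg φ n := by
  unfold sg
  have h1 : ((n + 2 : ℕ) : ℝ) * (2 * φ) = ((n + 1 : ℕ) : ℝ) * (2 * φ) + 2 * φ := by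
    push_cast; ring
  have h2 : (n : ℝ) * (2 * φ) = ((n + 1 : ℕ) : ℝ) * (2 * φ) - 2 * φ := by
    push_cast; ring
  rw [h1, h2, Real.sin_add, Real.sin_sub]; ring

theorem sg_inv (φ : ℝ) (n : ℕ) :
    sg φ n ^ 2 + sg φ (n + 1) ^ 2 - 2 * Real.cos (2 * φ) * sg φ n * sg φ (n + 1)
      = Real.sin (2 * φ) ^ 2 := by
  unfold sg
  have h1 : ((n + 1 : ℕ) : ℝ) * (2 * φ) = (n : ℝ) * (2 * φ) + 2 * φ := by
    push_cast; ring
  rw [h1, Real.sin_add]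
  have a := Real.sin_sq_add_cos_sq ((n : ℝ) * (2 * φ))
  have b := Real.sin_sq_add_cos_sq (2 * φ)
  generalize Real.sin ((n : ℝ) * (2 * φ)) = x at *
  generalize Real.cos ((n : ℝ) * (2 * φ)) = y at *
  generalize Real.sin (2 * φ) = s at *
  generalize Real.cos (2 * φ) = c at *
  linear_combination s ^ 2 * a - x ^ 2 * b

theorem Uu_rec (φ r : ℝ) (n : ℕ) :
    Uu φ r (n + 2) = 2 * Real.cos (2 * φ) * Uu φ r (n + 1) - Uu φ r n := by
  unfold Uu
  rw [sg_rec φ (n + 1), sg_rec φ n]; ring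

theorem Vv_rec (φ r : ℝ) (n : ℕ) :
    Vv φ r (n + 2) = 2 * Real.cos (2 * φ) * Vv φ r (n + 1) - Vv φ r n := by
  unfold Vv
  rw [sg_rec φ (n + 1), sg_rec φ n]; ring

theorem UV1 (φ r : ℝ) (n : ℕ) :
    Uu φ r (n + 1) * Vv φ r n - Vv φ r (n + 1) * Uu φ r n
      = (1 - r ^ 2) * Real.sin (2 * φ) ^ 2 := by
  rw [← sg_inv φ n]
  unfold Uu Vv
  rw [sg_rec φ n]; ring

theorem UV2 (φ r : ℝ) (n : ℕ) :
    Vv φ r (n + 1) * Uu φ r (n + 1) - Uu φ r (n + 2) * Vv φ r n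
      = 2 * (r - Real.cos (2 * φ)) * Real.sin (2 * φ) ^ 2 := by
  rw [← sg_inv φ n]
  unfold Uu Vv
  rw [sg_rec φ (n + 1), sg_rec φ n]; ring

set_option maxHeartbeats 2000000 in
theorem mk_dat (P : ℕ) (φ α lam : ℝ) (hφ : φ = Real.pi / (4 * (P + 2)))
    (hlam : lam = 2 * Real.cos (2 * φ)) (hα1 : 1 / 2 < α) (hα2 : α < 1 / lam) :
    Dat lam α (2 * P) (eseq φ (α * lam) (2 * P)) (hseq φ) := by
  have hpi := Real.pi_pos
  have hP : (0 : ℝ) ≤ P := Nat.cast_nonneg P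
  have hφ0 : 0 < φ := by rw [hφ]; positivity
  have hφ1 : (2 * P + 4) * φ = Real.pi / 2 := by rw [hφ]; field_simp; ring
  have hlam1 : 1 < lam := by
    have : Real.cos (Real.pi / 3) < Real.cos (2 * φ) :=
      Real.cos_lt_cos_of_nonneg_of_le_pi (by linarith) (by linarith) (by nlinarith)
    rw [Real.cos_pi_div_three] at this
    linarith
  have hαl : α * lam < 1 := by rwa [lt_div_iff₀ (by linarith)] at hα2
  have hs : 0 < Real.sin (2 * φ) := Real.sin_pos_of_pos_of_lt_pi (by linarith) (by nlinarith)
  obtain ⟨r, hr⟩ : ∃ r, r = α * lam := ⟨_, rfl⟩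
  obtain ⟨c, hc⟩ : ∃ c, c = Real.cos (2 * φ) := ⟨_, rfl⟩
  have hcr : c < r := by rw [hr, hc]; nlinarith
  have hr1 : r < 1 := by rw [hr]; exact hαl
  have hc2 : 1 < 2 * c := by rw [hc, ← hlam]; exact hlam1
  have hlc : lam = 2 * c := by rw [hc]; exact hlam
  have hr0 : 0 < r := by linarith
  rw [← hr]
  -- values of sg
  have sg0 : sg φ 0 = 0 := by simp [sg]
  have sg1 : sg φ 1 = Real.sin (2 * φ) := by simp [sg]
  have sgp : sg φ (P + 2) = 1 := by
    unfold sg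
    rw [← Real.sin_pi_div_two]; congr 1; rw [← hφ1]; push_cast; ring
  have sgp1 : sg φ (P + 1) = c := by
    unfold sg
    rw [hc, ← Real.sin_pi_div_two_sub]; congr 1; rw [← hφ1]; push_cast; ring
  have sgpos : ∀ n, n ≤ P + 1 → 0 < sg φ (n + 1) := by
    intro n hn
    have : (n : ℝ) ≤ P + 1 := by exact_mod_cast hn
    apply Real.sin_pos_of_pos_of_lt_pi
    · push_cast; positivity
    · push_cast; nlinarith
  have Upos : ∀ n, n ≤ P + 1 → 0 < Uu φ r n := by
    intro n hn
    have hn' : (n : ℝ) ≤ P + 1 := by exact_mod_cast hn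
    have h1 := sgpos n hn
    have h2 : sg φ n ≤ sg φ (n + 1) := by
      apply Real.sin_le_sin_of_le_of_le_pi_div_two
      · have : 0 ≤ (n : ℝ) * (2 * φ) := by positivity
        linarith
      · push_cast; nlinarith
      · push_cast; nlinarith
    unfold Uu; nlinarith
  have Vpos : ∀ n, n ≤ P + 1 → 0 < Vv φ r n := by
    intro n hn
    have hn' : (n : ℝ) ≤ P + 1 := by exact_mod_cast hn
    have h1 := sgpos n hn
    have h2 : sg φ n ≤ c * sg φ (n + 1) := by
      unfold sg
      have : (n : ℝ) * (2 * φ) = ((n + 1 : ℕ) : ℝ) * (2 * φ) - 2 * φ := by push_cast; ring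
      rw [this, Real.sin_sub, hc]
      have : 0 ≤ Real.cos (((n + 1 : ℕ) : ℝ) * (2 * φ)) := by
        apply Real.cos_nonneg_of_neg_pi_div_two_le_of_le
        · have : 0 ≤ ((n + 1 : ℕ) : ℝ) * (2 * φ) := by positivity
          linarith
        · push_cast; nlinarith
      nlinarith
    unfold Vv; nlinarith
  have UP1 : Uu φ r (P + 1) = 1 - r * c := by unfold Uu; rw [sgp, sgp1]
  have UP2 : Uu φ r (P + 2) = c - r := by
    unfold Uu; rw [sg_rec φ (P + 1), sgp, sgp1, ← hc]; ring
  have VP1 : Vv φ r (P + 1) = r - c := by unfold Vv; rw [sgp, sgp1]; ring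
  have VP : Vv φ r P = r * c - (2 * c ^ 2 - 1) := by
    have := sg_rec φ P
    rw [sgp, sgp1, ← hc] at this
    unfold Vv; rw [sgp1]; linarith
  have ee : ∀ n, n ≤ P + 1 → eseq φ r (2 * P) (2 * n) = -Uu φ r (n + 1) / Uu φ r n := by
    intro n hn
    unfold eseq
    rw [if_neg (by omega), if_pos (by omega), show 2 * n / 2 = n by omega]
  have eo : ∀ n, n ≤ P → eseq φ r (2 * P) (2 * n + 1) = -Vv φ r (n + 1) / Vv φ r n := by
    intro n hn
    unfold eseq
    rw [if_neg (by omega), if_neg (by omega), show (2 * n + 1) / 2 = n by omega]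
  have eN : eseq φ r (2 * P) (2 * P + 3) = r := by unfold eseq; rw [if_pos rfl]
  have em2 : eseq φ r (2 * P) (2 * P + 2) = (r - c) / (1 - r * c) := by
    rw [show 2 * P + 2 = 2 * (P + 1) by ring, ee _ le_rfl, UP1, UP2]; ring
  have hrc : 0 < 1 - r * c := by rw [← UP1]; exact Upos _ le_rfl
  have hVP := Vpos P (by omega)
  have em1 : eseq φ r (2 * P) (2 * P + 1) = -(r - c) / (r * c - (2 * c ^ 2 - 1)) := by
    rw [eo _ le_rfl, VP1, VP]
  rw [VP] at hVP
  -- heights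
  have sinpos : ∀ k : ℕ, k ≤ 2 * P + 4 → 0 < Real.sin ((k + 1) * φ) := by
    intro k hk
    have : (k : ℝ) ≤ 2 * P + 4 := by exact_mod_cast hk
    apply Real.sin_pos_of_pos_of_lt_pi
    · positivity
    · nlinarith
  refine
  { lam1 := hlam1
    α1 := hα1
    α2 := hαl
    mono := ?_
    e0 := ?_
    eN := by rw [eN, hr]
    eneg := ?_
    epos := ?_
    g := ?_
    e1 := ?_
    key := ?_
    hrec := ?_
    h0 := ?_
    h1 := ?_
    hm := ?_
    hm1 := ?_
    hm2 := ?_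
    hle := ?_ }
  · intro i hi
    rcases Nat.even_or_odd' i with ⟨n, rfl | rfl⟩
    · rcases (show n ≤ P ∨ n = P + 1 by omega) with h | h
      · rw [ee n (by omega), eo n h]
        have u := Upos n (by omega)
        have v := Vpos n (by omega)
        rw [div_lt_div_iff₀ u v]
        have := UV1 φ r n
        have : 0 < (1 - r ^ 2) * Real.sin (2 * φ) ^ 2 := by
          have : 0 < 1 - r ^ 2 := by rw [sub_pos]; exact pow_lt_one₀ hr0.le hr1 two_ne_zero
          positivity
        linarith
      · subst h
        rw [show 2 * (P + 1) = 2 * P + 2 by ring, em2, show 2 * P + 2 + 1 = 2 * P + 3 by ring, eN,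
          div_lt_iff₀ hrc]
        have h1 : r ^ 2 < 1 := pow_lt_one₀ hr0.le hr1 two_ne_zero
        have h2 : c * r ^ 2 < c * 1 := mul_lt_mul_of_pos_left h1 (by linarith)
        linarith
    · rw [eo n (by omega), show 2 * n + 1 + 1 = 2 * (n + 1) by ring, ee (n + 1) (by omega)]
      have u := Upos (n + 1) (by omega)
      have v := Vpos n (by omega)
      rw [div_lt_div_iff₀ v u]
      have := UV2 φ r n
      rw [← hc] at this
      have : 0 < 2 * (r - c) * Real.sin (2 * φ) ^ 2 := by
        have : 0 < r - c := by linarith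
        positivity
      simp only [show n + 1 + 1 = n + 2 from rfl]
      linarith
  · have := ee 0 (by omega)
    rw [Nat.mul_zero] at this
    rw [this]
    have h2 := sg_rec φ 0
    rw [← hc] at h2
    simp only [Uu, Nat.zero_add, sg0, sg1] at *
    rw [h2]
    have : α * lam - lam = r - 2 * c := by rw [← hr, hlc]
    rw [sub_mul, one_mul, this]
    generalize Real.sin (2 * φ) = S at *
    rw [div_eq_iff (by linarith)]; ring
  · rw [em1]
    exact div_neg_of_neg_of_pos (by linarith) hVP
  · rw [em2]
    exact div_pos (by linarith) hrc
  · intro k hk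
    rw [hlc]
    rcases Nat.even_or_odd' k with ⟨n, rfl | rfl⟩
    · rw [ee n (by omega), show 2 * n + 2 = 2 * (n + 1) by ring, ee (n + 1) (by omega)]
      have u := (Upos n (by omega)).ne'
      have v := (Upos (n + 1) (by omega)).ne'
      have := Uu_rec φ r n
      rw [← hc] at this
      rw [show n + 1 + 1 = n + 2 from rfl, this]
      field_simp; ring
    · rw [eo n (by omega), show 2 * n + 1 + 2 = 2 * (n + 1) + 1 by ring, eo (n + 1) (by omega)]
      have u := (Vpos n (by omega)).ne'
      have v := (Vpos (n + 1) (by omega)).ne'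
      have := Vv_rec φ r n
      rw [← hc] at this
      rw [show n + 1 + 1 = n + 2 from rfl, this]
      field_simp; ring
  · have := eo 0 (by omega)
    rw [Nat.mul_zero] at this
    rw [Nat.zero_add] at this
    rw [this, ← hr, hlc]
    have h2 := sg_rec φ 0
    rw [← hc] at h2
    simp only [Vv, Nat.zero_add, sg0, sg1] at *
    rw [h2]
    field_simp; ring
  · rw [em1, em2, hlc]
    have : r - c ≠ 0 := by linarith
    field_simp; ring
  · intro k hk
    unfold hseq
    have h3 := sinpos (k + 2) (by omega)
    push_cast at h3 ⊢
    have e1 : ((k : ℝ) + 2 + 3) * φ = (k + 3) * φ + 2 * φ := by ring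
    have e2 : ((k : ℝ) + 1) * φ = (k + 3) * φ - 2 * φ := by ring
    have e3 : ((k : ℝ) + 2 + 1) * φ = (k + 3) * φ := by ring
    rw [e3] at h3
    rw [e1, e2, e3]
    have : lam - Real.sin ((k + 3) * φ - 2 * φ) / Real.sin ((k + 3) * φ)
        = Real.sin ((k + 3) * φ + 2 * φ) / Real.sin ((k + 3) * φ) := by
      rw [Real.sin_add, Real.sin_sub, hlam, sub_eq_iff_eq_add, ← add_div, eq_div_iff h3.ne']
      ring
    rw [this, one_div_div]
  · unfold hseq
    have h := sinpos 0 (by omega)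
    simp only [Nat.cast_zero, zero_add, one_mul] at *
    rw [Real.sin_three_mul, hlam, Real.cos_two_mul]
    have h2 := Real.sin_sq_add_cos_sq φ
    have : 3 * Real.sin φ - 4 * Real.sin φ ^ 3
        = Real.sin φ * (2 * (2 * Real.cos φ ^ 2 - 1) + 1) := by
      linear_combination (-4) * Real.sin φ * h2
    rw [this, div_mul_eq_div_div, div_self h.ne']
  · unfold hseq
    have e1 : (((1 : ℕ) : ℝ) + 1) * φ = 2 * φ := by norm_num
    have e2 : (((1 : ℕ) : ℝ) + 3) * φ = 2 * (2 * φ) := by push_cast; ring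
    rw [e1, e2, Real.sin_two_mul (2 * φ), hlam]
    field_simp
  · unfold hseq
    have e1 : (((2 * P : ℕ) : ℝ) + 1) * φ = Real.pi / 2 - 3 * φ := by
      rw [← hφ1]; push_cast; ring
    have e2 : (((2 * P : ℕ) : ℝ) + 3) * φ = Real.pi / 2 - φ := by
      rw [← hφ1]; push_cast; ring
    rw [e1, e2, Real.sin_pi_div_two_sub, Real.sin_pi_div_two_sub, hlam, Real.cos_two_mul,
      Real.cos_three_mul]
    have : 0 < Real.cos φ := Real.cos_pos_of_mem_Ioo ⟨by linarith, by nlinarith⟩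
    field_simp; ring
  · unfold hseq
    have e1 : (((2 * P + 1 : ℕ) : ℝ) + 1) * φ = Real.pi / 2 - 2 * φ := by
      rw [← hφ1]; push_cast; ring
    have e2 : (((2 * P + 1 : ℕ) : ℝ) + 3) * φ = Real.pi / 2 := by
      rw [← hφ1]; push_cast; ring
    rw [e1, e2, Real.sin_pi_div_two_sub, Real.sin_pi_div_two, hlam]; ring
  · unfold hseq
    have e1 : (((2 * P + 2 : ℕ) : ℝ) + 1) * φ = Real.pi / 2 - φ := by
      rw [← hφ1]; push_cast; ring
    have e2 : (((2 * P + 2 : ℕ) : ℝ) + 3) * φ = φ + Real.pi / 2 := by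
      rw [← hφ1]; push_cast; ring
    have : 0 < Real.cos φ := Real.cos_pos_of_mem_Ioo ⟨by linarith, by nlinarith⟩
    rw [e1, e2, Real.sin_pi_div_two_sub, Real.sin_add_pi_div_two, div_self this.ne']
  · intro k hk
    unfold hseq
    have h3 := sinpos (k + 2) (by omega)
    push_cast at h3
    have hk' : (k : ℝ) ≤ 2 * P + 2 := by exact_mod_cast hk
    have e1 : ((k : ℝ) + 3) * φ = (k + 2) * φ + φ := by ring
    have e2 : ((k : ℝ) + 1) * φ = (k + 2) * φ - φ := by ring
    have e3 : ((k : ℝ) + 2 + 1) * φ = (k + 2) * φ + φ := by ring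
    rw [e3] at h3
    rw [e1, e2, div_le_one h3, Real.sin_add, Real.sin_sub]
    have a : 0 ≤ Real.cos ((k + 2) * φ) := by
      apply Real.cos_nonneg_of_neg_pi_div_two_le_of_le
      · have : 0 ≤ ((k : ℝ) + 2) * φ := by positivity
        linarith
      · nlinarith
    have b : 0 < Real.sin φ := Real.sin_pos_of_pos_of_lt_pi hφ0 (by nlinarith)
    nlinarith

theorem Dat.Tneg {lam α : ℝ} {m : ℕ} {e η : ℕ → ℝ} (D : Dat lam α m e η) {k : ℕ} (hk : k ≤ m) :
    Tmap lam α (e k) = e (k + 2) := by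
  have hneg : e k < 0 := (D.lt (by omega : k < m + 1) (by omega)).trans D.eneg
  have hl := D.lam1
  have h1 := D.g k hk
  have h2 := D.le (Nat.zero_le (k + 2)) (by omega)
  have h3 := D.lt (show k + 2 < m + 3 by omega) le_rfl
  rw [D.e0] at h2
  rw [D.eN] at h3
  have ha : |1 / e k| = -1 / e k := by rw [abs_of_neg (one_div_neg.2 hneg), neg_div]
  have hd : dfun lam α (e k) = 1 :=
    dfun_eq 1 (by linarith) (by rw [ha]; push_cast; linarith) (by rw [ha]; push_cast; linarith)
  unfold Tmap
  rw [if_neg hneg.ne, hd, ha]; push_cast; linarith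

theorem Dat.Tr {lam α : ℝ} {m : ℕ} {e η : ℕ → ℝ} (D : Dat lam α m e η) :
    Tmap lam α (α * lam) = e 1 := by
  have hl := D.lam1
  have ha := D.α1
  have h0 : 0 < α * lam := by nlinarith
  have h1 := D.e1
  have h2 := D.le (Nat.zero_le 1) (by omega)
  have h3 := D.lt (show 1 < m + 3 by omega) le_rfl
  rw [D.e0] at h2
  rw [D.eN] at h3
  have ha : |1 / (α * lam)| = 1 / (α * lam) := abs_of_pos (one_div_pos.2 h0)
  have hd : dfun lam α (α * lam) = 1 :=
    dfun_eq 1 (by linarith) (by rw [ha]; push_cast; linarith) (by rw [ha]; push_cast; linarith)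
  unfold Tmap
  rw [if_neg h0.ne', hd, ha]; push_cast; linarith

/-- For even `q = 2p` and `1/2 < α < 1/λ`, the natural extension map `𝒯_α` preserves the
measure with density `(1+xy)⁻²` on `Ω_α`. -/
theorem stmt7 (p q : ℕ) (hp : 2 ≤ p) (hq : q = 2 * p) (lam α : ℝ)
    (hlam : lam = 2 * Real.cos (Real.pi / q))
    (hα1 : 1 / 2 < α) (hα2 : α < 1 / lam)
    (ℓ r : ℕ → ℝ)
    (hℓ : ∀ n, ℓ n = (Tmap lam α)^[n] ((α - 1) * lam))
    (hr : ∀ n, r n = (Tmap lam α)^[n] (α * lam))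
    (Hodd Heven : ℕ → ℝ)
    (hHodd : ∀ n : ℕ, Hodd n =
      (Real.cos (n * Real.pi / (2 * (p : ℝ))) - Real.cos (((n : ℝ) - 1) * Real.pi / (2 * (p : ℝ))))
        / (Real.cos (((n : ℝ) + 1) * Real.pi / (2 * (p : ℝ)))
          - Real.cos (n * Real.pi / (2 * (p : ℝ)))))
    (hHeven : ∀ n : ℕ, Heven n =
      Real.sin (n * Real.pi / (2 * (p : ℝ))) / Real.sin (((n : ℝ) + 1) * Real.pi / (2 * (p : ℝ))))
    (Ω : Set (ℝ × ℝ))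
    (hΩ : Ω = (⋃ n ∈ Finset.Icc 1 (p - 1), Ico (ℓ (n - 1)) (r n) ×ˢ Icc (0 : ℝ) (Hodd n))
      ∪ (⋃ n ∈ Finset.Icc 1 (p - 1), Ico (r n) (ℓ n) ×ˢ Icc (0 : ℝ) (Heven n))
      ∪ Ico (ℓ (p - 1)) (r 0) ×ˢ Icc (0 : ℝ) (Hodd p)) :
    ∀ A : Set (ℝ × ℝ), MeasurableSet A → A ⊆ Ω →
      ∫ z in (Tnat lam α) ⁻¹' A ∩ Ω, 1 / (1 + z.1 * z.2) ^ 2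
        = ∫ z in A, 1 / (1 + z.1 * z.2) ^ 2 := by
  obtain ⟨P, rfl⟩ : ∃ P, p = P + 2 := ⟨p - 2, by omega⟩
  obtain ⟨φ, hφ⟩ : ∃ φ : ℝ, φ = Real.pi / (4 * (P + 2)) := ⟨_, rfl⟩
  have hP : (0 : ℝ) ≤ P := Nat.cast_nonneg P
  have hpi := Real.pi_pos
  have hφ0 : 0 < φ := by rw [hφ]; positivity
  have hφ1 : (2 * P + 4) * φ = Real.pi / 2 := by rw [hφ]; field_simp; ring
  have hang : ∀ t : ℝ, t * Real.pi / (2 * ((P + 2 : ℕ) : ℝ)) = t * (2 * φ) := by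
    intro t; rw [hφ]; push_cast; field_simp; ring
  have hlam' : lam = 2 * Real.cos (2 * φ) := by
    rw [hlam, hq]; congr 2; rw [hφ]; push_cast; field_simp; ring
  have D := mk_dat P φ α lam hφ hlam' hα1 hα2
  obtain ⟨e, he⟩ : ∃ e, e = eseq φ (α * lam) (2 * P) := ⟨_, rfl⟩
  rw [← he] at D
  have hl : ∀ n, n ≤ P + 1 → ℓ n = e (2 * n) := by
    intro n
    induction n with
    | zero => intro _; rw [hℓ, Nat.mul_zero, D.e0]; rfl
    | succ n ih =>
      intro hn
      rw [hℓ, Function.iterate_succ_apply', ← hℓ, ih (by omega), D.Tneg (by omega)]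
      rfl
  have hr' : ∀ n, n ≤ P → r (n + 1) = e (2 * n + 1) := by
    intro n
    induction n with
    | zero => intro _; rw [hr]; exact D.Tr
    | succ n ih =>
      intro hn
      rw [hr, Function.iterate_succ_apply', ← hr, ih (by omega), D.Tneg (by omega)]
      rfl
  have hr0 : r 0 = e (2 * P + 3) := by rw [hr, D.eN]; rfl
  have hE : ∀ n, Heven (n + 1) = hseq φ (2 * n + 1) := by
    intro n
    rw [hHeven, hang, hang]
    unfold hseq
    push_cast
    congr 2 <;> ring
  have hO : ∀ n, n ≤ P + 1 → Hodd (n + 1) = hseq φ (2 * n) := by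
    intro n hn
    have b : 0 < Real.sin φ := Real.sin_pos_of_pos_of_lt_pi hφ0 (by nlinarith)
    rw [hHodd, hang, hang, hang, Real.cos_sub_cos, Real.cos_sub_cos]
    unfold hseq
    push_cast
    have e1 : (((n : ℝ) + 1) * (2 * φ) - (n + 1 - 1) * (2 * φ)) / 2 = φ := by ring
    have e2 : (((n : ℝ) + 1 + 1) * (2 * φ) - (n + 1) * (2 * φ)) / 2 = φ := by ring
    have e3 : (((n : ℝ) + 1) * (2 * φ) + (n + 1 - 1) * (2 * φ)) / 2 = (2 * n + 1) * φ := by ring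
    have e4 : (((n : ℝ) + 1 + 1) * (2 * φ) + (n + 1) * (2 * φ)) / 2 = (2 * n + 3) * φ := by ring
    rw [e1, e2, e3, e4, mul_div_mul_right _ _ b.ne', mul_div_mul_left _ _ (by norm_num)]
  have hOm : Ω = Om (2 * P) e (hseq φ) := by
    rw [hΩ]
    ext z
    simp only [mem_union, mem_iUnion, Finset.mem_Icc, mem_prod, mem_Ico, mem_Icc, exists_prop,
      Om, mem_ofPred_eq]
    constructor
    · rintro ((⟨n, ⟨h1, h2⟩, h3⟩ | ⟨n, ⟨h1, h2⟩, h3⟩) | h3)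
      · obtain ⟨n, rfl⟩ : ∃ j, n = j + 1 := ⟨n - 1, by omega⟩
        rw [Nat.add_sub_cancel, hl n (by omega), hr' n (by omega), hO n (by omega)] at h3
        exact ⟨2 * n, by omega, h3⟩
      · obtain ⟨n, rfl⟩ : ∃ j, n = j + 1 := ⟨n - 1, by omega⟩
        rw [hl (n + 1) (by omega), hr' n (by omega), hE n] at h3
        exact ⟨2 * n + 1, by omega, h3⟩
      · rw [show P + 2 - 1 = P + 1 by omega, hl (P + 1) le_rfl, hr0, hO (P + 1) le_rfl] at h3
        exact ⟨2 * (P + 1), by omega, h3⟩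
    · rintro ⟨k, hk, h3⟩
      rcases Nat.even_or_odd' k with ⟨n, rfl | rfl⟩
      · rcases (show n ≤ P ∨ n = P + 1 by omega) with h | h
        · left; left
          refine ⟨n + 1, ⟨by omega, by omega⟩, ?_⟩
          rw [Nat.add_sub_cancel, hl n (by omega), hr' n (by omega), hO n (by omega)]
          exact h3
        · subst h
          right
          rw [show P + 2 - 1 = P + 1 by omega, hl (P + 1) le_rfl, hr0, hO (P + 1) le_rfl]
          exact h3
      · left; right
        refine ⟨n + 1, ⟨by omega, by omega⟩, ?_⟩
        rw [hl (n + 1) (by omega), hr' n (by omega), hE n]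
        exact h3
  rw [hOm]
  exact fun A hA hAO => D.main A hA hAO
end

section
/- Let q = 2p with p ≥ 2, λ = 2cos(π/q), and 1/2 < α < 1/λ, and let Ω_α be the natural extension region ⋃_{n=1}^{2p−1} J_n × [0,H_n] described below. Then ∫∫_{Ω_α} (1+xy)^{−2} dx dy = log((1 + cos(π/q))/sin(π/q)); equivalently, the normalizing constant of the invariant probability density C_{q,α}/(1+xy)² on Ω_α is C_{q,α} = 1/log((1 + cos(π/q))/sin(π/q)), independent of α. -/
open Set MeasureTheory

lemma rosen_rect (a b H : ℝ) (ha : -1 < a) (hab : a ≤ b) (h0 : 0 ≤ H) (h1 : H ≤ 1) :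
    IntegrableOn (fun z : ℝ × ℝ => 1 / (1 + z.1 * z.2) ^ 2) (Ico a b ×ˢ Icc (0 : ℝ) H) ∧
    ∫ z in Ico a b ×ˢ Icc (0 : ℝ) H, 1 / (1 + z.1 * z.2) ^ 2
      = Real.log ((1 + b * H) / (1 + a * H)) := by
  have hpos : ∀ x y : ℝ, a ≤ x → 0 ≤ y → y ≤ H → 0 < 1 + x * y := by
    intro x y hx hy hyH
    nlinarith [mul_nonneg hy (by linarith : 0 ≤ x - a), mul_nonneg hy (by linarith : 0 ≤ a + 1)]
  have hintg : IntegrableOn (fun z : ℝ × ℝ => 1 / (1 + z.1 * z.2) ^ 2)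
      (Ico a b ×ˢ Icc (0 : ℝ) H) := by
    have hc : IntegrableOn (fun z : ℝ × ℝ => 1 / (1 + z.1 * z.2) ^ 2)
      (Icc a b ×ˢ Icc (0 : ℝ) H) := by
      apply ContinuousOn.integrableOn_compact
      · exact isCompact_Icc.prod isCompact_Icc
      · apply ContinuousOn.div
        · fun_prop
        · fun_prop
        · rintro ⟨x, y⟩ ⟨hx, hy⟩
          exact pow_ne_zero _ (hpos x y hx.1 hy.1 hy.2).ne'
    exact hc.mono_set (Set.prod_mono Ico_subset_Icc_self le_rfl)
  refine ⟨hintg, ?_⟩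
  rw [Measure.volume_eq_prod] at hintg ⊢
  rw [setIntegral_prod _ hintg]
  have hin : ∀ x ∈ Ico a b, ∫ y in Icc (0 : ℝ) H, 1 / (1 + (x, y).1 * (x, y).2) ^ 2
      = H / (1 + x * H) := by
    intro x hx
    rw [integral_Icc_eq_integral_Ioc, ← intervalIntegral.integral_of_le h0]
    have hd : ∀ y ∈ uIcc 0 H, HasDerivAt (fun y : ℝ => y / (1 + x * y))
        (1 / (1 + (x, y).1 * (x, y).2) ^ 2) y := by
      intro y hy
      rw [uIcc_of_le h0] at hy
      have hp := hpos x y hx.1 hy.1 hy.2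
      have := (hasDerivAt_id y).div (((hasDerivAt_id y).const_mul x).const_add 1) hp.ne'
      refine this.congr_deriv ?_
      simp only [id]
      congr 1
      ring
    rw [intervalIntegral.integral_eq_sub_of_hasDerivAt hd]
    · simp
    · apply ContinuousOn.intervalIntegrable
      apply ContinuousOn.div
      · fun_prop
      · fun_prop
      · intro y hy
        rw [uIcc_of_le h0] at hy
        exact pow_ne_zero _ (hpos x y hx.1 hy.1 hy.2).ne'
  rw [setIntegral_congr_fun measurableSet_Ico hin, integral_Ico_eq_integral_Ioo,
    ← integral_Ioc_eq_integral_Ioo, ← intervalIntegral.integral_of_le hab]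
  have hd : ∀ x ∈ uIcc a b, HasDerivAt (fun x : ℝ => Real.log (1 + x * H))
      (H / (1 + x * H)) x := by
    intro x hx
    rw [uIcc_of_le hab] at hx
    have hp := hpos x H hx.1 h0 le_rfl
    have := ((((hasDerivAt_id x).mul_const H).const_add 1)).log hp.ne'
    refine this.congr_deriv ?_
    simp
  rw [intervalIntegral.integral_eq_sub_of_hasDerivAt hd]
  · rw [Real.log_div (hpos b H hab h0 le_rfl).ne' (hpos a H le_rfl h0 le_rfl).ne']
  · apply ContinuousOn.intervalIntegrable
    apply ContinuousOn.div
    · fun_prop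
    · fun_prop
    · intro x hx
      rw [uIcc_of_le hab] at hx
      exact (hpos x H hx.1 h0 le_rfl).ne'

lemma rosen_T (lam α x y : ℝ) (hl : 0 < lam) (hx : x ≠ 0) (hy : y = |1 / x| - lam)
    (h1 : (α - 1) * lam ≤ y) (h2 : y < α * lam) : Tmap lam α x = y := by
  have hd : dfun lam α x = 1 := by
    unfold dfun
    have e : |1 / (x * lam)| = y / lam + 1 := by
      rw [hy, ← div_div, abs_div, abs_of_pos hl]; field_simp; ring
    rw [e, Int.floor_eq_iff]
    have := (le_div_iff₀ hl).2 h1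
    have := (div_lt_iff₀ hl).2 h2
    push_cast
    constructor <;> linarith
  unfold Tmap
  rw [if_neg hx, hd, hy]; simp

/-- The telescoping identity, abstractly. -/
lemma rosen_A (N : ℕ) (lam : ℝ) (L R Ho He : ℕ → ℝ)
    (hL : ∀ n < N, L n ≠ 0 ∧ L (n + 1) = -1 / L n - lam)
    (hR : ∀ n < N, R n ≠ 0 ∧ R (n + 1) = -1 / R n - lam)
    (hHo : ∀ n ≤ N, Ho (n + 1) * (lam - Ho n) = 1)
    (hHe : ∀ n < N, He (n + 1) * (lam - He n) = 1)
    (hbase : (1 + R 0 * Ho 0) * (1 + L 0 * He 0) * Ho 1 = (1 + R 0 * He 0) * (1 + L 0 * Ho 1)) :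
    ∀ n ≤ N, (1 + R n * Ho n) * (1 + L n * He n) * Ho (n + 1)
      = (1 + R n * He n) * (1 + L n * Ho (n + 1)) := by
  have key : ∀ t u h k : ℝ, t ≠ 0 → u = -1 / t - lam → k * (lam - h) = 1 →
      1 + u * k = (1 + t * h) * k / (-t) := by
    intro t u h k ht hu hk
    rw [hu]; field_simp; linear_combination (-t) * hk
  intro n
  induction n with
  | zero => intro _; exact hbase
  | succ n ih =>
    intro hn
    have ih := ih (by omega)
    obtain ⟨l0, l1⟩ := hL n (by omega)
    obtain ⟨r0, r1⟩ := hR n (by omega)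
    rw [key _ _ _ _ r0 r1 (hHo n (by omega)), key _ _ _ _ l0 l1 (hHe n (by omega)),
      key _ _ _ _ r0 r1 (hHe n (by omega)), key _ _ _ _ l0 l1 (hHo (n + 1) (by omega))]
    field_simp
    linear_combination (He (n + 1) * Ho (n + 1 + 1)) * ih

lemma rosen_sum (N : ℕ) (c : ℝ) (hc : 0 < c) (L R Ho He S : ℕ → ℝ)
    (hS : ∀ n ≤ N + 1, 0 < S n)
    (hHo : ∀ n ≤ N + 1, n ≠ 0 → Ho n = S (n - 1) / S n)
    (h1 : ∀ n < N, 0 < 1 + L n * Ho (n + 1))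
    (h1' : 0 < 1 + L N * Ho (N + 1))
    (h2 : ∀ n, 1 ≤ n → n ≤ N → 0 < 1 + R n * Ho n)
    (h3 : ∀ n, 1 ≤ n → n ≤ N → 0 < 1 + R n * He n)
    (h4 : ∀ n, 1 ≤ n → n ≤ N → 0 < 1 + L n * He n)
    (hA : ∀ n ≤ N, (1 + R n * Ho n) * (1 + L n * He n) * Ho (n + 1)
      = (1 + R n * He n) * (1 + L n * Ho (n + 1)))
    (hbase : c * Ho 1 = 1 + L 0 * Ho 1) :
    ∀ n ≤ N, ∑ k ∈ Finset.Icc 1 n, (Real.log ((1 + R k * Ho k) / (1 + L (k - 1) * Ho k))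
      + Real.log ((1 + L k * He k) / (1 + R k * He k)))
      = Real.log ((1 + L n * Ho (n + 1)) / c * (S (n + 1) / S 0)) := by
  have h1 : ∀ n ≤ N, 0 < 1 + L n * Ho (n + 1) := by
    intro n hn
    rcases hn.lt_or_eq with h | h
    · exact h1 n h
    · subst h; exact h1'
  intro n
  induction n with
  | zero =>
    intro _
    have s0 := hS 0 (by omega)
    have s1 := hS 1 (by omega)
    have : (1 + L 0 * Ho (0 + 1)) / c * (S (0 + 1) / S 0) = 1 := by
      rw [← hbase, hHo 1 (by omega) (by omega)]; simp; field_simp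
    rw [this]; simp
  | succ n ih =>
    intro hn
    rw [Finset.sum_Icc_succ_top (by omega), ih (by omega)]
    have a0 := h1 n (by omega)
    have a1 := h1 (n + 1) hn
    have a2 := h2 (n + 1) (by omega) hn
    have a3 := h3 (n + 1) (by omega) hn
    have a4 := h4 (n + 1) (by omega) hn
    have s0 := hS 0 (by omega)
    have s1 := hS (n + 1) (by omega)
    have s2 := hS (n + 1 + 1) (by omega)
    have hA := hA (n + 1) hn
    simp only [Nat.add_sub_cancel]
    rw [← Real.log_mul (by positivity) (by positivity),
      ← Real.log_mul (by positivity) (by positivity)]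
    congr 1
    have e := hHo (n + 1 + 1) (by omega) (by omega)
    simp only [Nat.add_sub_cancel] at e
    have e' : Ho (n + 1 + 1) * S (n + 1 + 1) = S (n + 1) := by rw [e]; field_simp
    generalize Ho (n + 1 + 1) = w at *
    rw [← e']
    field_simp
    linear_combination hA

/-- Orbits: closed form, negativity and recurrence of the Möbius orbits. -/
lemma rosen_orbit (p : ℕ) (hp : 2 ≤ p) (θ lam α : ℝ) (hθ : p * θ = Real.pi / 2)
    (hlam : lam = 2 * Real.cos θ) (hα1 : 1 / 2 < α) (hα2 : α * lam < 1) :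
    ∃ L R : ℕ → ℝ, L 0 = (α - 1) * lam ∧ R 0 = - (α * lam) ∧
      (∀ n < p - 1, L n < 0 ∧ L (n + 1) = -1 / L n - lam) ∧
      (∀ n < p - 1, R n < 0 ∧ R (n + 1) = -1 / R n - lam) ∧
      R (p - 1) ≤ 0 ∧ L (p - 1) < α * lam := by
  have hpi := Real.pi_pos
  have hpR : (2 : ℝ) ≤ p := by exact_mod_cast hp
  have hθ0 : 0 < θ := by
    by_contra h
    nlinarith
  have hθ4 : θ ≤ Real.pi / 4 := by nlinarith
  have hs : 0 < Real.sin θ := Real.sin_pos_of_pos_of_lt_pi hθ0 (by linarith)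
  have hc : 0 < Real.cos θ := Real.cos_pos_of_mem_Ioo ⟨by linarith, by linarith⟩
  have hc1 : Real.cos θ < 1 := by
    have := Real.sin_sq_add_cos_sq θ
    nlinarith
  set D : ℝ → ℕ → ℝ := fun x n => Real.sin (n * θ) * x + Real.sin ((n - 1) * θ) with hD
  have hrec : ∀ x n, D x (n + 2) = lam * D x (n + 1) - D x n := by
    intro x n
    have key : ∀ t : ℝ, Real.sin ((t + 1) * θ) = lam * Real.sin (t * θ) - Real.sin ((t - 1) * θ) := by
      intro t
      rw [add_mul, sub_mul, one_mul, Real.sin_add, Real.sin_sub, hlam]; ring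
    simp only [hD]
    push_cast
    have k1 := key (n + 1)
    have k2 := key n
    rw [show (n : ℝ) + 2 = n + 1 + 1 by ring, k1, show (n : ℝ) + 1 + 1 - 1 = n + 1 by ring,
      show (n : ℝ) + 1 - 1 = n by ring, k2]
    ring
  have hgen : ∀ x n, D x n < 0 → D x (n + 1) < 0 →
      (-D x (n + 1) / D x n < 0 ∧
        -D x (n + 1 + 1) / D x (n + 1) = -1 / (-D x (n + 1) / D x n) - lam) := by
    intro x n h1 h2
    refine ⟨div_neg_of_pos_of_neg (by linarith) h1, ?_⟩
    rw [show n + 1 + 1 = n + 2 by rfl, hrec]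
    have := h1.ne
    have := h2.ne
    field_simp
    ring
  have hang : ∀ n : ℕ, n ≤ p → 0 ≤ n * θ ∧ n * θ ≤ Real.pi / 2 := by
    intro n hn
    have : (n : ℝ) ≤ p := by exact_mod_cast hn
    refine ⟨by positivity, ?_⟩
    rw [← hθ]; gcongr
  have hsn : ∀ n : ℕ, n ≤ p → 0 ≤ Real.sin (n * θ) := by
    intro n hn
    have := hang n hn
    exact Real.sin_nonneg_of_nonneg_of_le_pi this.1 (by linarith)
  have hRneg : ∀ n ≤ p, D (-(α * lam)) n ≤ 0 ∧ (n < p → D (-(α * lam)) n < 0) := by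
    intro n hn
    have e : D (-(α * lam)) n = -(Real.sin (n * θ) * ((2 * α - 1) * Real.cos θ))
        - Real.cos (n * θ) * Real.sin θ := by
      simp only [hD]
      rw [sub_mul, one_mul, Real.sin_sub, hlam]; ring
    have h1 := hsn n hn
    have h2 := hang n hn
    have h3 : 0 ≤ Real.cos (n * θ) := Real.cos_nonneg_of_mem_Icc ⟨by linarith, by linarith⟩
    have h4 : 0 ≤ Real.sin (n * θ) * ((2 * α - 1) * Real.cos θ) :=
      mul_nonneg h1 (mul_nonneg (by linarith) hc.le)
    rw [e]
    refine ⟨by nlinarith, fun hlt => ?_⟩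
    have : n * θ < Real.pi / 2 := by
      rw [← hθ]
      have : (n : ℝ) < p := by exact_mod_cast hlt
      gcongr
    have h5 : 0 < Real.cos (n * θ) := Real.cos_pos_of_mem_Ioo ⟨by linarith, by linarith⟩
    nlinarith
  have hLneg : ∀ n < p, D ((α - 1) * lam) n < 0 := by
    intro n hn
    have h1 := hsn n hn.le
    have h2 : Real.sin (n * θ) < Real.sin ((n + 1) * θ) := by
      have := hang (n + 1) hn
      have h3 := hang n hn.le
      push_cast at this
      apply Real.sin_lt_sin_of_lt_of_le_pi_div_two <;> linarith
    have h3 : Real.sin ((n + 1) * θ) + Real.sin ((n - 1) * θ) = lam * Real.sin (n * θ) := by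
      rw [add_mul, sub_mul, one_mul, Real.sin_add, Real.sin_sub, hlam]; ring
    simp only [hD]
    nlinarith [mul_nonneg h1 (by linarith : 0 ≤ 1 - α * lam)]
  refine ⟨fun n => -D ((α - 1) * lam) (n + 1) / D ((α - 1) * lam) n,
    fun n => -D (-(α * lam)) (n + 1) / D (-(α * lam)) n, ?_, ?_, ?_, ?_, ?_, ?_⟩
  · simp [hD]; field_simp
  · simp [hD]; field_simp
  · intro n hn
    exact hgen _ _ (hLneg n (by omega)) (hLneg (n + 1) (by omega))
  · intro n hn
    exact hgen _ _ ((hRneg n (by omega)).2 (by omega)) ((hRneg (n + 1) (by omega)).2 (by omega))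
  · have a := (hRneg (p - 1 + 1) (by omega)).1
    have b := (hRneg (p - 1) (by omega)).2 (by omega)
    exact div_nonpos_of_nonneg_of_nonpos (by linarith) b.le
  · have b := hLneg (p - 1) (by omega)
    have e1 : D ((α - 1) * lam) (p - 1 + 1) = (2 * α - 1) * Real.cos θ := by
      rw [show p - 1 + 1 = p by omega]
      simp only [hD]
      rw [sub_mul (p : ℝ), hθ, one_mul, Real.sin_pi_div_two, Real.sin_pi_div_two_sub, hlam]; ring
    have e2 : D ((α - 1) * lam) (p - 1) = 2 * α * Real.cos θ ^ 2 - 1 := by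
      simp only [hD]
      rw [Nat.cast_sub (by omega)]
      push_cast
      rw [show ((p : ℝ) - 1) * θ = Real.pi / 2 - θ by rw [← hθ]; ring,
        show ((p : ℝ) - 1 - 1) * θ = Real.pi / 2 - 2 * θ by rw [← hθ]; ring,
        Real.sin_pi_div_two_sub, Real.sin_pi_div_two_sub, Real.cos_two_mul, hlam]; ring
    simp only
    rw [e2] at b
    rw [e1, e2, div_lt_iff_of_neg b]
    have h5 : 0 < 1 - (α * lam) ^ 2 := by
      have : 0 < α * lam := by rw [hlam]; positivity
      nlinarith
    rw [hlam] at h5 ⊢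
    nlinarith

lemma rosen_order (N : ℕ) (lam : ℝ) (L R : ℕ → ℝ)
    (hL : ∀ n < N, L n < 0 ∧ L (n + 1) = -1 / L n - lam)
    (hR : ∀ n < N, R n < 0 ∧ R (n + 1) = -1 / R n - lam)
    (h0 : R 0 < L 0) (h1 : L 0 < R 1) :
    (∀ n ≤ N, R n < L n) ∧ (∀ n < N, L n < R (n + 1)) := by
  have mono : ∀ x y : ℝ, x < y → y < 0 → -1 / x - lam < -1 / y - lam := by
    intro x y hxy hy
    have := one_div_lt_one_div_of_neg_of_lt hy hxy
    rw [neg_div, neg_div]; linarith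
  constructor
  · intro n
    induction n with
    | zero => intro _; exact h0
    | succ n ih =>
      intro hn
      rw [(hL n hn).2, (hR n hn).2]
      exact mono _ _ (ih (by omega)) (hL n hn).1
  · intro n
    induction n with
    | zero => intro _; exact h1
    | succ n ih =>
      intro hn
      rw [(hL n (by omega)).2, (hR (n + 1) hn).2]
      exact mono _ _ (ih (by omega)) (hR (n + 1) hn).1

lemma rosen_L_mono (N : ℕ) (L R : ℕ → ℝ)
    (hA : ∀ n ≤ N, R n < L n) (hB : ∀ n < N, L n < R (n + 1)) :
    ∀ m n, m ≤ n → n ≤ N → L m ≤ L n := by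
  intro m n hmn
  induction n, hmn using Nat.le_induction with
  | base => intro _; exact le_rfl
  | succ n _ ih =>
    intro hn
    have := hA (n + 1) hn
    have := hB n hn
    have := ih (by omega)
    linarith

/-- The actual orbits coincide with the Möbius orbits. -/
lemma rosen_eq (N : ℕ) (lam α : ℝ) (hl : 0 < lam) (hα : 0 < α * lam) (L R ℓ r : ℕ → ℝ)
    (hℓ : ∀ n, ℓ n = (Tmap lam α)^[n] ((α - 1) * lam))
    (hr : ∀ n, r n = (Tmap lam α)^[n] (α * lam))
    (hL0 : L 0 = (α - 1) * lam) (hR0 : R 0 = -(α * lam))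
    (hL : ∀ n < N, L n < 0 ∧ L (n + 1) = -1 / L n - lam)
    (hR : ∀ n < N, R n < 0 ∧ R (n + 1) = -1 / R n - lam)
    (hRN : R N ≤ 0) (hLN : L N < α * lam)
    (hA : ∀ n ≤ N, R n < L n) (hB : ∀ n < N, L n < R (n + 1)) :
    (∀ n ≤ N, ℓ n = L n) ∧ (∀ n ≤ N, 1 ≤ n → r n = R n) := by
  have hm := rosen_L_mono N L R hA hB
  have abs1 : ∀ x : ℝ, x < 0 → |1 / x| = -1 / x := by
    intro x hx
    rw [abs_of_neg (one_div_neg.2 hx), neg_div]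
  have hR' : ∀ n ≤ N, R n < α * lam := by
    intro n hn
    rcases hn.lt_or_eq with h | h
    · linarith [(hR n h).1]
    · subst h; linarith
  have hL' : ∀ n ≤ N, L n < α * lam := by
    intro n hn
    rcases hn.lt_or_eq with h | h
    · linarith [(hL n h).1]
    · subst h; linarith
  constructor
  · intro n
    induction n with
    | zero => intro _; rw [hℓ, hL0]; rfl
    | succ n ih =>
      intro hn
      have ih := ih (by omega)
      rw [hℓ, Function.iterate_succ_apply', ← hℓ, ih]
      obtain ⟨h1, h2⟩ := hL n hn
      apply rosen_T _ _ _ _ hl h1.ne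
      · rw [abs1 _ h1, h2]
      · rw [← hL0]; exact hm 0 (n + 1) (by omega) hn
      · exact hL' _ hn
  · intro n
    induction n with
    | zero => intro _ h; omega
    | succ n ih =>
      intro hn _
      have lo : (α - 1) * lam ≤ R (n + 1) := by
        rw [← hL0]
        have := hm 0 n (by omega) (by omega)
        have := hB n hn
        linarith
      rw [hr, Function.iterate_succ_apply', ← hr]
      obtain ⟨h1, h2⟩ := hR n hn
      rcases Nat.eq_zero_or_pos n with h | h
      · subst h
        have : r 0 = α * lam := by rw [hr]; rfl
        rw [this]
        apply rosen_T _ _ _ _ hl hα.ne' _ lo (hR' _ hn)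
        rw [h2, hR0, abs_of_pos (one_div_pos.2 hα), neg_div_neg_eq]
      · rw [ih (by omega) h]
        apply rosen_T _ _ _ _ hl h1.ne _ lo (hR' _ hn)
        rw [abs1 _ h1, h2]

lemma rosen_frac (a b l : ℝ) (h : a ≠ 0) : a * (l - b / a) = l * a - b := by
  field_simp

set_option maxHeartbeats 2000000

/-- Proposition 2.6 (even case): the integral of `(1+xy)⁻²` over `Ω_α` equals
`log((1 + cos(π/q))/sin(π/q))`; equivalently the normalizing constant is
`C_{q,α} = 1/log((1 + cos(π/q))/sin(π/q))`, independent of `α`. -/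
theorem stmt8 (p q : ℕ) (hp : 2 ≤ p) (hq : q = 2 * p) (lam α : ℝ)
    (hlam : lam = 2 * Real.cos (Real.pi / q))
    (hα1 : 1 / 2 < α) (hα2 : α < 1 / lam)
    (ℓ r : ℕ → ℝ)
    (hℓ : ∀ n, ℓ n = (Tmap lam α)^[n] ((α - 1) * lam))
    (hr : ∀ n, r n = (Tmap lam α)^[n] (α * lam))
    (Hodd Heven : ℕ → ℝ)
    (hHodd : ∀ n : ℕ, Hodd n =
      (Real.cos (n * Real.pi / (2 * (p : ℝ))) - Real.cos (((n : ℝ) - 1) * Real.pi / (2 * (p : ℝ))))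
        / (Real.cos (((n : ℝ) + 1) * Real.pi / (2 * (p : ℝ)))
          - Real.cos (n * Real.pi / (2 * (p : ℝ)))))
    (hHeven : ∀ n : ℕ, Heven n =
      Real.sin (n * Real.pi / (2 * (p : ℝ))) / Real.sin (((n : ℝ) + 1) * Real.pi / (2 * (p : ℝ))))
    (Ω : Set (ℝ × ℝ))
    (hΩ : Ω = (⋃ n ∈ Finset.Icc 1 (p - 1), Ico (ℓ (n - 1)) (r n) ×ˢ Icc (0 : ℝ) (Hodd n))
      ∪ (⋃ n ∈ Finset.Icc 1 (p - 1), Ico (r n) (ℓ n) ×ˢ Icc (0 : ℝ) (Heven n))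
      ∪ Ico (ℓ (p - 1)) (r 0) ×ˢ Icc (0 : ℝ) (Hodd p)) :
    ∫ z in Ω, 1 / (1 + z.1 * z.2) ^ 2
      = Real.log ((1 + Real.cos (Real.pi / q)) / Real.sin (Real.pi / q)) := by
  
  have hpi := Real.pi_pos
  have hpR : (2 : ℝ) ≤ p := by exact_mod_cast hp
  obtain ⟨θ, hθdef⟩ : ∃ θ : ℝ, θ = Real.pi / (2 * (p : ℝ)) := ⟨_, rfl⟩
  have hθ : p * θ = Real.pi / 2 := by rw [hθdef]; field_simp
  have hqθ : Real.pi / q = θ := by rw [hθdef, hq]; push_cast; rfl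
  have hmulθ : ∀ t : ℝ, t * Real.pi / (2 * (p : ℝ)) = t * θ := by
    intro t; rw [hθdef, mul_div_assoc]
  rw [hqθ] at hlam ⊢
  simp only [hmulθ] at hHodd hHeven
  have hθ0 : 0 < θ := by rw [hθdef]; positivity
  have hθ4 : θ ≤ Real.pi / 4 := by nlinarith
  have hs : 0 < Real.sin θ := Real.sin_pos_of_pos_of_lt_pi hθ0 (by linarith)
  have hc : 0 < Real.cos θ := Real.cos_pos_of_mem_Ioo ⟨by linarith, by linarith⟩
  have hc1 : Real.cos θ < 1 := by
    have := Real.sin_sq_add_cos_sq θ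
    nlinarith
  have hs2 : 0 < Real.sin (θ / 2) := Real.sin_pos_of_pos_of_lt_pi (by linarith) (by linarith)
  have hlpos : 0 < lam := by rw [hlam]; positivity
  have hαl : α * lam < 1 := by rwa [lt_div_iff₀ hlpos] at hα2
  have hα0 : 0 < α * lam := mul_pos (by linarith) hlpos
  obtain ⟨L, R, hL0, hR0, hL, hR, hRN, hLN⟩ := rosen_orbit p hp θ lam α hθ hlam hα1 hαl
  have h01 : R 0 < L 0 := by rw [hL0, hR0]; nlinarith
  have h11 : L 0 < R 1 := by
    rw [(hR 0 (by omega)).2, hL0, hR0, neg_div_neg_eq]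
    have : 1 < 1 / (α * lam) := by rw [lt_div_iff₀ hα0]; linarith
    linarith
  obtain ⟨hA, hB⟩ := rosen_order (p - 1) lam L R hL hR h01 h11
  have hm := rosen_L_mono (p - 1) L R hA hB
  obtain ⟨eℓ, er⟩ := rosen_eq (p - 1) lam α hlpos hα0 L R ℓ r hℓ hr hL0 hR0 hL hR hRN hLN hA hB
  have er0 : r 0 = α * lam := by rw [hr]; rfl
  have hLgt : ∀ n ≤ p - 1, -1 < L n := by
    intro n hn
    have := hm 0 n (by omega) hn
    rw [hL0] at this
    nlinarith
  have hRgt : ∀ n ≤ p - 1, 1 ≤ n → -1 < R n := by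
    intro n hn h1
    have h2 := hB (n - 1) (by omega)
    rw [show n - 1 + 1 = n by omega] at h2
    have := hLgt (n - 1) (by omega)
    linarith
  -- the heights
  have hsin : ∀ t : ℝ, 0 < t → t ≤ p + 1 → 0 < Real.sin (t * θ) := by
    intro t h0 h1
    apply Real.sin_pos_of_pos_of_lt_pi (by positivity)
    have : t * θ ≤ (p + 1) * θ := by gcongr
    nlinarith
  have hsin_le : ∀ t : ℝ, 0 ≤ t → t ≤ p →
      Real.sin ((t - 1 / 2) * θ) ≤ Real.sin ((t + 1 / 2) * θ) := by
    intro t h0 h1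
    have h2 : t * θ ≤ p * θ := by gcongr
    have h3 : 0 ≤ t * θ := by positivity
    have h4 : 0 ≤ Real.cos (t * θ) := Real.cos_nonneg_of_mem_Icc ⟨by linarith, by linarith⟩
    rw [show (t - 1 / 2) * θ = t * θ - θ / 2 by ring, show (t + 1 / 2) * θ = t * θ + θ / 2 by ring,
      Real.sin_add, Real.sin_sub]
    nlinarith
  have key : ∀ t : ℝ, Real.sin ((t + 1) * θ) = lam * Real.sin (t * θ) - Real.sin ((t - 1) * θ) := by
    intro t
    rw [add_mul, sub_mul, one_mul, Real.sin_add, Real.sin_sub, hlam]; ring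
  have hHo : ∀ n : ℕ, Hodd n
      = Real.sin (((n : ℝ) - 1 / 2) * θ) / Real.sin (((n : ℝ) + 1 / 2) * θ) := by
    intro n
    have e : ∀ t : ℝ, Real.cos ((t + 1 / 2) * θ) - Real.cos ((t - 1 / 2) * θ)
        = Real.sin (t * θ) * (-2 * Real.sin (θ / 2)) := by
      intro t
      rw [show (t - 1 / 2) * θ = t * θ - θ / 2 by ring,
        show (t + 1 / 2) * θ = t * θ + θ / 2 by ring, Real.cos_add, Real.cos_sub]
      ring
    have e1 := e (n - 1 / 2)
    have e2 := e (n + 1 / 2)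
    rw [sub_add_cancel, show (n : ℝ) - 1 / 2 - 1 / 2 = n - 1 by ring] at e1
    rw [add_sub_cancel_right, show (n : ℝ) + 1 / 2 + 1 / 2 = n + 1 by ring] at e2
    rw [hHodd, e1, e2, mul_div_mul_right _ _ (by linarith)]
  have cast_le : ∀ {m n : ℕ}, m ≤ n → (m : ℝ) ≤ n := fun h => by exact_mod_cast h
  have hHo_rec : ∀ n ≤ p - 1, Hodd (n + 1) * (lam - Hodd n) = 1 := by
    intro n hn
    have h1 : (n : ℝ) + 1 ≤ p := by exact_mod_cast (by omega : n + 1 ≤ p)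
    have n0 : (0 : ℝ) ≤ n := Nat.cast_nonneg n
    have s1 := hsin (n + 1 / 2) (by linarith) (by linarith)
    have s2 := hsin (n + 1 / 2 + 1) (by linarith) (by linarith)
    have k := key (n + 1 / 2)
    rw [show (n : ℝ) + 1 / 2 - 1 = n - 1 / 2 by ring] at k
    rw [hHo, hHo]
    push_cast
    rw [show (n : ℝ) + 1 - 1 / 2 = n + 1 / 2 by ring, show (n : ℝ) + 1 + 1 / 2 = n + 1 / 2 + 1 by ring]
    rw [div_mul_eq_mul_div, div_eq_one_iff_eq s2.ne', k]
    exact rosen_frac _ _ _ s1.ne'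
  have hHe_rec : ∀ n < p - 1, Heven (n + 1) * (lam - Heven n) = 1 := by
    intro n hn
    have h1 : (n : ℝ) + 1 ≤ p := by exact_mod_cast (by omega : n + 1 ≤ p)
    have n0 : (0 : ℝ) ≤ n := Nat.cast_nonneg n
    have s1 := hsin (n + 1) (by linarith) (by linarith)
    have s2 := hsin (n + 1 + 1) (by linarith) (by linarith)
    have k := key (n + 1)
    rw [add_sub_cancel_right] at k
    rw [hHeven, hHeven]
    push_cast
    rw [div_mul_eq_mul_div, div_eq_one_iff_eq s2.ne', k]
    exact rosen_frac _ _ _ s1.ne'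
  have hHo_bd : ∀ n : ℕ, 1 ≤ n → n ≤ p → 0 ≤ Hodd n ∧ Hodd n ≤ 1 := by
    intro n h1 h2
    have h1 : (1 : ℝ) ≤ n := by exact_mod_cast h1
    have h2 : (n : ℝ) ≤ p := by exact_mod_cast h2
    have s1 := hsin (n - 1 / 2) (by linarith) (by linarith)
    have s2 := hsin (n + 1 / 2) (by linarith) (by linarith)
    rw [hHo]
    exact ⟨by positivity, (div_le_one s2).2 (hsin_le n (by linarith) h2)⟩
  have hHe_bd : ∀ n : ℕ, 1 ≤ n → n ≤ p - 1 → 0 ≤ Heven n ∧ Heven n ≤ 1 := by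
    intro n h1 h2
    have h1 : (1 : ℝ) ≤ n := by exact_mod_cast h1
    have h2 : (n : ℝ) + 1 ≤ p := by exact_mod_cast (by omega : n + 1 ≤ p)
    have s1 := hsin n (by linarith) (by linarith)
    have s2 := hsin (n + 1) (by linarith) (by linarith)
    have s3 := hsin_le (n + 1 / 2) (by linarith) (by linarith)
    rw [add_sub_cancel_right, show (n : ℝ) + 1 / 2 + 1 / 2 = n + 1 by ring] at s3
    rw [hHeven]
    exact ⟨by positivity, (div_le_one s2).2 s3⟩
  have hpos : ∀ x y : ℝ, -1 < x → 0 ≤ y → y ≤ 1 → 0 < 1 + x * y := by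
    intro x y hx h0 h1
    nlinarith [mul_nonneg h0 (by linarith : 0 ≤ x + 1), mul_nonneg h0 (by linarith : 0 ≤ 1 - y)]
  have hHo0 : Hodd 0 = -1 := by
    rw [hHo]
    push_cast
    rw [show ((0 : ℝ) - 1 / 2) * θ = -(θ / 2) by ring, show ((0 : ℝ) + 1 / 2) * θ = θ / 2 by ring,
      Real.sin_neg, neg_div, div_self hs2.ne']
  have hHe0 : Heven 0 = 0 := by rw [hHeven]; simp
  have hHo1 : Hodd 1 * (lam + 1) = 1 := by
    have := hHo_rec 0 (by omega)
    rw [hHo0] at this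
    linarith
  have hbase : (1 + α * lam) * Hodd 1 = 1 + L 0 * Hodd 1 := by
    rw [hL0]; linear_combination hHo1
  have hAid := rosen_A (p - 1) lam L R Hodd Heven (fun n hn => ⟨(hL n hn).1.ne, (hL n hn).2⟩)
    (fun n hn => ⟨(hR n hn).1.ne, (hR n hn).2⟩) hHo_rec hHe_rec (by
      rw [hHo0, hHe0, hR0, ← hbase]; ring)
  have hHop : Hodd p = 1 := by
    rw [hHo, sub_mul, add_mul, hθ, Real.sin_pi_div_two_sub, add_comm (Real.pi / 2),
      Real.sin_add_pi_div_two, div_self]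
    exact (Real.cos_pos_of_mem_Ioo ⟨by linarith, by linarith⟩).ne'
  have hpp : p - 1 + 1 = p := by omega
  have hsum := rosen_sum (p - 1) (1 + α * lam) (by linarith) L R Hodd Heven
    (fun n => Real.sin (((n : ℝ) + 1 / 2) * θ))
    (by
      intro n hn
      have h2 : (n : ℝ) ≤ p := by exact_mod_cast (by omega : n ≤ p)
      have n0 : (0 : ℝ) ≤ n := Nat.cast_nonneg n
      exact hsin _ (by linarith) (by linarith))
    (by
      intro n hn h0
      rw [hHo, Nat.cast_sub (by omega)]
      push_cast
      rw [show (n : ℝ) - 1 + 1 / 2 = n - 1 / 2 by ring])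
    (fun n hn => hpos _ _ (hLgt n (by omega)) (hHo_bd (n + 1) (by omega) (by omega)).1
      (hHo_bd (n + 1) (by omega) (by omega)).2)
    (hpos _ _ (hLgt (p - 1) le_rfl) (hHo_bd (p - 1 + 1) (by omega) (by omega)).1
      (hHo_bd (p - 1 + 1) (by omega) (by omega)).2)
    (fun n h1 hn => hpos _ _ (hRgt n hn h1) (hHo_bd n h1 (by omega)).1 (hHo_bd n h1 (by omega)).2)
    (fun n h1 hn => hpos _ _ (hRgt n hn h1) (hHe_bd n h1 hn).1 (hHe_bd n h1 hn).2)
    (fun n h1 hn => hpos _ _ (hLgt n hn) (hHe_bd n h1 hn).1 (hHe_bd n h1 hn).2)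
    hAid hbase (p - 1) le_rfl
  -- rewrite the region
  have hΩ' : Ω = (⋃ n ∈ Finset.Icc 1 (p - 1), (Ico (L (n - 1)) (R n) ×ˢ Icc (0 : ℝ) (Hodd n)
      ∪ Ico (R n) (L n) ×ˢ Icc (0 : ℝ) (Heven n)))
      ∪ Ico (L (p - 1)) (α * lam) ×ˢ Icc (0 : ℝ) 1 := by
    rw [hΩ, eℓ (p - 1) le_rfl, er0, hHop]
    congr 1
    simp only [← Set.iUnion_union_distrib]
    apply Set.iUnion₂_congr
    intro n hn
    rw [Finset.mem_Icc] at hn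
    rw [eℓ (n - 1) (by omega), eℓ n hn.2, er n hn.2 hn.1]
  have hBn : ∀ n, 1 ≤ n → n ≤ p - 1 → L (n - 1) < R n := by
    intro n h1 hn
    have h2 := hB (n - 1) (by omega)
    rwa [show n - 1 + 1 = n by omega] at h2
  have rectO : ∀ n, 1 ≤ n → n ≤ p - 1 → _ := fun n h1 hn =>
    rosen_rect (L (n - 1)) (R n) (Hodd n) (hLgt (n - 1) (by omega)) (hBn n h1 hn).le
      (hHo_bd n h1 (by omega)).1 (hHo_bd n h1 (by omega)).2
  have rectE : ∀ n, 1 ≤ n → n ≤ p - 1 → _ := fun n h1 hn =>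
    rosen_rect (R n) (L n) (Heven n) (hRgt n hn h1) (hA n hn).le
      (hHe_bd n h1 hn).1 (hHe_bd n h1 hn).2
  have rectF := rosen_rect (L (p - 1)) (α * lam) 1 (hLgt (p - 1) le_rfl) hLN.le zero_le_one le_rfl
  have hmeas : ∀ a b H : ℝ, MeasurableSet (Ico a b ×ˢ Icc (0 : ℝ) H) := fun a b H =>
    measurableSet_Ico.prod measurableSet_Icc
  have hsub : ∀ n, 1 ≤ n → n ≤ p - 1 → ∀ z ∈ (Ico (L (n - 1)) (R n) ×ˢ Icc (0 : ℝ) (Hodd n)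
      ∪ Ico (R n) (L n) ×ˢ Icc (0 : ℝ) (Heven n)), L (n - 1) ≤ z.1 ∧ z.1 < L n := by
    intro n h1 hn z hz
    have a1 := hBn n h1 hn
    have a2 := hA n hn
    rcases hz with hz | hz
    · exact ⟨hz.1.1, hz.1.2.trans a2⟩
    · exact ⟨a1.le.trans hz.1.1, hz.1.2⟩
  have hintn : ∀ n ∈ Finset.Icc 1 (p - 1), IntegrableOn (fun z : ℝ × ℝ => 1 / (1 + z.1 * z.2) ^ 2)
      (Ico (L (n - 1)) (R n) ×ˢ Icc (0 : ℝ) (Hodd n)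
      ∪ Ico (R n) (L n) ×ˢ Icc (0 : ℝ) (Heven n)) := by
    intro n hn
    rw [Finset.mem_Icc] at hn
    exact (rectO n hn.1 hn.2).1.union (rectE n hn.1 hn.2).1
  rw [hΩ', setIntegral_union _ (hmeas _ _ _) _ rectF.1, rectF.2, integral_biUnion_finset,
    Finset.sum_congr rfl, hsum]
  · have hS0 : Real.sin (((0 : ℕ) + 1 / 2 : ℝ) * θ) = Real.sin (θ / 2) := by
      congr 1; push_cast; ring
    have hSp : Real.sin ((((p - 1 + 1 : ℕ) : ℝ) + 1 / 2) * θ) = Real.cos (θ / 2) := by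
      rw [hpp, add_mul, hθ, add_comm, Real.sin_add_pi_div_two]; congr 1; ring
    have hc2 : 0 < Real.cos (θ / 2) := Real.cos_pos_of_mem_Ioo ⟨by linarith, by linarith⟩
    have hLp := hLgt (p - 1) le_rfl
    have hLp' : 0 < 1 + L (p - 1) := by linarith
    rw [hS0, hSp, hpp, hHop, mul_one, mul_one, ← Real.log_mul (by positivity) (by positivity)]
    congr 1
    have e1 : Real.cos θ = 2 * Real.cos (θ / 2) ^ 2 - 1 := by
      rw [← Real.cos_two_mul]; congr 1; ring
    have e2 : Real.sin θ = 2 * Real.sin (θ / 2) * Real.cos (θ / 2) := by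
      rw [← Real.sin_two_mul]; congr 1; ring
    have h1α : 0 < 1 + α * lam := by linarith
    rw [e1, e2]
    field_simp
    ring
  · intro n hn
    rw [Finset.mem_Icc] at hn
    rw [setIntegral_union _ (hmeas _ _ _) (rectO n hn.1 hn.2).1 (rectE n hn.1 hn.2).1,
      (rectO n hn.1 hn.2).2, (rectE n hn.1 hn.2).2]
    rw [Set.disjoint_left]
    intro z hz hz'
    exact absurd hz.1.2 (not_lt.2 hz'.1.1)
  · intro n _
    exact (hmeas _ _ _).union (hmeas _ _ _)
  · have aux : ∀ m n : ℕ, m ∈ Finset.Icc 1 (p - 1) → n ∈ Finset.Icc 1 (p - 1) → m < n →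
        Disjoint (Ico (L (m - 1)) (R m) ×ˢ Icc (0 : ℝ) (Hodd m)
          ∪ Ico (R m) (L m) ×ˢ Icc (0 : ℝ) (Heven m))
          (Ico (L (n - 1)) (R n) ×ˢ Icc (0 : ℝ) (Hodd n)
          ∪ Ico (R n) (L n) ×ˢ Icc (0 : ℝ) (Heven n)) := by
      intro m n hmm hnn hmn
      rw [Finset.mem_Icc] at hmm hnn
      rw [Set.disjoint_left]
      intro z hz hz'
      have b1 := (hsub m hmm.1 hmm.2 z hz).2
      have b2 := (hsub n hnn.1 hnn.2 z hz').1
      have := hm m (n - 1) (by omega) (by omega)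
      linarith
    intro m hmm n hnn hne
    rcases lt_or_gt_of_ne hne with h | h
    · exact aux m n hmm hnn h
    · exact (aux n m hnn hmm h).symm
  · exact hintn
  · rw [Set.disjoint_left]
    intro z hz hz'
    simp only [Set.mem_iUnion] at hz
    obtain ⟨n, hn, hz⟩ := hz
    rw [Finset.mem_Icc] at hn
    have b1 := (hsub n hn.1 hn.2 z hz).2
    have := hm n (p - 1) hn.2 le_rfl
    have := hz'.1.1
    linarith
  · exact (integrableOn_finset_iUnion).2 hintn
end
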